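/- arXiv:1104.4929 — 7 statements merged into one kernel-verified Lean document; each statement's English description precedes it below -/
import Mathlib

section
/- There exist a continuously differentiable function φ : ℝ → ℝ which is 1-periodic and satisfies ∫₀¹ φ(θ) dθ = 0, and a strictly increasing homeomorphism h̃ : ℝ → ℝ with h̃(x+1) = h̃(x)+1 for all x (the lift of an orientation-preserving circle homeomorphism h), such that: (i) h̃(x) + h̃⁻¹(x) = 2x + φ(x) for all x ∈ ℝ; (ii) the rotation (translation) number of h̃ is irrational, so that h has no periodic points; (iii) h is not minimal (it is a Denjoy counter-example: it is not topologically conjugate to the rotation by its rotation number); (iv) there is a point x₀ ∈ ℝ at which ψ := h̃ − id has distinct finite left and right derivatives; in particular ψ is 1-periodic, Lipschitz-graph-defining but not differentiable at x₀, while φ is C¹. -/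
open Filter Topology Set

/-!
Blow up the orbit of `0` under the rotation by an irrational `ρ` into gaps, all parametrized by a
common variable `u`: the lift `h` sends the point `u` of gap `n` to the point `u` of gap `n + 1`. If
the `n`-th parametrization has density `g n` in `u`, then on gap `n` the derivative of `h` is
`g (n + 1) / g n`, while that of `φ = h + h⁻¹ - 2 id` is `(g (n + 1) + g (n - 1) - 2 g n) / g n`.

The two ramps `n ↦ 1 + max n 0` and `n ↦ 1 + max (-n) 0` have the same relative second
differences, `1` at `n = 0` and `0` elsewhere, but different ratios of the terms at `1` and `0`. So
let `g n` jump from the second ramp to the first at the middle of the gaps: `φ'` does not see the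
jump, but `h'` jumps from `1` to `2` at the middle of gap `0`. Away from the middle, the ramps are
joined through slowly varying sequences that make the lengths of the gaps summable; their relative
second differences are `O(n⁻²)`, so that `φ'` is the sum of a uniformly convergent series of
continuous functions. The construction is odd under `(n, u) ↦ (-n, -u)`, hence `φ` has zero mean.
-/

lemma intervalIntegral_eq_zero_of_odd_of_periodic {f : ℝ → ℝ} {T : ℝ} (hodd : ∀ x, f (-x) = -f x)
    (hper : Function.Periodic f T) : ∫ x in (0 : ℝ)..T, f x = 0 := by
  have hshift := hper.intervalIntegral_add_eq 0 (-T)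
  have hneg := intervalIntegral.integral_comp_neg (a := 0) (b := T) f
  simp only [zero_add, neg_add_cancel] at hshift
  simp only [hodd, intervalIntegral.integral_neg, neg_zero, ← hshift] at hneg
  linarith

section DegreeOne

variable {h k : ℝ → ℝ} {ρ : ℝ}

lemma periodic_sub_of_map_add_one (hk1 : ∀ t, k (t + 1) = k t + 1) :
    Function.Periodic (fun t => k t - t) 1 := fun t => by
  simp only [hk1, add_sub_add_right_eq_sub]

lemma map_add_intCast_of_map_add_one (hk1 : ∀ t, k (t + 1) = k t + 1) (t : ℝ) (m : ℤ) :
    k (t + m) = k t + m := by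
  have h := (periodic_sub_of_map_add_one hk1).int_mul m t
  simp only [mul_one] at h
  linarith

lemma uniformContinuous_of_map_add_one (hk : Continuous k) (hk1 : ∀ t, k (t + 1) = k t + 1) :
    UniformContinuous k := by
  have hlift : Continuous ((periodic_sub_of_map_add_one hk1).lift : UnitAddCircle → ℝ) :=
    continuous_quot_lift _ (hk.sub continuous_id)
  have h := (CompactSpace.uniformContinuous_of_continuous hlift).comp
    (uniformContinuous_of_continuousAt_zero (QuotientAddGroup.mk' (AddSubgroup.zmultiples (1 : ℝ)))
      (AddCircle.continuous_mk' (1 : ℝ)).continuousAt)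
  simpa [Function.comp_def] using h.add uniformContinuous_id

lemma map_iterate_of_map_eq_add (hkh : ∀ t, k (h t) = k t + ρ) (n : ℕ) (t : ℝ) :
    k (h^[n] t) = k t + n * ρ := by
  have hsemi : Function.Semiconj k h (· + ρ) := hkh
  rw [(hsemi.iterate_right n).eq, add_right_iterate, nsmul_eq_mul]

lemma tendsto_iterate_sub_div_of_map_eq_add (hh : Monotone h) (hh1 : ∀ t, h (t + 1) = h t + 1)
    (hk : Monotone k) (hk1 : ∀ t, k (t + 1) = k t + 1) (hkh : ∀ t, k (h t) = k t + ρ) (t : ℝ) :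
    Tendsto (fun n : ℕ => (h^[n] t - t) / n) atTop (𝓝 ρ) := by
  let f : CircleDeg1Lift := ⟨⟨h, hh⟩, hh1⟩
  have hsemi : Function.Semiconj (⟨⟨k, hk⟩, hk1⟩ : CircleDeg1Lift) f
      (CircleDeg1Lift.translate (Multiplicative.ofAdd ρ)) := fun t => by
    rw [CircleDeg1Lift.translate_apply, add_comm]
    exact hkh t
  have hf : f.translationNumber = ρ := by
    rw [CircleDeg1Lift.translationNumber_eq_of_semiconj hsemi,
      CircleDeg1Lift.translationNumber_translate]
  have hlim := f.tendsto_translationNumber t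
  rw [hf] at hlim
  exact hlim.congr fun n => by rw [CircleDeg1Lift.coe_pow]; rfl

lemma iterate_ne_add_intCast_of_map_eq_add (hρ : Irrational ρ) (hk1 : ∀ t, k (t + 1) = k t + 1)
    (hkh : ∀ t, k (h t) = k t + ρ) (t : ℝ) {n : ℕ} (hn : 0 < n) (m : ℤ) :
    h^[n] t ≠ t + m := fun hper => by
  have hnm := map_iterate_of_map_eq_add hkh n t
  rw [hper, map_add_intCast_of_map_add_one hk1, add_right_inj] at hnm
  exact (hρ.natCast_mul hn.ne').ne_int m hnm.symm

lemma eq_of_tendsto_dist_iterate (hk : UniformContinuous k) (hkh : ∀ t, k (h t) = k t + ρ)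
    {x y : ℝ} (hxy : Tendsto (fun n => dist (h^[n] x) (h^[n] y)) atTop (𝓝 0)) : k x = k y := by
  have hunif : Tendsto (fun n => (h^[n] x, h^[n] y)) atTop (uniformity ℝ) :=
    tendsto_uniformity_iff_dist_tendsto_zero.2 hxy
  have hlim : Tendsto (fun n => dist (k (h^[n] x)) (k (h^[n] y))) atTop (𝓝 0) :=
    tendsto_uniformity_iff_dist_tendsto_zero.1 (Filter.Tendsto.comp hk hunif)
  simp only [map_iterate_of_map_eq_add hkh, dist_add_right] at hlim
  exact dist_eq_zero.1 (tendsto_nhds_unique tendsto_const_nhds hlim)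

end DegreeOne

section SlowlyVarying

/-- The second difference of a sequence on `ℤ`. Applied to the positions of an orbit of `h` it gives
the values of `h + h⁻¹ - 2 id`. -/
def secondDiff (x : ℤ → ℝ) (n : ℤ) : ℝ := x (n + 1) + x (n - 1) - 2 * x n

/-- Positive sequences on `ℤ` whose relative first and second differences at `n` are at most
`C / (1 + |n|)` and its square; the exponents make the relative second differences summable. -/
structure SlowlyVarying (C : ℝ) (x : ℤ → ℝ) : Prop where
  pos (n : ℤ) : 0 < x n
  abs_sub_le {m n : ℤ} (h : |m - n| = 1) : |x m - x n| ≤ C / (1 + |(n : ℝ)|) * x n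
  abs_secondDiff_le (n : ℤ) : |secondDiff x n| ≤ (C / (1 + |(n : ℝ)|)) ^ 2 * x n

lemma abs_mul_sub_mul_le {p q a b ε δ : ℝ} (hp : |p - a| ≤ ε * a) (hq : |q - b| ≤ δ * b)
    (ha : 0 < a) (hb : 0 < b) : |p * q - a * b| ≤ (ε + δ + ε * δ) * (a * b) := by
  calc |p * q - a * b| = |(p - a) * b + a * (q - b) + (p - a) * (q - b)| := by congr 1; ring
    _ ≤ |p - a| * b + a * |q - b| + |p - a| * |q - b| := by
      grw [abs_add_three]
      rw [abs_mul, abs_mul, abs_mul, abs_of_pos ha, abs_of_pos hb]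
    _ ≤ (ε * a) * b + a * (δ * b) + (ε * a) * (δ * b) := by
      gcongr
      exact (abs_nonneg _).trans hp
    _ = (ε + δ + ε * δ) * (a * b) := by ring

lemma abs_secondDiff_mul_le {p p' q q' a b ε δ : ℝ} (hp : |p - a| ≤ ε * a)
    (hp' : |p' - a| ≤ ε * a) (hq : |q - b| ≤ δ * b) (hq' : |q' - b| ≤ δ * b)
    (hpp : |p + p' - 2 * a| ≤ ε ^ 2 * a) (hqq : |q + q' - 2 * b| ≤ δ ^ 2 * b)
    (ha : 0 < a) (hb : 0 < b) :
    |p * q + p' * q' - 2 * (a * b)| ≤ (ε + δ) ^ 2 * (a * b) := by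
  have hεa : 0 ≤ ε * a := (abs_nonneg _).trans hp
  calc |p * q + p' * q' - 2 * (a * b)|
      = |((p + p' - 2 * a) * b + a * (q + q' - 2 * b)) +
          ((p - a) * (q - b) + (p' - a) * (q' - b))| := by congr 1; ring
    _ ≤ (|p + p' - 2 * a| * b + a * |q + q' - 2 * b|) +
          (|p - a| * |q - b| + |p' - a| * |q' - b|) := by
      grw [abs_add_le, abs_add_le, abs_add_le ((p - a) * (q - b))]
      simp only [abs_mul, abs_of_pos ha, abs_of_pos hb, le_refl]
    _ ≤ ((ε ^ 2 * a) * b + a * (δ ^ 2 * b)) + ((ε * a) * (δ * b) + (ε * a) * (δ * b)) := by gcongr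
    _ = (ε + δ) ^ 2 * (a * b) := by ring

lemma abs_inv_sub_inv_le {p a ε K : ℝ} (hp : 0 < p) (ha : 0 < a) (h : |p - a| ≤ ε * a)
    (hK : a ≤ K * p) : |p⁻¹ - a⁻¹| ≤ K * ε * a⁻¹ := by
  have hε : 0 ≤ ε := nonneg_of_mul_nonneg_left ((abs_nonneg _).trans h) ha
  rw [inv_sub_inv hp.ne' ha.ne', abs_div, abs_of_pos (mul_pos hp ha), div_le_iff₀ (by positivity),
    abs_sub_comm]
  calc |p - a| ≤ ε * a := h
    _ ≤ ε * (K * p) := by gcongr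
    _ = K * ε * a⁻¹ * (p * a) := by field_simp

lemma abs_secondDiff_inv_le {p q a ε K : ℝ} (hp : 0 < p) (hq : 0 < q) (ha : 0 < a)
    (hpa : |p - a| ≤ ε * a) (hqa : |q - a| ≤ ε * a) (hpq : |p + q - 2 * a| ≤ ε ^ 2 * a)
    (hKp : a ≤ K * p) (hKq : a ≤ K * q) :
    |p⁻¹ + q⁻¹ - 2 * a⁻¹| ≤ (2 * K * ε) ^ 2 * a⁻¹ := by
  have hεa : 0 ≤ ε * a := (abs_nonneg _).trans hpa
  have heq : p⁻¹ + q⁻¹ - 2 * a⁻¹ =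
      -((a * (p + q - 2 * a) + 2 * ((p - a) * (q - a))) / (a * (p * q))) := by field_simp; ring
  rw [heq, abs_neg, abs_div, abs_of_pos (by positivity : 0 < a * (p * q)),
    div_le_iff₀ (by positivity)]
  calc |a * (p + q - 2 * a) + 2 * ((p - a) * (q - a))|
      ≤ a * |p + q - 2 * a| + 2 * (|p - a| * |q - a|) := by
        grw [abs_add_le]
        simp only [abs_mul, abs_of_pos ha, abs_two, le_refl]
    _ ≤ a * (ε ^ 2 * a) + 2 * ((ε * a) * (ε * a)) := by gcongr
    _ ≤ 4 * ε ^ 2 * (a * a) := by nlinarith [mul_nonneg hεa hεa]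
    _ ≤ 4 * ε ^ 2 * ((K * p) * (K * q)) := by
        gcongr
        exact ha.le.trans hKp
    _ = (2 * K * ε) ^ 2 * a⁻¹ * (a * (p * q)) := by field_simp; ring

namespace SlowlyVarying

variable {C D : ℝ} {x y : ℤ → ℝ}

lemma nonneg (hx : SlowlyVarying C x) : 0 ≤ C := by
  have h : |x 1 - x 0| ≤ C / (1 + |((0 : ℤ) : ℝ)|) * x 0 := hx.abs_sub_le rfl
  simp only [Int.cast_zero, abs_zero, add_zero, div_one] at h
  exact nonneg_of_mul_nonneg_left ((abs_nonneg _).trans h) (hx.pos 0)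

lemma mul (hx : SlowlyVarying C x) (hy : SlowlyVarying D y) :
    SlowlyVarying (C + D + C * D) (fun n => x n * y n) where
  pos n := mul_pos (hx.pos n) (hy.pos n)
  abs_sub_le {m n} h := by
    have hxy := mul_pos (hx.pos n) (hy.pos n)
    have hm : 1 ≤ 1 + |(n : ℝ)| := le_add_of_nonneg_right (abs_nonneg _)
    have hC := hx.nonneg
    have hD := hy.nonneg
    refine (abs_mul_sub_mul_le (hx.abs_sub_le h) (hy.abs_sub_le h) (hx.pos n) (hy.pos n)).trans ?_
    rw [add_div, add_div, div_mul_div_comm]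
    gcongr
    nlinarith
  abs_secondDiff_le n := by
    have hxy := mul_pos (hx.pos n) (hy.pos n)
    have hC := hx.nonneg
    have hD := hy.nonneg
    refine (abs_secondDiff_mul_le (hx.abs_sub_le (by simp)) (hx.abs_sub_le (by simp))
      (hy.abs_sub_le (by simp)) (hy.abs_sub_le (by simp)) (hx.abs_secondDiff_le n)
      (hy.abs_secondDiff_le n) (hx.pos n) (hy.pos n)).trans ?_
    have hCD : C + D ≤ C + D + C * D := le_add_of_nonneg_right (by positivity)
    rw [← add_div]
    gcongr

lemma sq (hx : SlowlyVarying C x) : SlowlyVarying (C + C + C * C) (fun n => x n ^ 2) := by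
  simpa only [pow_two] using hx.mul hx

lemma abs_secondDiff_div_le (hx : SlowlyVarying C x) (n : ℤ) :
    |secondDiff x n / x n| ≤ (C / (1 + |(n : ℝ)|)) ^ 2 := by
  rw [abs_div, abs_of_pos (hx.pos n), div_le_iff₀ (hx.pos n)]
  exact hx.abs_secondDiff_le n

lemma le_mul_of_abs_sub_eq_one (hx : SlowlyVarying C x) {m n : ℤ} (h : |m - n| = 1) :
    x n ≤ (1 + C) * x m := by
  have hle : C / (1 + |(m : ℝ)|) * x m ≤ C * x m := by
    have := hx.pos m
    gcongr
    exact div_le_self hx.nonneg (le_add_of_nonneg_right (abs_nonneg _))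
  linarith [le_abs_self (x n - x m), hx.abs_sub_le ((abs_sub_comm n m).trans h)]

lemma inv (hx : SlowlyVarying C x) : SlowlyVarying (2 * (1 + C) * C) (fun n => (x n)⁻¹) where
  pos n := inv_pos.2 (hx.pos n)
  abs_sub_le {m n} h := by
    have hn := hx.pos n
    have hC := hx.nonneg
    refine (abs_inv_sub_inv_le (hx.pos m) hn (hx.abs_sub_le h)
      (hx.le_mul_of_abs_sub_eq_one h)).trans ?_
    rw [← mul_div_assoc]
    gcongr
    linarith
  abs_secondDiff_le n := by
    rw [mul_div_assoc]
    exact abs_secondDiff_inv_le (hx.pos _) (hx.pos _) (hx.pos n) (hx.abs_sub_le (by simp))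
      (hx.abs_sub_le (by simp)) (hx.abs_secondDiff_le n)
      (hx.le_mul_of_abs_sub_eq_one (by simp)) (hx.le_mul_of_abs_sub_eq_one (by simp))

lemma one_add_const_mul (hx : SlowlyVarying C x) {b : ℝ} (hb : 0 ≤ b) :
    SlowlyVarying C (fun n => 1 + b * x n) where
  pos n := add_pos_of_pos_of_nonneg one_pos (mul_nonneg hb (hx.pos n).le)
  abs_sub_le {m n} h := by
    have hC := hx.nonneg
    calc |1 + b * x m - (1 + b * x n)| = b * |x m - x n| := by
          rw [add_sub_add_left_eq_sub, ← mul_sub, abs_mul, abs_of_nonneg hb]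
      _ ≤ b * (C / (1 + |(n : ℝ)|) * x n) := by grw [hx.abs_sub_le h]
      _ = C / (1 + |(n : ℝ)|) * (b * x n) := by ring
      _ ≤ C / (1 + |(n : ℝ)|) * (1 + b * x n) := by gcongr; linarith
  abs_secondDiff_le n := by
    calc |secondDiff (fun n => 1 + b * x n) n| = b * |secondDiff x n| := by
          simp only [secondDiff]
          rw [← abs_of_nonneg hb, ← abs_mul, abs_of_nonneg hb]
          congr 1
          ring
      _ ≤ b * ((C / (1 + |(n : ℝ)|)) ^ 2 * x n) := by grw [hx.abs_secondDiff_le n]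
      _ = (C / (1 + |(n : ℝ)|)) ^ 2 * (b * x n) := by ring
      _ ≤ (C / (1 + |(n : ℝ)|)) ^ 2 * (1 + b * x n) := by gcongr; linarith

lemma comp_neg (hx : SlowlyVarying C x) : SlowlyVarying C (fun n => x (-n)) where
  pos n := hx.pos (-n)
  abs_sub_le {m n} h := by
    have h' : |-m - -n| = 1 := by rwa [← neg_sub', abs_neg]
    simpa using hx.abs_sub_le h'
  abs_secondDiff_le n := by
    have h := hx.abs_secondDiff_le (-n)
    rw [Int.cast_neg, abs_neg, secondDiff, add_comm (x _)] at h
    rwa [secondDiff, neg_add', neg_sub', sub_neg_eq_add]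

end SlowlyVarying

lemma slowlyVarying_one_add_sq : SlowlyVarying 4 (fun n => 1 + (n : ℝ) ^ 2) where
  pos n := by positivity
  abs_sub_le {m n} h := by
    have hmn : |(m : ℝ) - n| = 1 := by exact_mod_cast h
    have hsum : |(m : ℝ) + n| ≤ 1 + 2 * |(n : ℝ)| := by
      calc |(m : ℝ) + n| = |(m - n : ℝ) + 2 * n| := by congr 1; ring
        _ ≤ 1 + 2 * |(n : ℝ)| := by grw [abs_add_le, hmn, abs_mul, abs_two]
    rw [add_sub_add_left_eq_sub, sq_sub_sq, abs_mul, hmn, mul_one, div_mul_eq_mul_div,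
      le_div_iff₀ (by positivity), ← sq_abs (n : ℝ)]
    nlinarith [sq_nonneg (|(n : ℝ)| - 1), abs_nonneg (n : ℝ)]
  abs_secondDiff_le n := by
    have h2 : secondDiff (fun n => 1 + (n : ℝ) ^ 2) n = 2 := by
      rw [secondDiff]
      push_cast
      ring
    rw [h2, abs_two, div_pow, div_mul_eq_mul_div, le_div_iff₀ (by positivity), ← sq_abs (n : ℝ)]
    nlinarith [sq_nonneg (|(n : ℝ)| - 1)]

lemma slowlyVarying_one_add_ramp_of_nonneg {c : ℝ} (hc : 0 ≤ c) (hc1 : c ≤ 1) :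
    SlowlyVarying 1 (fun n => 1 + max (c * n) 0) where
  pos n := by positivity
  abs_sub_le {m n} h := by
    rw [add_sub_add_left_eq_sub]
    rcases lt_or_ge n 0 with hn | hn
    · have hm : (m : ℝ) ≤ 0 := by exact_mod_cast (by grind : m ≤ 0)
      have hn' : (n : ℝ) ≤ 0 := by exact_mod_cast hn.le
      rw [max_eq_right (mul_nonpos_of_nonneg_of_nonpos hc hm),
        max_eq_right (mul_nonpos_of_nonneg_of_nonpos hc hn'), sub_self, abs_zero]
      positivity
    · have hmn : |(m : ℝ) - n| = 1 := by exact_mod_cast h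
      have hn' : (0 : ℝ) ≤ n := by exact_mod_cast hn
      grw [abs_max_sub_max_le_abs]
      rw [← mul_sub, abs_mul, hmn, abs_of_nonneg hc, abs_of_nonneg hn',
        max_eq_left (mul_nonneg hc hn'), div_mul_eq_mul_div, le_div_iff₀ (by positivity)]
      linarith
  abs_secondDiff_le n := by
    rw [secondDiff]
    push_cast
    rcases lt_trichotomy n 0 with hn | rfl | hn
    · have hn' : (n : ℝ) + 1 ≤ 0 := by exact_mod_cast hn
      rw [max_eq_right (by nlinarith), max_eq_right (by nlinarith), max_eq_right (by nlinarith)]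
      norm_num
      positivity
    · simp only [Int.cast_zero, zero_add, zero_sub, mul_one, mul_neg, mul_zero, max_self,
        max_eq_left hc, max_eq_right (neg_nonpos.2 hc), abs_zero, add_zero, div_one, one_pow]
      rw [abs_le]
      constructor <;> linarith
    · have hn' : (1 : ℝ) ≤ n := by exact_mod_cast hn
      rw [max_eq_left (by nlinarith), max_eq_left (by nlinarith), max_eq_left (by nlinarith)]
      ring_nf
      rw [abs_zero]
      positivity

lemma slowlyVarying_one_add_ramp {c : ℝ} (hc : |c| ≤ 1) :
    SlowlyVarying 1 (fun n => 1 + max (c * n) 0) := by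
  rcases le_total 0 c with h | h
  · exact slowlyVarying_one_add_ramp_of_nonneg h ((le_abs_self c).trans hc)
  · simpa using (slowlyVarying_one_add_ramp_of_nonneg (neg_nonneg.2 h)
      ((neg_le_abs c).trans hc)).comp_neg

end SlowlyVarying

section HasRelDerivWithinAt

/-- `f` has derivative `r` with respect to `g` at `u` within `s`: the increment of `f` is `r` times
that of `g`, up to a little-o of the latter. The function `g` need not be differentiable. -/
def HasRelDerivWithinAt (f g : ℝ → ℝ) (r : ℝ) (s : Set ℝ) (u : ℝ) : Prop :=
  (fun v => f v - f u - r * (g v - g u)) =o[𝓝[s] u] fun v => g v - g u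

namespace HasRelDerivWithinAt

variable {f g : ℝ → ℝ} {r u : ℝ} {s : Set ℝ}

lemma comp {τ : ℝ → ℝ} {t : Set ℝ} {x : ℝ} (h : HasRelDerivWithinAt f g r s (τ x))
    (hτ : Tendsto τ (𝓝[t] x) (𝓝[s] (τ x))) : HasRelDerivWithinAt (f ∘ τ) (g ∘ τ) r t x :=
  h.comp_tendsto hτ

lemma const_mul {d : ℝ} (hd : d ≠ 0) (h : HasRelDerivWithinAt f g r s u) :
    HasRelDerivWithinAt (fun v => d * f v) (fun v => d * g v) r s u := by
  have h' := (Asymptotics.isLittleO_const_mul_left_iff' (IsUnit.mk0 d hd)).2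
    ((Asymptotics.isLittleO_const_mul_right_iff' (IsUnit.mk0 d hd)).2 h)
  refine (h'.congr_left fun v => ?_).congr_right fun v => mul_sub d _ _
  ring

lemma hasDerivWithinAt_of_eventually_sub_eq {F : ℝ → ℝ} (h : HasRelDerivWithinAt f g r s u)
    (hF : ∀ᶠ v in 𝓝[s] u, F v - F u = f v - f u) (hg : ∀ᶠ v in 𝓝[s] u, v - u = g v - g u) :
    HasDerivWithinAt F r s u := by
  refine hasDerivWithinAt_iff_isLittleO.2 (h.congr' ?_ (hg.mono fun _ => Eq.symm))
  filter_upwards [hF, hg] with v hFv hgv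
  rw [hFv, hgv, smul_eq_mul, mul_comm]

lemma hasDerivWithinAt_zero (h : HasRelDerivWithinAt f g 0 s u)
    (hg : (fun v => g v - g u) =O[𝓝[s] u] fun v => v - u) : HasDerivWithinAt f 0 s u := by
  simpa only [HasRelDerivWithinAt, zero_mul, sub_zero, hasDerivWithinAt_iff_isLittleO,
    smul_zero] using h.trans_isBigO hg

end HasRelDerivWithinAt

lemma hasRelDerivWithinAt_integral {a b : ℝ → ℝ} {r u : ℝ} {s : Set ℝ} (c : ℝ)
    (ha : ∀ x y, IntervalIntegrable a MeasureTheory.volume x y)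
    (hb : ∀ x y, IntervalIntegrable b MeasureTheory.volume x y) (ha0 : ∀ t, 0 < a t)
    (hs : ∀ v ∈ s, uIoc u v ⊆ s) (hab : Tendsto (fun t => b t / a t) (𝓝[s] u) (𝓝 r)) :
    HasRelDerivWithinAt (fun v => ∫ t in c..v, b t) (fun v => ∫ t in c..v, a t) r s u := by
  refine Asymptotics.isLittleO_iff.2 fun ε hε => ?_
  obtain ⟨δ, hδ, hball⟩ := Metric.mem_nhdsWithin_iff.1 (Metric.tendsto_nhds.1 hab ε hε)
  filter_upwards [inter_mem_nhdsWithin s (Metric.ball_mem_nhds u hδ)] with v hv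
  have hbound : ∀ t ∈ uIoc u v, ‖b t - r * a t‖ ≤ ε * a t := fun t ht => by
    have htv : dist t u < δ :=
      (abs_sub_left_of_mem_uIcc (uIoc_subset_uIcc ht)).trans_lt hv.2
    have htr : |b t / a t - r| < ε := hball ⟨htv, hs v hv.1 ht⟩
    rw [Real.norm_eq_abs, ← abs_of_pos (ha0 t), ← div_le_iff₀ (abs_pos.2 (ha0 t).ne'), ← abs_div,
      abs_of_pos (ha0 t), sub_div, mul_div_cancel_right₀ _ (ha0 t).ne']
    exact htr.le
  have hsub (x : ℝ → ℝ) (hx : ∀ y z, IntervalIntegrable x MeasureTheory.volume y z) :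
      (∫ t in c..v, x t) - ∫ t in c..u, x t = ∫ t in u..v, x t :=
    intervalIntegral.integral_interval_sub_left (hx c v) (hx c u)
  rw [hsub b hb, hsub a ha, ← intervalIntegral.integral_const_mul,
    ← intervalIntegral.integral_sub (hb u v) ((ha u v).const_mul r)]
  calc ‖∫ t in u..v, (b t - r * a t)‖ ≤ |∫ t in u..v, ε * a t| :=
        intervalIntegral.norm_integral_le_abs_of_norm_le
          ((MeasureTheory.ae_restrict_iff' measurableSet_uIoc).2 (.of_forall hbound))
          ((ha u v).const_mul ε)
    _ = ε * ‖∫ t in u..v, a t‖ := by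
      rw [intervalIntegral.integral_const_mul, abs_mul, abs_of_pos hε, Real.norm_eq_abs]

end HasRelDerivWithinAt

section BlowUp

/-- The multivalued map `z ↦ ⌊z⌋ + 1/2` with its jump at each integer filled in: off the integers
`blowUp z s` is `⌊z⌋ + 1/2`, and at an integer `k` the fibre parameter `s ∈ [-1/2, 1/2]`, truncated
to that interval, is used to sweep the jump from `k - 1/2` to `k + 1/2`. -/
noncomputable def blowUp (z s : ℝ) : ℝ := max (⌈z⌉ - 1 / 2) (min (⌊z⌋ + 1 / 2) (z + s))

lemma ceil_sub_half_le_blowUp (z s : ℝ) : ⌈z⌉ - 1 / 2 ≤ blowUp z s := le_max_left _ _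

lemma blowUp_le_floor_add_half (z s : ℝ) : blowUp z s ≤ ⌊z⌋ + 1 / 2 := by
  have h : (⌈z⌉ : ℝ) ≤ ⌊z⌋ + 1 := by exact_mod_cast Int.ceil_le_floor_add_one z
  exact max_le (by linarith) (min_le_left _ _)

lemma blowUp_add_half (z : ℝ) : blowUp z (1 / 2) = ⌊z⌋ + 1 / 2 := by
  refine (blowUp_le_floor_add_half z _).antisymm (le_max_of_le_right (le_min le_rfl ?_))
  gcongr
  exact Int.floor_le z

lemma eventually_blowUp_add_half_eq (z : ℝ) :
    ∀ᶠ w in 𝓝[≥] z, blowUp w (1 / 2) = blowUp z (1 / 2) := by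
  filter_upwards [tendsto_pure.1 (tendsto_floor_right_pure_floor z)] with w hw
  rw [blowUp_add_half, blowUp_add_half, hw]

lemma blowUp_intCast (k : ℤ) {s : ℝ} (hs : |s| ≤ 1 / 2) : blowUp k s = k + s := by
  rw [abs_le] at hs
  rw [blowUp, Int.ceil_intCast, Int.floor_intCast, min_eq_right (by linarith),
    max_eq_right (by linarith)]

lemma blowUp_of_notMem_range {z : ℝ} (hz : z ∉ range ((↑) : ℤ → ℝ)) (s : ℝ) :
    blowUp z s = ⌊z⌋ + 1 / 2 := by
  have h : (⌈z⌉ : ℝ) = ⌊z⌋ + 1 := by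
    exact_mod_cast (Int.ceil_eq_floor_add_one_iff_notMem z).2 hz
  refine (blowUp_le_floor_add_half z s).antisymm (le_trans ?_ (ceil_sub_half_le_blowUp z s))
  rw [h]
  linarith

lemma eq_intCast_of_blowUp_mem_Ioo {z s : ℝ} {k : ℤ}
    (h : blowUp z s ∈ Ioo ((k : ℝ) - 1 / 2) (k + 1 / 2)) : z = k := by
  have h1 : (⌈z⌉ : ℝ) < k + 1 := by linarith [ceil_sub_half_le_blowUp z s, h.2]
  have h2 : (k : ℝ) - 1 < ⌊z⌋ := by linarith [blowUp_le_floor_add_half z s, h.1]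
  have h3 : ⌈z⌉ < k + 1 := by exact_mod_cast h1
  have h4 : k - 1 < ⌊z⌋ := by exact_mod_cast h2
  exact (Int.ceil_le.1 (Int.lt_add_one_iff.1 h3)).antisymm
    (Int.le_floor.1 (Int.sub_one_lt_iff.1 h4))

lemma blowUp_mono_right (z : ℝ) : Monotone (blowUp z) := fun s s' h => by
  unfold blowUp
  gcongr

lemma blowUp_le_blowUp_of_lt {z z' : ℝ} (h : z < z') (s s' : ℝ) : blowUp z s ≤ blowUp z' s' := by
  have hz : (⌊z⌋ : ℝ) + 1 ≤ ⌈z'⌉ := by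
    exact_mod_cast Int.lt_ceil.2 ((Int.floor_le z).trans_lt h)
  linarith [blowUp_le_floor_add_half z s, ceil_sub_half_le_blowUp z' s']

lemma blowUp_neg_neg (z s : ℝ) : blowUp (-z) (-s) = -blowUp z s := by
  have h : (⌈z⌉ : ℝ) ≤ ⌊z⌋ + 1 := by exact_mod_cast Int.ceil_le_floor_add_one z
  simp only [blowUp, Int.ceil_neg, Int.floor_neg, Int.cast_neg]
  grind

lemma blowUp_add_one (z s : ℝ) : blowUp (z + 1) s = blowUp z s + 1 := by
  simp only [blowUp, Int.ceil_add_one, Int.floor_add_one, Int.cast_add, Int.cast_one]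
  grind

lemma abs_blowUp_le (z s : ℝ) : |blowUp z s| ≤ |z| + 1 / 2 := by
  rw [abs_le]
  constructor
  · linarith [Int.le_ceil z, neg_abs_le z, ceil_sub_half_le_blowUp z s]
  · linarith [Int.floor_le z, le_abs_self z, blowUp_le_floor_add_half z s]

lemma continuous_blowUp_right (z : ℝ) : Continuous (blowUp z) := by
  unfold blowUp
  fun_prop

lemma exists_eq_intCast_add_half_or_exists_mem_Ioo (u : ℝ) :
    (∃ k : ℤ, u = k + 1 / 2) ∨ ∃ m : ℤ, u ∈ Ioo ((m : ℝ) - 1 / 2) (m + 1 / 2) := by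
  have hlt := Int.lt_floor_add_one (u + 1 / 2)
  rcases (Int.floor_le (u + 1 / 2)).eq_or_lt with h | h
  · refine .inl ⟨⌊u + 1 / 2⌋ - 1, ?_⟩
    push_cast
    linarith
  · exact .inr ⟨⌊u + 1 / 2⌋, by linarith, by linarith⟩

end BlowUp

/-- The data of a symmetric Denjoy construction blowing up the orbit of `0` under the rotation by
`rho`. The `n`-th orbit point is replaced by a gap of length `G n 1`, and `G n` restricted to
`[k - 1/2, k + 1/2]` parametrizes its lift to the real line at `n * rho + k`, where the parameter
is common to all gaps: the dynamics sends `G n u` to `G (n + 1) u`. -/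
structure DenjoyData where
  rho : ℝ
  G : ℤ → ℝ → ℝ
  continuous_G (n : ℤ) : Continuous (G n)
  strictMono_G (n : ℤ) : StrictMono (G n)
  G_add_one (n : ℤ) (u : ℝ) : G n (u + 1) = G n u + G n 1
  G_neg_neg (n : ℤ) (u : ℝ) : G (-n) (-u) = -G n u
  summable_G_one_mul : Summable fun n => G n 1 * (1 + |(n : ℝ)|)
  tsum_G_one_lt_one : ∑' n, G n 1 < 1

namespace DenjoyData

variable (D : DenjoyData)

section GapPrimitives

lemma G_intCast (n k : ℤ) : D.G n k = k * D.G n 1 := by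
  have hper : Function.Periodic (fun u => D.G n u - u * D.G n 1) 1 := fun u => by
    simp only [D.G_add_one]
    ring
  have h0 : D.G n 0 = 0 := by simpa using D.G_add_one n 0
  have hk := (hper.int_mul k).eq
  simp only [mul_one, h0, zero_mul, sub_zero] at hk
  linarith

lemma G_zero (n : ℤ) : D.G n 0 = 0 := by simpa using D.G_intCast n 0

lemma G_one_pos (n : ℤ) : 0 < D.G n 1 := by simpa [D.G_zero] using D.strictMono_G n one_pos

lemma abs_G_le (n : ℤ) (u : ℝ) : |D.G n u| ≤ (|u| + 1) * D.G n 1 := by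
  have h0 := D.G_one_pos n
  have hceil := (D.strictMono_G n).monotone (Int.le_ceil u)
  have hfloor := (D.strictMono_G n).monotone (Int.floor_le u)
  rw [G_intCast] at hceil hfloor
  rw [abs_le]
  constructor
  · nlinarith [neg_abs_le u, Int.sub_one_lt_floor u]
  · nlinarith [le_abs_self u, Int.ceil_lt_add_one u]

lemma summable_G_one : Summable fun n => D.G n 1 :=
  D.summable_G_one_mul.of_nonneg_of_le (fun n => (D.G_one_pos n).le)
    fun n => le_mul_of_one_le_right (D.G_one_pos n).le (le_add_of_nonneg_right (abs_nonneg _))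

/-- The Lebesgue measure of the complement of the gaps in one period. -/
noncomputable def kappa : ℝ := 1 - ∑' n, D.G n 1

lemma kappa_pos : 0 < D.kappa := sub_pos.2 D.tsum_G_one_lt_one

end GapPrimitives

section Param

/-- The position, in the blown-up line, of the point `t` of the original line; if `t` is blown up,
`s ∈ [-1/2, 1/2]` selects a point of the gap that replaces it. -/
noncomputable def param (t s : ℝ) : ℝ :=
  D.kappa * t + ∑' n : ℤ, D.G n (blowUp (t - n * D.rho) s)

lemma abs_G_blowUp_le {t T : ℝ} (ht : |t| ≤ T) (s : ℝ) (n : ℤ) :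
    |D.G n (blowUp (t - n * D.rho) s)| ≤ (T + |D.rho| + 2) * (D.G n 1 * (1 + |(n : ℝ)|)) := by
  have h0 := D.G_one_pos n
  have hT : 0 ≤ T := (abs_nonneg t).trans ht
  calc |D.G n (blowUp (t - n * D.rho) s)|
      ≤ (|blowUp (t - n * D.rho) s| + 1) * D.G n 1 := D.abs_G_le n _
    _ ≤ (T + |(n : ℝ)| * |D.rho| + 1 / 2 + 1) * D.G n 1 := by
      grw [abs_blowUp_le, abs_sub, abs_mul, ht]
    _ ≤ ((T + |D.rho| + 2) * (1 + |(n : ℝ)|)) * D.G n 1 := by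
      gcongr
      nlinarith [abs_nonneg D.rho, mul_nonneg hT (abs_nonneg (n : ℝ)), abs_nonneg (n : ℝ)]
    _ = (T + |D.rho| + 2) * (D.G n 1 * (1 + |(n : ℝ)|)) := by ring

lemma summable_G_blowUp (t s : ℝ) : Summable fun n : ℤ => D.G n (blowUp (t - n * D.rho) s) :=
  (D.summable_G_one_mul.mul_left _).of_norm_bounded (D.abs_G_blowUp_le le_rfl s)

lemma param_neg_neg (t s : ℝ) : D.param (-t) (-s) = -D.param t s := by
  have hterm (n : ℤ) : D.G (-n) (blowUp (-t - (-n : ℤ) * D.rho) (-s)) =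
      -D.G n (blowUp (t - n * D.rho) s) := by
    rw [← D.G_neg_neg, ← blowUp_neg_neg]
    congr 2
    push_cast
    ring
  rw [param, ← (Equiv.neg ℤ).tsum_eq]
  simp only [Equiv.neg_apply, hterm, tsum_neg, param]
  ring

lemma param_add_one (t s : ℝ) : D.param (t + 1) s = D.param t s + 1 := by
  have hterm (n : ℤ) : D.G n (blowUp (t + 1 - n * D.rho) s) =
      D.G n (blowUp (t - n * D.rho) s) + D.G n 1 := by
    rw [← D.G_add_one, ← blowUp_add_one]
    congr 2
    ring
  simp only [param, hterm, (D.summable_G_blowUp t s).tsum_add D.summable_G_one, kappa]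
  ring

lemma param_lt_param_of_lt {t t' : ℝ} (h : t < t') (s s' : ℝ) : D.param t s < D.param t' s' :=
  add_lt_add_of_lt_of_le (mul_lt_mul_of_pos_left h D.kappa_pos)
    ((D.summable_G_blowUp t s).tsum_le_tsum (fun n => (D.strictMono_G n).monotone
      (blowUp_le_blowUp_of_lt (sub_lt_sub_right h _) s s')) (D.summable_G_blowUp t' s'))

lemma param_le_param_iff {t s t' s' : ℝ} : D.param t s ≤ D.param t' s' ↔
    t ≤ t' ∧ ∀ n : ℤ, blowUp (t - n * D.rho) s ≤ blowUp (t' - n * D.rho) s' := by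
  constructor
  · intro hle
    rcases lt_trichotomy t t' with h | rfl | h
    · exact ⟨h.le, fun n => blowUp_le_blowUp_of_lt (sub_lt_sub_right h _) s s'⟩
    · refine ⟨le_rfl, fun n => ?_⟩
      rcases le_total s s' with hs | hs
      · exact blowUp_mono_right _ hs
      · by_contra! hn
        refine hle.not_gt (add_lt_add_right ?_ _)
        exact (D.summable_G_blowUp t s').tsum_lt_tsum (fun m => (D.strictMono_G m).monotone
          (blowUp_mono_right _ hs)) (D.strictMono_G n hn) (D.summable_G_blowUp t s)
    · exact absurd hle (D.param_lt_param_of_lt h s' s).not_ge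
  · rintro ⟨ht, hn⟩
    exact add_le_add (mul_le_mul_of_nonneg_left ht D.kappa_pos.le)
      ((D.summable_G_blowUp t s).tsum_le_tsum (fun n => (D.strictMono_G n).monotone (hn n))
        (D.summable_G_blowUp t' s'))

lemma continuous_param_right (t : ℝ) : Continuous (D.param t) :=
  continuous_const.add (continuous_tsum
    (fun n => (D.continuous_G n).comp (continuous_blowUp_right _))
    (D.summable_G_one_mul.mul_left _) fun n s => D.abs_G_blowUp_le le_rfl s n)

lemma tendsto_param_add_half (t : ℝ) :
    Tendsto (fun t' => D.param t' (1 / 2)) (𝓝[≥] t) (𝓝 (D.param t (1 / 2))) := by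
  refine ((continuous_const_mul D.kappa).tendsto t |>.mono_left nhdsWithin_le_nhds).add
    (tendsto_tsum_of_dominated_convergence
      (D.summable_G_one_mul.mul_left (|t| + 1 + |D.rho| + 2)) (fun n => ?_) ?_)
  · have hsub : Tendsto (fun t' => t' - n * D.rho) (𝓝[≥] t) (𝓝[≥] (t - n * D.rho)) :=
      (continuous_sub_right _).continuousWithinAt.tendsto_nhdsWithin
        fun t' (ht' : t ≤ t') => mem_Ici.2 (sub_le_sub_right ht' _)
    refine tendsto_nhds_of_eventually_eq ?_
    filter_upwards [hsub.eventually (eventually_blowUp_add_half_eq _)] with t' ht'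
    rw [ht']
  · filter_upwards [nhdsWithin_le_nhds (Metric.ball_mem_nhds t one_pos)] with t' ht' n
    have hdist : |t' - t| < 1 := ht'
    exact D.abs_G_blowUp_le (by linarith [abs_sub_abs_le_abs_sub t' t]) _ n

lemma tendsto_param_sub_half (t : ℝ) :
    Tendsto (fun t' => D.param t' (-(1 / 2))) (𝓝[≤] t) (𝓝 (D.param t (-(1 / 2)))) := by
  have hneg : Tendsto Neg.neg (𝓝[≤] t) (𝓝[≥] (-t)) := tendsto_neg_nhdsLE
  have h := ((D.tendsto_param_add_half (-t)).comp hneg).neg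
  simpa only [Function.comp_def, ← D.param_neg_neg, neg_neg] using h

lemma param_intCast (m : ℤ) (s : ℝ) : D.param m s = D.param 0 s + m := by
  simpa only [zero_add] using
    map_add_intCast_of_map_add_one (k := (D.param · s)) (D.param_add_one · s) 0 m

lemma exists_param_sub_half_le_le_param_add_half (x : ℝ) :
    ∃ t, D.param t (-(1 / 2)) ≤ x ∧ x ≤ D.param t (1 / 2) := by
  set S : Set ℝ := {t | x ≤ D.param t (1 / 2)}
  have hne : S.Nonempty := by
    refine ⟨⌈x - D.param 0 (1 / 2)⌉, ?_⟩
    change x ≤ D.param _ _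
    rw [param_intCast]
    linarith [Int.le_ceil (x - D.param 0 (1 / 2))]
  have hbdd : BddBelow S := by
    refine ⟨(⌊x - D.param 0 (1 / 2)⌋ - 1 : ℤ), fun t ht => le_of_not_gt fun hlt => ?_⟩
    have h := ht.trans (D.param_lt_param_of_lt hlt (1 / 2) (1 / 2)).le
    rw [param_intCast] at h
    push_cast at h
    linarith [Int.floor_le (x - D.param 0 (1 / 2))]
  refine ⟨sInf S,
    le_of_tendsto ((D.tendsto_param_sub_half _).mono_left
      (nhdsWithin_mono _ Iio_subset_Iic_self)) ?_,
    ge_of_tendsto ((D.tendsto_param_add_half _).mono_left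
      (nhdsWithin_mono _ Ioi_subset_Ici_self)) ?_⟩
  · filter_upwards [self_mem_nhdsWithin] with t ht
    have hx : D.param t (1 / 2) < x := not_le.1 fun hmem => notMem_of_lt_csInf ht hbdd hmem
    exact (D.param_le_param_iff.2 ⟨le_rfl, fun n => blowUp_mono_right _ (by norm_num)⟩).trans hx.le
  · filter_upwards [self_mem_nhdsWithin] with t ht
    obtain ⟨t', ht', htt'⟩ := exists_lt_of_csInf_lt hne ht
    exact ht'.trans (D.param_lt_param_of_lt htt' _ _).le

lemma surjective_param : Function.Surjective (Function.uncurry D.param) := fun x => by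
  obtain ⟨t, ht⟩ := D.exists_param_sub_half_le_le_param_add_half x
  obtain ⟨s, -, hs⟩ := intermediate_value_Icc (by norm_num : -(1 / 2 : ℝ) ≤ 1 / 2)
    (D.continuous_param_right t).continuousOn ht
  exact ⟨(t, s), hs⟩

end Param

section Coordinates

/-- The point of the original line below a point of the blown-up line, that is, the semiconjugacy
to the rotation. -/
noncomputable def rotCoord (x : ℝ) : ℝ := (Function.surjInv D.surjective_param x).1

/-- A choice of the second parameter of a point of the blown-up line. -/
noncomputable def fiberCoord (x : ℝ) : ℝ := (Function.surjInv D.surjective_param x).2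

/-- The position of `x` relative to the lifts of the `n`-th gap: it sweeps
`[k - 1/2, k + 1/2]` while `x` crosses the `k`-th lift, and is constant between consecutive ones. -/
noncomputable def gapCoord (n : ℤ) (x : ℝ) : ℝ := blowUp (D.rotCoord x - n * D.rho) (D.fiberCoord x)

lemma param_coords (x : ℝ) : D.param (D.rotCoord x) (D.fiberCoord x) = x :=
  Function.surjInv_eq D.surjective_param x

lemma le_iff_coords {x y : ℝ} :
    x ≤ y ↔ D.rotCoord x ≤ D.rotCoord y ∧ ∀ n, D.gapCoord n x ≤ D.gapCoord n y := by
  conv_lhs => rw [← D.param_coords x, ← D.param_coords y]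
  exact D.param_le_param_iff

lemma eq_of_coords {x y : ℝ} (hrot : D.rotCoord x = D.rotCoord y)
    (hgap : ∀ n, D.gapCoord n x = D.gapCoord n y) : x = y :=
  (D.le_iff_coords.2 ⟨hrot.le, fun n => (hgap n).le⟩).antisymm
    (D.le_iff_coords.2 ⟨hrot.ge, fun n => (hgap n).ge⟩)

lemma rotCoord_param (t s : ℝ) : D.rotCoord (D.param t s) = t :=
  (D.param_le_param_iff.1 (D.param_coords (D.param t s)).le).1.antisymm
    (D.param_le_param_iff.1 (D.param_coords (D.param t s)).ge).1

lemma gapCoord_param (n : ℤ) (t s : ℝ) : D.gapCoord n (D.param t s) = blowUp (t - n * D.rho) s :=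
  ((D.param_le_param_iff.1 (D.param_coords (D.param t s)).le).2 n).antisymm
    ((D.param_le_param_iff.1 (D.param_coords (D.param t s)).ge).2 n)

lemma monotone_rotCoord : Monotone D.rotCoord := fun _ _ h => (D.le_iff_coords.1 h).1

lemma monotone_gapCoord (n : ℤ) : Monotone (D.gapCoord n) := fun _ _ h => (D.le_iff_coords.1 h).2 n

lemma surjective_gapCoord (n : ℤ) : Function.Surjective (D.gapCoord n) := fun u => by
  refine ⟨D.param (round u + n * D.rho) (u - round u), ?_⟩
  rw [gapCoord_param, add_sub_cancel_right, blowUp_intCast _ (abs_sub_round u), add_sub_cancel]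

lemma continuous_gapCoord (n : ℤ) : Continuous (D.gapCoord n) :=
  (D.monotone_gapCoord n).continuous_of_surjective (D.surjective_gapCoord n)

lemma rotCoord_add_one (x : ℝ) : D.rotCoord (x + 1) = D.rotCoord x + 1 := by
  conv_lhs => rw [← D.param_coords x, ← D.param_add_one, rotCoord_param]

lemma hasSum_G_gapCoord (x : ℝ) :
    HasSum (fun n => D.G n (D.gapCoord n x)) (x - D.kappa * D.rotCoord x) := by
  have h := (D.summable_G_blowUp (D.rotCoord x) (D.fiberCoord x)).hasSum
  rwa [← sub_eq_of_eq_add' (D.param_coords x).symm] at h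

lemma abs_G_gapCoord_sub_le (n : ℤ) (x y : ℝ) :
    |D.G n (D.gapCoord n y) - D.G n (D.gapCoord n x)| ≤ |y - x| := by
  wlog h : x ≤ y generalizing x y
  · rw [abs_sub_comm, abs_sub_comm y]
    exact this y x (le_of_not_ge h)
  have hmono : ∀ m, 0 ≤ D.G m (D.gapCoord m y) - D.G m (D.gapCoord m x) := fun m =>
    sub_nonneg.2 ((D.strictMono_G m).monotone (D.monotone_gapCoord m h))
  have hle := le_hasSum ((D.hasSum_G_gapCoord y).sub (D.hasSum_G_gapCoord x)) n fun m _ => hmono m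
  have hrot := mul_le_mul_of_nonneg_left (D.monotone_rotCoord h) D.kappa_pos.le
  rw [abs_of_nonneg (hmono n), abs_of_nonneg (sub_nonneg.2 h)]
  linarith

end Coordinates

section Shift

/-- The lift of the Denjoy homeomorphism is `shift 1`, and `shift k` is its `k`-th iterate. -/
noncomputable def shift (k : ℤ) (x : ℝ) : ℝ :=
  D.param (D.rotCoord x + k * D.rho) (D.fiberCoord x)

lemma rotCoord_shift (k : ℤ) (x : ℝ) : D.rotCoord (D.shift k x) = D.rotCoord x + k * D.rho :=
  D.rotCoord_param _ _

lemma gapCoord_shift (n k : ℤ) (x : ℝ) : D.gapCoord (n + k) (D.shift k x) = D.gapCoord n x := by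
  rw [shift, gapCoord_param, gapCoord]
  congr 1
  push_cast
  ring

lemma shift_param (k : ℤ) (t s : ℝ) : D.shift k (D.param t s) = D.param (t + k * D.rho) s := by
  refine D.eq_of_coords ?_ fun n => ?_
  · rw [rotCoord_shift, rotCoord_param, rotCoord_param]
  · rw [← sub_add_cancel n k, gapCoord_shift, gapCoord_param, gapCoord_param]
    congr 1
    push_cast
    ring

lemma shift_zero (x : ℝ) : D.shift 0 x = x := by simp [shift, param_coords]

lemma shift_shift (j k : ℤ) (x : ℝ) : D.shift j (D.shift k x) = D.shift (j + k) x := by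
  conv_lhs => rw [← D.param_coords x, shift_param, shift_param]
  rw [shift]
  congr 1
  push_cast
  ring

lemma iterate_shift_one (n : ℕ) : (D.shift 1)^[n] = D.shift n := by
  induction n with
  | zero => exact funext fun x => (D.shift_zero x).symm
  | succ n ih =>
    refine funext fun x => ?_
    rw [Function.iterate_succ_apply', ih, shift_shift, add_comm, Nat.cast_succ]

lemma leftInverse_shift_neg (k : ℤ) : Function.LeftInverse (D.shift (-k)) (D.shift k) :=
  fun x => by rw [shift_shift, neg_add_cancel, shift_zero]

lemma bijective_shift (k : ℤ) : Function.Bijective (D.shift k) :=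
  ⟨(D.leftInverse_shift_neg k).injective, fun x =>
    ⟨D.shift (-k) x, by simpa only [neg_neg] using D.leftInverse_shift_neg (-k) x⟩⟩

lemma invFun_shift (k : ℤ) : Function.invFun (D.shift k) = D.shift (-k) := funext fun x => by
  obtain ⟨y, rfl⟩ := (D.bijective_shift k).surjective x
  rw [D.leftInverse_shift_neg k y, Function.leftInverse_invFun (D.bijective_shift k).injective]

lemma strictMono_shift (k : ℤ) : StrictMono (D.shift k) := by
  refine Monotone.strictMono_of_injective (fun x y h => ?_) (D.bijective_shift k).injective
  refine D.le_iff_coords.2 ⟨?_, fun n => ?_⟩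
  · rw [rotCoord_shift, rotCoord_shift]
    exact add_le_add_left (D.monotone_rotCoord h) _
  · rw [← sub_add_cancel n k, gapCoord_shift, gapCoord_shift]
    exact D.monotone_gapCoord _ h

lemma continuous_shift (k : ℤ) : Continuous (D.shift k) :=
  (D.strictMono_shift k).monotone.continuous_of_surjective (D.bijective_shift k).surjective

lemma shift_add_one (k : ℤ) (x : ℝ) : D.shift k (x + 1) = D.shift k x + 1 := by
  conv_lhs => rw [← D.param_coords x, ← D.param_add_one, shift_param]
  rw [add_right_comm, param_add_one, shift]

lemma shift_neg_neg (k : ℤ) (x : ℝ) : D.shift (-k) (-x) = -D.shift k x := by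
  conv_lhs => rw [← D.param_coords x, ← D.param_neg_neg, shift_param]
  rw [shift, ← param_neg_neg]
  congr 1
  push_cast
  ring

lemma hasSum_G_add_gapCoord (k : ℤ) (x : ℝ) :
    HasSum (fun n => D.G (n + k) (D.gapCoord n x))
      (D.shift k x - D.kappa * (D.rotCoord x + k * D.rho)) := by
  have h := (Equiv.addRight k).hasSum_iff.2 (D.hasSum_G_gapCoord (D.shift k x))
  simpa only [Function.comp_def, Equiv.coe_addRight, gapCoord_shift, rotCoord_shift] using h

lemma shift_sub_shift_of_gapCoord_mem_Ioo (hρ : Irrational D.rho) {n m : ℤ} {x y : ℝ}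
    (hx : D.gapCoord n x ∈ Ioo ((m : ℝ) - 1 / 2) (m + 1 / 2))
    (hy : D.gapCoord n y ∈ Ioo ((m : ℝ) - 1 / 2) (m + 1 / 2)) (k : ℤ) :
    D.shift k y - D.shift k x =
      D.G (n + k) (D.gapCoord n y) - D.G (n + k) (D.gapCoord n x) := by
  have hrot {z : ℝ} (hz : D.gapCoord n z ∈ Ioo ((m : ℝ) - 1 / 2) (m + 1 / 2)) :
      D.rotCoord z = m + n * D.rho := sub_eq_iff_eq_add.1 (eq_intCast_of_blowUp_mem_Ioo hz)
  have hother : ∀ j ≠ n, D.gapCoord j y = D.gapCoord j x := fun j hj => by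
    have hirr : (m : ℝ) + n * D.rho - j * D.rho ∉ range ((↑) : ℤ → ℝ) := by
      rintro ⟨i, hi⟩
      refine ((hρ.intCast_mul (sub_ne_zero.2 hj.symm)).intCast_add m).ne_int i ?_
      rw [hi]
      push_cast
      ring
    rw [gapCoord, gapCoord, hrot hx, hrot hy, blowUp_of_notMem_range hirr,
      blowUp_of_notMem_range hirr]
  have hsum := (D.hasSum_G_add_gapCoord k y).sub (D.hasSum_G_add_gapCoord k x)
  have h := hsum.unique (hasSum_single n fun j hj => by rw [hother j hj, sub_self])
  rw [hrot hx, hrot hy] at h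
  linarith

end Shift

section Phi

/-- The function `φ` determined by `h + h⁻¹ = 2 id + φ`, where `h = shift 1`. -/
noncomputable def phi (x : ℝ) : ℝ := D.shift 1 x + D.shift (-1) x - 2 * x

lemma periodic_phi : Function.Periodic D.phi 1 := fun x => by
  simp only [phi, shift_add_one]
  ring

lemma phi_neg (x : ℝ) : D.phi (-x) = -D.phi x := by
  have h := D.shift_neg_neg (-1) x
  rw [neg_neg] at h
  rw [phi, phi, h, shift_neg_neg]
  ring

lemma hasSum_phi (x : ℝ) : HasSum (fun n => secondDiff (D.G · (D.gapCoord n x)) n) (D.phi x) := by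
  have h := ((D.hasSum_G_add_gapCoord 1 x).add (D.hasSum_G_add_gapCoord (-1) x)).sub
    ((D.hasSum_G_gapCoord x).mul_left 2)
  suffices hval : D.shift 1 x - D.kappa * (D.rotCoord x + (1 : ℤ) * D.rho) +
      (D.shift (-1) x - D.kappa * (D.rotCoord x + (-1 : ℤ) * D.rho)) -
      2 * (x - D.kappa * D.rotCoord x) = D.phi x from hval ▸ h
  rw [phi]
  push_cast
  ring

/-- The second differences in `n` of the gap primitives `G n` are differentiable with respect to
`G n`, with derivative `q n`. The condition at half-integers makes these derivatives fit together
across the endpoints of the gaps. -/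
structure HasGapCurvature (q : ℤ → ℝ → ℝ) : Prop where
  continuous (n : ℤ) : Continuous (q n)
  exists_summable_abs_le : ∃ B : ℤ → ℝ, Summable B ∧ ∀ n u, |q n u| ≤ B n
  apply_intCast_add_half (n k : ℤ) : q n (k + 1 / 2) = 0
  hasRelDerivWithinAt (n : ℤ) (u : ℝ) :
    HasRelDerivWithinAt (fun v => secondDiff (D.G · v) n) (D.G n) (q n u) univ u

variable {D} {q : ℤ → ℝ → ℝ}

lemma hasDerivAt_secondDiff_gapCoord (hρ : Irrational D.rho) (hq : D.HasGapCurvature q) (n : ℤ)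
    (x : ℝ) : HasDerivAt (fun y => secondDiff (D.G · (D.gapCoord n y)) n)
      (q n (D.gapCoord n x)) x := by
  have hcont := (D.continuous_gapCoord n).continuousAt (x := x)
  have hrel := (hq.hasRelDerivWithinAt n (D.gapCoord n x)).comp
    (hcont.continuousWithinAt.tendsto_nhdsWithin (mapsTo_univ _ univ))
  rw [← hasDerivWithinAt_univ]
  rcases exists_eq_intCast_add_half_or_exists_mem_Ioo (D.gapCoord n x) with ⟨k, hk⟩ | ⟨m, hm⟩
  · rw [hk, hq.apply_intCast_add_half] at hrel ⊢
    exact hrel.hasDerivWithinAt_zero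
      (.of_bound 1 (.of_forall fun y => by simpa using D.abs_G_gapCoord_sub_le n x y))
  · refine hrel.hasDerivWithinAt_of_eventually_sub_eq (.of_forall fun _ => rfl) ?_
    rw [nhdsWithin_univ]
    filter_upwards [hcont.eventually_mem (isOpen_Ioo.mem_nhds hm)] with y hy
    simpa only [shift_zero, add_zero, Function.comp_apply] using
      D.shift_sub_shift_of_gapCoord_mem_Ioo hρ hm hy 0

lemma contDiff_phi (hρ : Irrational D.rho) (hq : D.HasGapCurvature q) : ContDiff ℝ 1 D.phi := by
  obtain ⟨B, hB, hle⟩ := hq.exists_summable_abs_le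
  have hderiv (x : ℝ) : HasDerivAt D.phi (∑' n, q n (D.gapCoord n x)) x := by
    rw [funext fun x => (D.hasSum_phi x).tsum_eq.symm]
    exact hasDerivAt_tsum hB (fun n x => hasDerivAt_secondDiff_gapCoord hρ hq n x)
      (fun n x => hle n _) (D.hasSum_phi 0).summable x
  rw [contDiff_one_iff_deriv, funext fun x => (hderiv x).deriv]
  exact ⟨fun x => (hderiv x).differentiableAt,
    continuous_tsum (fun n => (hq.continuous n).comp (D.continuous_gapCoord n)) hB
      fun n x => hle n _⟩

end Phi

section GapAtZero

variable {D}

lemma gapCoord_zero_zero : D.gapCoord 0 0 = 0 := by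
  have h : D.param 0 0 = 0 := by
    have := D.param_neg_neg 0 0
    rw [neg_zero] at this
    linarith
  conv_lhs => rw [← h, gapCoord_param]
  simp [blowUp]

lemma shift_sub_shift_zero (hρ : Irrational D.rho) {x : ℝ}
    (hx : D.gapCoord 0 x ∈ Ioo (-(1 / 2) : ℝ) (1 / 2)) (k : ℤ) :
    D.shift k x - D.shift k 0 = D.G k (D.gapCoord 0 x) := by
  have h := D.shift_sub_shift_of_gapCoord_mem_Ioo hρ (n := 0) (m := 0) (x := 0) (y := x)
    (by norm_num [gapCoord_zero_zero]) (by simpa using hx) k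
  rwa [zero_add, gapCoord_zero_zero, G_zero, sub_zero] at h

lemma tendsto_dist_iterate_shift_one_zero (hρ : Irrational D.rho) {x : ℝ}
    (hx : D.gapCoord 0 x ∈ Ioo (-(1 / 2) : ℝ) (1 / 2)) :
    Tendsto (fun n => dist ((D.shift 1)^[n] x) ((D.shift 1)^[n] 0)) atTop (𝓝 0) := by
  have hG : Tendsto (fun n : ℕ => D.G n 1) atTop (𝓝 0) := by
    have h := D.summable_G_one.tendsto_cofinite_zero.comp
      (Nat.cast_injective (R := ℤ)).tendsto_cofinite
    rwa [Nat.cofinite_eq_atTop] at h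
  refine squeeze_zero (fun _ => dist_nonneg) (fun n => ?_)
    (by simpa using hG.const_mul (|D.gapCoord 0 x| + 1))
  rw [iterate_shift_one, Real.dist_eq, shift_sub_shift_zero hρ hx]
  exact D.abs_G_le n _

lemma not_injective_of_map_shift_one (hρ : Irrational D.rho) {k : ℝ → ℝ} (hk : Continuous k)
    (hk1 : ∀ t, k (t + 1) = k t + 1) (hkh : ∀ t, k (D.shift 1 t) = k t + D.rho) :
    ¬ Function.Injective k := fun hinj => by
  obtain ⟨x, hx⟩ := D.surjective_gapCoord 0 (1 / 4)
  have hlim := tendsto_dist_iterate_shift_one_zero hρ (x := x) (by norm_num [hx])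
  have hx0 := hinj (eq_of_tendsto_dist_iterate (uniformContinuous_of_map_add_one hk hk1) hkh hlim)
  rw [hx0, gapCoord_zero_zero] at hx
  norm_num at hx

lemma hasDerivWithinAt_shift_Ioi (hρ : Irrational D.rho) {k : ℤ} {r : ℝ}
    (hr : HasRelDerivWithinAt (D.G k) (D.G 0) r (Ioi 0) 0) :
    HasDerivWithinAt (D.shift k) r (Ioi 0) 0 := by
  have hcont : Tendsto (D.gapCoord 0) (𝓝[>] 0) (𝓝 0) := by
    simpa only [gapCoord_zero_zero] using
      ((D.continuous_gapCoord 0).tendsto 0).mono_left nhdsWithin_le_nhds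
  have hmem : ∀ᶠ x in 𝓝[>] 0, D.gapCoord 0 x ∈ Ioo (-(1 / 2) : ℝ) (1 / 2) :=
    hcont.eventually_mem (Ioo_mem_nhds (by norm_num) (by norm_num))
  have hpos : ∀ᶠ x in 𝓝[>] 0, 0 < D.gapCoord 0 x := by
    filter_upwards [hmem, self_mem_nhdsWithin] with x hx hx0
    have h := shift_sub_shift_zero hρ hx 0
    rw [shift_zero, shift_zero, sub_zero] at h
    rwa [← (D.strictMono_G 0).lt_iff_lt, G_zero, ← h]
  have hrel := HasRelDerivWithinAt.comp (t := Ioi 0) (x := 0) (τ := D.gapCoord 0)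
    (by rwa [gapCoord_zero_zero])
    (by rw [gapCoord_zero_zero]; exact tendsto_nhdsWithin_iff.2 ⟨hcont, hpos⟩)
  refine hrel.hasDerivWithinAt_of_eventually_sub_eq ?_ ?_ <;>
    filter_upwards [hmem] with x hx <;>
    simp only [Function.comp_apply, gapCoord_zero_zero, G_zero, ← shift_sub_shift_zero hρ hx,
      shift_zero, sub_zero]

lemma hasDerivWithinAt_shift_Iio (hρ : Irrational D.rho) {k : ℤ} {r : ℝ}
    (hr : HasRelDerivWithinAt (D.G (-k)) (D.G 0) r (Ioi 0) 0) :
    HasDerivWithinAt (D.shift k) r (Iio 0) 0 := by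
  have h : HasDerivWithinAt (D.shift (-k)) r (Ioi 0) (-0) := by
    simpa only [neg_zero] using hasDerivWithinAt_shift_Ioi hρ hr
  have hneg := (h.comp 0 (hasDerivWithinAt_neg 0 (Iio 0)) fun x hx => neg_pos.2 hx).neg
  refine (hneg.congr_deriv (by ring)).congr (fun x _ => ?_) ?_ <;>
    simp only [Pi.neg_apply, Function.comp_apply, shift_neg_neg, neg_neg]

end GapAtZero

end DenjoyData

section GapDensity

/-- The weight `(1 + max (c n) 0) / (1 + (c (1 - c²))² (1 + n²)⁴)` of the `n`-th gap at the value
`c ∈ [-1, 1]` of the phase. It interpolates between the ramps `1 + max (-n) 0` and `1 + max n 0` at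
`c = ∓1`, whose relative second differences agree, through the constant weight at `c = 0`, and is
small for large `n` except near these three phases. -/
noncomputable def gapDensity (c : ℝ) (n : ℤ) : ℝ :=
  (1 + max (c * n) 0) * (1 + (c * (1 - c ^ 2)) ^ 2 * ((1 + (n : ℝ) ^ 2) ^ 2) ^ 2)⁻¹

lemma gapDensity_pos (c : ℝ) (n : ℤ) : 0 < gapDensity c n := by
  unfold gapDensity
  positivity

lemma continuous_gapDensity (n : ℤ) : Continuous fun c => gapDensity c n := by
  unfold gapDensity
  exact Continuous.mul (by fun_prop) (Continuous.inv₀ (by fun_prop) fun c => by positivity)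

lemma gapDensity_neg_neg (c : ℝ) (n : ℤ) : gapDensity (-c) (-n) = gapDensity c n := by
  simp [gapDensity]

lemma gapDensity_zero_left (n : ℤ) : gapDensity 0 n = 1 := by simp [gapDensity]

lemma gapDensity_one_left (n : ℤ) : gapDensity 1 n = 1 + max (n : ℝ) 0 := by simp [gapDensity]

lemma gapDensity_le_mul_inv {c : ℝ} (hc : |c| ≤ 1) (n : ℤ) :
    gapDensity c n ≤
      (1 + |(n : ℝ)|) * (1 + (c * (1 - c ^ 2)) ^ 2 * ((1 + (n : ℝ) ^ 2) ^ 2) ^ 2)⁻¹ := by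
  have hcn : c * n ≤ |(n : ℝ)| := by
    calc c * n ≤ |c * n| := le_abs_self _
      _ ≤ |(n : ℝ)| := by grw [abs_mul, hc, one_mul]
  unfold gapDensity
  gcongr
  exact max_le hcn (abs_nonneg _)

lemma exists_slowlyVarying_gapDensity :
    ∃ C, ∀ c : ℝ, |c| ≤ 1 → SlowlyVarying C (gapDensity c) :=
  ⟨_, fun c hc => (slowlyVarying_one_add_ramp hc).mul
    ((slowlyVarying_one_add_sq.sq.sq.one_add_const_mul (sq_nonneg (c * (1 - c ^ 2)))).inv)⟩

/-- The relative second difference of the weights `gapDensity c`; it is the derivative of `φ` at a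
point of the `n`-th gap with phase `c`. -/
noncomputable def gapCurvature (c : ℝ) (n : ℤ) : ℝ := secondDiff (gapDensity c) n / gapDensity c n

lemma continuous_gapCurvature (n : ℤ) : Continuous fun c => gapCurvature c n := by
  have h := continuous_gapDensity
  exact (((h _).add (h _)).sub ((h n).const_mul 2)).div₀ (h n) fun c => (gapDensity_pos c n).ne'

lemma gapCurvature_zero_left (n : ℤ) : gapCurvature 0 n = 0 := by
  simp only [gapCurvature, secondDiff, gapDensity_zero_left]
  norm_num

lemma gapCurvature_neg_neg (c : ℝ) (n : ℤ) : gapCurvature (-c) (-n) = gapCurvature c n := by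
  have h1 : -n + 1 = -(n - 1) := by ring
  have h2 : -n - 1 = -(n + 1) := by ring
  simp only [gapCurvature, secondDiff, h1, h2, gapDensity_neg_neg,
    add_comm (gapDensity c (n - 1))]

lemma gapCurvature_one_left (n : ℤ) : gapCurvature 1 n = if n = 0 then 1 else 0 := by
  simp only [gapCurvature, secondDiff, gapDensity_one_left]
  push_cast
  rcases lt_trichotomy n 0 with hn | rfl | hn
  · have hn' : (n : ℝ) + 1 ≤ 0 := by exact_mod_cast hn
    rw [if_neg hn.ne, max_eq_right hn', max_eq_right (by linarith), max_eq_right (by linarith)]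
    norm_num
  · norm_num
  · have hn' : (1 : ℝ) ≤ n := by exact_mod_cast hn
    rw [if_neg hn.ne', max_eq_left (by linarith), max_eq_left (by linarith),
      max_eq_left (by linarith)]
    ring

lemma gapCurvature_neg_one_left (n : ℤ) : gapCurvature (-1) n = gapCurvature 1 n := by
  rw [← gapCurvature_neg_neg, neg_neg, gapCurvature_one_left, gapCurvature_one_left]
  simp only [neg_eq_zero]

end GapDensity

section GapPrimitive

/-- The phase `1 - 2 {u}` of the point `u` of the circle; it sweeps `[-1, 1]` once per period. -/
noncomputable def phase (u : ℝ) : ℝ := 1 - 2 * Int.fract u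

lemma abs_phase_le_one (u : ℝ) : |phase u| ≤ 1 := by
  rw [phase, abs_le]
  constructor <;> linarith [Int.fract_nonneg u, Int.fract_lt_one u]

lemma periodic_phase : Function.Periodic phase 1 := fun u => by rw [phase, phase, Int.fract_add_one]

lemma phase_neg {u : ℝ} (hu : u ∉ range ((↑) : ℤ → ℝ)) : phase (-u) = -phase u := by
  rw [phase, phase, Int.fract_neg fun h => hu (Int.fract_eq_zero_iff.1 h)]
  ring

lemma phase_intCast_add_half (k : ℤ) : phase (k + 1 / 2) = 0 := by
  rw [phase, Int.fract_intCast_add, Int.fract_eq_self.2 (by norm_num)]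
  norm_num

lemma tendsto_phase_zero_right : Tendsto phase (𝓝[>] 0) (𝓝 1) := by
  have h : Tendsto (Int.fract : ℝ → ℝ) (𝓝[>] 0) (𝓝 0) := by
    simpa using (tendsto_fract_right' (0 : ℤ)).mono_left (nhdsWithin_mono _ Ioi_subset_Ici_self)
  have h1 : Tendsto (fun u : ℝ => 1 - 2 * Int.fract u) (𝓝[>] 0) (𝓝 (1 - 2 * 0)) :=
    (h.const_mul 2).const_sub 1
  rwa [mul_zero, sub_zero] at h1

lemma continuous_comp_phase {f : ℝ → ℝ} (hf : Continuous f) (h1 : f (-1) = f 1) :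
    Continuous fun u => f (phase u) :=
  ContinuousOn.comp_fract'' (f := fun v => f (1 - 2 * v)) (by fun_prop) (by norm_num [h1])

lemma intervalIntegrable_comp_phase {f : ℝ → ℝ} (hf : Continuous f) (x y : ℝ) :
    IntervalIntegrable (fun u => f (phase u)) MeasureTheory.volume x y := by
  obtain ⟨M, hM⟩ := isCompact_Icc.exists_bound_of_continuousOn (s := Icc (-1 : ℝ) 1) hf.continuousOn
  refine (intervalIntegrable_const (c := M)).mono_fun
    (hf.measurable.comp (by unfold phase; fun_prop)).aestronglyMeasurable (.of_forall fun u => ?_)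
  exact (hM _ (abs_le.1 (abs_phase_le_one u))).trans (le_abs_self M)

/-- The primitive, vanishing at `0`, of the density of the `n`-th gap. -/
noncomputable def gapPrimitive (n : ℤ) (u : ℝ) : ℝ := ∫ t in (0 : ℝ)..u, gapDensity (phase t) n

lemma intervalIntegrable_gapDensity_phase (n : ℤ) (x y : ℝ) :
    IntervalIntegrable (fun t => gapDensity (phase t) n) MeasureTheory.volume x y :=
  intervalIntegrable_comp_phase (continuous_gapDensity n) x y

lemma continuous_gapPrimitive (n : ℤ) : Continuous (gapPrimitive n) :=
  intervalIntegral.continuous_primitive (intervalIntegrable_gapDensity_phase n) 0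

lemma strictMono_gapPrimitive (n : ℤ) : StrictMono (gapPrimitive n) := fun u v huv => by
  have hint := intervalIntegrable_gapDensity_phase n
  rw [← sub_pos, gapPrimitive, gapPrimitive,
    intervalIntegral.integral_interval_sub_left (hint 0 v) (hint 0 u)]
  exact intervalIntegral.intervalIntegral_pos_of_pos (hint u v)
    (fun t => gapDensity_pos (phase t) n) huv

lemma gapPrimitive_add_one (n : ℤ) (u : ℝ) :
    gapPrimitive n (u + 1) = gapPrimitive n u + gapPrimitive n 1 := by
  have hint := intervalIntegrable_gapDensity_phase n
  have hper : Function.Periodic (fun t => gapDensity (phase t) n) 1 :=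
    periodic_phase.comp (gapDensity · n)
  have h := hper.intervalIntegral_add_eq u 0
  rw [zero_add] at h
  rw [gapPrimitive, gapPrimitive, gapPrimitive, ← h,
    intervalIntegral.integral_add_adjacent_intervals (hint 0 u) (hint u (u + 1))]

lemma gapPrimitive_neg_neg (n : ℤ) (u : ℝ) : gapPrimitive (-n) (-u) = -gapPrimitive n u := by
  calc gapPrimitive (-n) (-u) = ∫ t in u..0, gapDensity (phase (-t)) (-n) := by
        rw [gapPrimitive, intervalIntegral.integral_comp_neg fun t => gapDensity (phase t) (-n),
          neg_zero]
    _ = ∫ t in u..0, gapDensity (phase t) n := by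
        refine intervalIntegral.integral_congr_ae ?_
        filter_upwards [(countable_range ((↑) : ℤ → ℝ)).ae_notMem MeasureTheory.volume] with t ht _
        rw [phase_neg ht, gapDensity_neg_neg]
    _ = -gapPrimitive n u := intervalIntegral.integral_symm 0 u

lemma secondDiff_gapPrimitive (n : ℤ) (u : ℝ) : secondDiff (gapPrimitive · u) n =
    ∫ t in (0 : ℝ)..u, secondDiff (gapDensity (phase t)) n := by
  have hint := fun n => intervalIntegrable_gapDensity_phase n 0 u
  simp only [secondDiff, gapPrimitive]
  rw [intervalIntegral.integral_sub ((hint _).add (hint _)) ((hint n).const_mul 2),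
    intervalIntegral.integral_add (hint _) (hint _), intervalIntegral.integral_const_mul]

lemma hasRelDerivWithinAt_secondDiff_gapPrimitive (n : ℤ) (u : ℝ) :
    HasRelDerivWithinAt (fun v => secondDiff (gapPrimitive · v) n) (gapPrimitive n)
      (gapCurvature (phase u) n) univ u := by
  simp only [secondDiff_gapPrimitive]
  have hint := fun n => intervalIntegrable_gapDensity_phase n
  refine hasRelDerivWithinAt_integral 0 (hint n)
    (fun x y => ((hint _ x y).add (hint _ x y)).sub ((hint n x y).const_mul 2))
    (fun t => gapDensity_pos _ n) (fun _ _ => subset_univ _) ?_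
  rw [nhdsWithin_univ]
  exact (continuous_comp_phase (continuous_gapCurvature n) (gapCurvature_neg_one_left n)).tendsto u

lemma hasRelDerivWithinAt_gapPrimitive_Ioi (n : ℤ) :
    HasRelDerivWithinAt (gapPrimitive n) (gapPrimitive 0) (1 + max (n : ℝ) 0) (Ioi 0) 0 := by
  have hint := fun n => intervalIntegrable_gapDensity_phase n
  refine hasRelDerivWithinAt_integral 0 (hint 0) (hint n) (fun t => gapDensity_pos _ 0)
    (fun v hv t ht => ?_) ?_
  · rw [uIoc_of_le (le_of_lt hv)] at ht
    exact ht.1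
  · have hcont : Continuous fun c => gapDensity c n / gapDensity c 0 :=
      (continuous_gapDensity n).div₀ (continuous_gapDensity 0) fun c => (gapDensity_pos c 0).ne'
    simpa [Function.comp_def, gapDensity_one_left] using
      (hcont.tendsto 1).comp tendsto_phase_zero_right

end GapPrimitive

section Summability

lemma summable_inv_one_add_int_sq : Summable fun n : ℤ => (1 + (n : ℝ) ^ 2)⁻¹ := by
  refine (Real.summable_one_div_int_pow.2 one_lt_two).of_norm_bounded_eventually ?_
  filter_upwards [(finite_singleton (0 : ℤ)).compl_mem_cofinite] with n hn
  have hn' : (n : ℝ) ≠ 0 := Int.cast_ne_zero.2 hn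
  rw [Real.norm_of_nonneg (by positivity), one_div]
  gcongr
  linarith

lemma sq_one_add_abs_le (x : ℝ) : (1 + |x|) ^ 2 ≤ 2 * (1 + x ^ 2) := by
  rw [← sq_abs x]
  nlinarith [sq_nonneg (|x| - 1)]

lemma integral_inv_one_add_sq_le {k : ℝ} (hk : 0 < k) (e a b : ℝ) :
    ∫ v in a..b, (1 + (k * v - e) ^ 2)⁻¹ ≤ Real.pi / k := by
  rw [intervalIntegral.integral_comp_mul_sub (fun x => (1 + x ^ 2)⁻¹) hk.ne',
    integral_inv_one_add_sq, smul_eq_mul, inv_mul_eq_div]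
  gcongr
  linarith [Real.arctan_lt_pi_div_two (k * b - e), Real.neg_pi_div_two_lt_arctan (k * a - e)]

lemma exists_sq_sub_le {v : ℝ} (h0 : 0 ≤ v) (h1 : v ≤ 1) :
    ∃ e ∈ ({0, 1 / 2, 1} : Finset ℝ), (v - e) ^ 2 ≤ ((1 - 2 * v) * (1 - (1 - 2 * v) ^ 2)) ^ 2 := by
  have hfactor : (1 - 2 * v) * (1 - (1 - 2 * v) ^ 2) = 4 * v * (1 - v) * (1 - 2 * v) := by ring
  rw [hfactor]
  rcases le_total v (1 / 4) with hv | hv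
  · refine ⟨0, by simp, ?_⟩
    have hle : v ≤ 4 * v * (1 - v) * (1 - 2 * v) := by nlinarith [mul_nonneg h0 (sub_nonneg.2 hv)]
    rw [sub_zero]
    gcongr
  rcases le_total v (3 / 4) with hv' | hv'
  · refine ⟨1 / 2, by simp, ?_⟩
    have hle : 1 ≤ 8 * v * (1 - v) := by nlinarith [mul_nonneg (sub_nonneg.2 hv) (sub_nonneg.2 hv')]
    calc (v - 1 / 2) ^ 2 = (1 * (v - 1 / 2)) ^ 2 := by ring
      _ ≤ (8 * v * (1 - v) * (v - 1 / 2)) ^ 2 := by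
        rw [mul_pow, mul_pow]
        gcongr
      _ = _ := by ring
  · refine ⟨1, by simp, ?_⟩
    have hle : 1 - v ≤ 4 * v * (1 - v) * (2 * v - 1) := by
      nlinarith [mul_nonneg (sub_nonneg.2 h1) (sub_nonneg.2 hv')]
    calc (v - 1) ^ 2 = (1 - v) ^ 2 := by ring
      _ ≤ (4 * v * (1 - v) * (2 * v - 1)) ^ 2 := by gcongr
      _ = _ := by ring

lemma gapPrimitive_one_le (n : ℤ) :
    gapPrimitive n 1 ≤ 3 * Real.pi * ((1 + |(n : ℝ)|) / (1 + (n : ℝ) ^ 2) ^ 2) := by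
  set N : ℝ := (1 + (n : ℝ) ^ 2) ^ 2 with hN
  have hN0 : 0 < N := by positivity
  have hcont (e : ℝ) : Continuous fun v : ℝ => (1 + (N * v - N * e) ^ 2)⁻¹ :=
    Continuous.inv₀ (by fun_prop) fun v => by positivity
  have hle : ∀ v ∈ Ioo (0 : ℝ) 1, gapDensity (phase v) n ≤
      (1 + |(n : ℝ)|) * ∑ e ∈ ({0, 1 / 2, 1} : Finset ℝ), (1 + (N * v - N * e) ^ 2)⁻¹ := by
    intro v hv
    obtain ⟨e, he, hev⟩ := exists_sq_sub_le hv.1.le hv.2.le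
    grw [gapDensity_le_mul_inv (abs_phase_le_one v), phase,
      Int.fract_eq_self.2 ⟨hv.1.le, hv.2⟩, ← hev, ← hN, ← mul_pow, sub_mul, mul_comm v, mul_comm e]
    gcongr
    exact Finset.single_le_sum (f := fun e => (1 + (N * v - N * e) ^ 2)⁻¹)
      (fun e _ => by positivity) he
  calc gapPrimitive n 1
      ≤ ∫ v in (0 : ℝ)..1,
          (1 + |(n : ℝ)|) * ∑ e ∈ ({0, 1 / 2, 1} : Finset ℝ), (1 + (N * v - N * e) ^ 2)⁻¹ :=
        intervalIntegral.integral_mono_on_of_le_Ioo zero_le_one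
          (intervalIntegrable_gapDensity_phase n 0 1)
          ((continuous_const.mul (continuous_finsetSum _ fun e _ => hcont e)).intervalIntegrable
            0 1) hle
    _ = (1 + |(n : ℝ)|) * ∑ e ∈ ({0, 1 / 2, 1} : Finset ℝ),
          ∫ v in (0 : ℝ)..1, (1 + (N * v - N * e) ^ 2)⁻¹ := by
        rw [intervalIntegral.integral_const_mul,
          intervalIntegral.integral_finsetSum fun e _ => (hcont e).intervalIntegrable 0 1]
    _ ≤ (1 + |(n : ℝ)|) * ∑ _e ∈ ({0, 1 / 2, 1} : Finset ℝ), Real.pi / N := by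
        gcongr
        exact integral_inv_one_add_sq_le hN0 _ _ _
    _ = 3 * Real.pi * ((1 + |(n : ℝ)|) / N) := by
        norm_num
        ring

lemma gapPrimitive_one_pos (n : ℤ) : 0 < gapPrimitive n 1 := by
  simpa [gapPrimitive] using strictMono_gapPrimitive n one_pos

lemma summable_gapPrimitive_one_mul :
    Summable fun n : ℤ => gapPrimitive n 1 * (1 + |(n : ℝ)|) := by
  refine (summable_inv_one_add_int_sq.mul_left (6 * Real.pi)).of_nonneg_of_le
    (fun n => mul_nonneg (gapPrimitive_one_pos n).le (by positivity)) fun n => ?_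
  calc gapPrimitive n 1 * (1 + |(n : ℝ)|)
      ≤ 3 * Real.pi * ((1 + |(n : ℝ)|) / (1 + (n : ℝ) ^ 2) ^ 2) * (1 + |(n : ℝ)|) := by
        gcongr
        exact gapPrimitive_one_le n
    _ = 3 * Real.pi * ((1 + |(n : ℝ)|) ^ 2 / (1 + (n : ℝ) ^ 2) ^ 2) := by ring
    _ ≤ 3 * Real.pi * (2 * (1 + (n : ℝ) ^ 2) / (1 + (n : ℝ) ^ 2) ^ 2) := by
        gcongr
        exact sq_one_add_abs_le n
    _ = 6 * Real.pi * (1 + (n : ℝ) ^ 2)⁻¹ := by field_simp; ring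

lemma exists_summable_abs_gapCurvature_le : ∃ B : ℤ → ℝ, Summable B ∧
    ∀ n u, |gapCurvature (phase u) n| ≤ B n := by
  obtain ⟨C, hC⟩ := exists_slowlyVarying_gapDensity
  refine ⟨fun n => C ^ 2 * (1 + (n : ℝ) ^ 2)⁻¹, summable_inv_one_add_int_sq.mul_left _,
    fun n u => ?_⟩
  have hle : 1 + (n : ℝ) ^ 2 ≤ (1 + |(n : ℝ)|) ^ 2 := by
    rw [← sq_abs (n : ℝ)]
    nlinarith [abs_nonneg (n : ℝ)]
  calc |gapCurvature (phase u) n| ≤ (C / (1 + |(n : ℝ)|)) ^ 2 :=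
        (hC _ (abs_phase_le_one u)).abs_secondDiff_div_le n
    _ ≤ C ^ 2 * (1 + (n : ℝ) ^ 2)⁻¹ := by
        rw [div_pow, div_eq_mul_inv]
        gcongr

end Summability

section CornerGaps

/-- The factor by which the gap primitives are scaled to make the total gap length less than
`1`. -/
noncomputable def cornerScale : ℝ := (1 + ∑' n, gapPrimitive n 1)⁻¹

lemma tsum_gapPrimitive_one_nonneg : 0 ≤ ∑' n, gapPrimitive n 1 :=
  tsum_nonneg fun n => (gapPrimitive_one_pos n).le

lemma cornerScale_pos : 0 < cornerScale :=
  inv_pos.2 (add_pos_of_pos_of_nonneg one_pos tsum_gapPrimitive_one_nonneg)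

/-- The Denjoy construction whose gaps are weighted by `gapDensity`; the lift it produces has a
corner at `0`. -/
noncomputable def cornerGaps (ρ : ℝ) : DenjoyData where
  rho := ρ
  G n u := cornerScale * gapPrimitive n u
  continuous_G n := (continuous_gapPrimitive n).const_mul _
  strictMono_G n := (strictMono_gapPrimitive n).const_mul cornerScale_pos
  G_add_one n u := by rw [gapPrimitive_add_one, mul_add]
  G_neg_neg n u := by rw [gapPrimitive_neg_neg, mul_neg]
  summable_G_one_mul := by
    simpa only [mul_assoc] using summable_gapPrimitive_one_mul.mul_left cornerScale
  tsum_G_one_lt_one := by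
    have h := tsum_gapPrimitive_one_nonneg
    rw [tsum_mul_left, cornerScale, inv_mul_lt_one₀ (by linarith)]
    linarith

variable {ρ : ℝ}

lemma hasGapCurvature_cornerGaps :
    (cornerGaps ρ).HasGapCurvature fun n u => gapCurvature (phase u) n where
  continuous n := continuous_comp_phase (continuous_gapCurvature n) (gapCurvature_neg_one_left n)
  exists_summable_abs_le := exists_summable_abs_gapCurvature_le
  apply_intCast_add_half n k := by rw [phase_intCast_add_half, gapCurvature_zero_left]
  hasRelDerivWithinAt n u := by
    have h := (hasRelDerivWithinAt_secondDiff_gapPrimitive n u).const_mul cornerScale_pos.ne'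
    suffices hscale : (fun v => cornerScale * secondDiff (gapPrimitive · v) n) =
        fun v => secondDiff ((cornerGaps ρ).G · v) n from hscale ▸ h
    ext v
    simp only [secondDiff, cornerGaps]
    ring

lemma hasRelDerivWithinAt_cornerGaps_Ioi (n : ℤ) :
    HasRelDerivWithinAt ((cornerGaps ρ).G n) ((cornerGaps ρ).G 0) (1 + max (n : ℝ) 0) (Ioi 0) 0 :=
  (hasRelDerivWithinAt_gapPrimitive_Ioi n).const_mul cornerScale_pos.ne'

lemma hasDerivWithinAt_shift_one_cornerGaps_Iio (hρ : Irrational ρ) :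
    HasDerivWithinAt ((cornerGaps ρ).shift 1) 1 (Iio 0) 0 := by
  simpa using DenjoyData.hasDerivWithinAt_shift_Iio (D := cornerGaps ρ) hρ
    (hasRelDerivWithinAt_cornerGaps_Ioi (-1))

lemma hasDerivWithinAt_shift_one_cornerGaps_Ioi (hρ : Irrational ρ) :
    HasDerivWithinAt ((cornerGaps ρ).shift 1) (1 + 1) (Ioi 0) 0 := by
  simpa using DenjoyData.hasDerivWithinAt_shift_Ioi (D := cornerGaps ρ) hρ
    (hasRelDerivWithinAt_cornerGaps_Ioi 1)

end CornerGaps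

theorem non_differentiable_invariant_curve_exists_general {ρ : ℝ} (hρ : Irrational ρ) :
    ∃ (φ h : ℝ → ℝ) (x₀ dL dR : ℝ),
      ContDiff ℝ 1 φ ∧ Function.Periodic φ 1 ∧ (∫ t in (0 : ℝ)..1, φ t) = 0 ∧
      StrictMono h ∧ Continuous h ∧ Function.Bijective h ∧
      (∀ t : ℝ, h (t + 1) = h t + 1) ∧
      (∀ t : ℝ, h t + Function.invFun h t = 2 * t + φ t) ∧
      (∀ t : ℝ, Tendsto (fun n : ℕ => (h^[n] t - t) / n) atTop (𝓝 ρ)) ∧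
      (∀ (t : ℝ) (n : ℕ), 0 < n → ∀ m : ℤ, h^[n] t ≠ t + m) ∧
      (¬ ∃ k : ℝ → ℝ, StrictMono k ∧ Continuous k ∧ Function.Bijective k ∧
          (∀ t : ℝ, k (t + 1) = k t + 1) ∧ ∀ t : ℝ, k (h t) = k t + ρ) ∧
      dL ≠ dR ∧
      HasDerivWithinAt (fun t => h t - t) dL (Set.Iio x₀) x₀ ∧
      HasDerivWithinAt (fun t => h t - t) dR (Set.Ioi x₀) x₀ := by
  let D := cornerGaps ρ
  have hrot (t : ℝ) : D.rotCoord (D.shift 1 t) = D.rotCoord t + ρ := by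
    rw [D.rotCoord_shift, Int.cast_one, one_mul]
    rfl
  refine ⟨D.phi, D.shift 1, 0, 1 - 1, 1 + 1 - 1,
    DenjoyData.contDiff_phi hρ hasGapCurvature_cornerGaps, D.periodic_phi,
    intervalIntegral_eq_zero_of_odd_of_periodic D.phi_neg D.periodic_phi,
    D.strictMono_shift 1, D.continuous_shift 1, D.bijective_shift 1, D.shift_add_one 1,
    fun t => ?_,
    tendsto_iterate_sub_div_of_map_eq_add (D.strictMono_shift 1).monotone (D.shift_add_one 1)
      D.monotone_rotCoord D.rotCoord_add_one hrot,
    fun t _ => iterate_ne_add_intCast_of_map_eq_add hρ D.rotCoord_add_one hrot t, ?_, by norm_num,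
    (hasDerivWithinAt_shift_one_cornerGaps_Iio hρ).sub (hasDerivWithinAt_id 0 _),
    (hasDerivWithinAt_shift_one_cornerGaps_Ioi hρ).sub (hasDerivWithinAt_id 0 _)⟩
  · rw [DenjoyData.invFun_shift, DenjoyData.phi]
    ring
  · rintro ⟨k, hk, hcont, -, hk1, hkh⟩
    exact DenjoyData.not_injective_of_map_shift_one hρ hcont hk1 hkh hk.injective

/-- There exist a `C¹`, 1-periodic function `φ : ℝ → ℝ` with zero mean on `[0,1]`, and a
strictly increasing homeomorphism `h : ℝ → ℝ` commuting with `x ↦ x + 1` (the lift of an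
orientation-preserving circle homeomorphism) such that `h + h⁻¹ = 2·id + φ`, the rotation
number `ρ` of `h` is irrational (so `h` has no periodic points), `h` is not conjugate to the
rotation by `ρ` (a Denjoy counter-example), and `ψ = h − id` has distinct finite left and
right derivatives at some point `x₀`. -/
theorem non_differentiable_invariant_curve_exists :
    ∃ (φ h : ℝ → ℝ) (ρ x₀ dL dR : ℝ),
      ContDiff ℝ 1 φ ∧ Function.Periodic φ 1 ∧ (∫ t in (0:ℝ)..1, φ t) = 0 ∧
      StrictMono h ∧ Continuous h ∧ Function.Bijective h ∧
      (∀ t : ℝ, h (t + 1) = h t + 1) ∧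
      (∀ t : ℝ, h t + Function.invFun h t = 2 * t + φ t) ∧
      Irrational ρ ∧
      (∀ t : ℝ, Tendsto (fun n : ℕ => (h^[n] t - t) / n) atTop (𝓝 ρ)) ∧
      (∀ (t : ℝ) (n : ℕ), 0 < n → ∀ m : ℤ, h^[n] t ≠ t + m) ∧
      (¬ ∃ k : ℝ → ℝ, StrictMono k ∧ Continuous k ∧ Function.Bijective k ∧
          (∀ t : ℝ, k (t + 1) = k t + 1) ∧ ∀ t : ℝ, k (h t) = k t + ρ) ∧
      dL ≠ dR ∧
      HasDerivWithinAt (fun t => h t - t) dL (Set.Iio x₀) x₀ ∧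
      HasDerivWithinAt (fun t => h t - t) dR (Set.Ioi x₀) x₀ := by
  obtain ⟨φ, h, x₀, dL, dR, hφ, hper, hint, hmono, hcont, hbij, hadd, hinv, hrest⟩ :=
    non_differentiable_invariant_curve_exists_general irrational_sqrt_two
  exact ⟨φ, h, √2, x₀, dL, dR, hφ, hper, hint, hmono, hcont, hbij, hadd, hinv,
    irrational_sqrt_two, hrest⟩
end

section
/- Let φ, ψ : ℝ → ℝ be continuous and 1-periodic. Let F : ℝ² → ℝ² be defined by F(θ, r) = (θ + r, r + φ(θ + r)) and let Γ = {(θ, ψ(θ)) : θ ∈ ℝ} be the graph of ψ. Then F(Γ) = Γ if and only if the map g̃ = id_ℝ + ψ is a (strictly increasing) homeomorphism of ℝ (hence a lift of an orientation-preserving circle homeomorphism) and id_ℝ + φ/2 = (g̃ + g̃⁻¹)/2, i.e. φ(x) = g̃(x) + g̃⁻¹(x) − 2x for all x ∈ ℝ. -/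
/-!
Write `g = id + ψ`. The point of the graph over `θ` is sent to `(g θ, ψ θ + φ (g θ))`, so the graph
is invariant iff `g` is onto and `ψ (g θ) = ψ θ + φ (g θ)` for all `θ`. Substituting `ψ = g - id`,
this equation becomes `φ (g θ) + 2 g θ - g (g θ) = θ`: the map `φ + 2 id - g` is a left inverse of
`g`. As `g` is onto, it is therefore bijective with inverse `φ + 2 id - g`. Finally, a continuous
injection of `ℝ` is strictly monotone, and `g (θ + c) = g θ + c` excludes the decreasing case.
-/

open Set

theorem surjective_and_leftInverse_iff_bijective_and_eq_invFun {α β : Type*} [Nonempty α]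
    {g : α → β} {u : β → α} :
    Function.Surjective g ∧ Function.LeftInverse u g ↔
      Function.Bijective g ∧ ∀ y, u y = Function.invFun g y := by
  constructor
  · rintro ⟨hsurj, hleft⟩
    have hright : Function.RightInverse u g := hleft.rightInverse_of_surjective hsurj
    exact ⟨⟨hleft.injective, hsurj⟩, fun y ↦
      (congrFun (Function.invFun_eq_of_injective_of_rightInverse hleft.injective hright) y).symm⟩
  · rintro ⟨⟨hinj, hsurj⟩, hu⟩
    exact ⟨hsurj, fun x ↦ (hu (g x)).trans (Function.leftInverse_invFun hinj x)⟩

theorem range_prodMk_eq_range_graph_iff {ι α β : Type*} {g : ι → α} {h : ι → β} {ψ : α → β} :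
    range (fun i ↦ (g i, h i)) = range (fun x ↦ (x, ψ x)) ↔
      Function.Surjective g ∧ ∀ i, ψ (g i) = h i := by
  constructor
  · intro heq
    constructor
    · intro x
      obtain ⟨i, hi⟩ : (x, ψ x) ∈ range (fun i ↦ (g i, h i)) := heq ▸ mem_range_self x
      exact ⟨i, congrArg Prod.fst hi⟩
    · intro i
      obtain ⟨x, hx⟩ : (g i, h i) ∈ range (fun x ↦ (x, ψ x)) := heq ▸ mem_range_self i
      obtain ⟨rfl, hψ⟩ := Prod.mk.inj hx
      exact hψ
  · rintro ⟨hsurj, hψ⟩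
    simp only [← hψ]
    exact hsurj.range_comp (fun x ↦ (x, ψ x))

section AddCommGroup

variable {G : Type*} [AddCommGroup G]

/-- Herman's twist map `F(θ, r) = (θ + r, r + φ(θ + r))`, with the line replaced by an arbitrary
commutative group. -/
def hermanMap (φ : G → G) (p : G × G) : G × G :=
  (p.1 + p.2, p.2 + φ (p.1 + p.2))

/-- The map `g̃ = id + ψ` through which a Herman map acts on the base coordinate of the graph
of `ψ`. -/
def baseMap (ψ : G → G) (t : G) : G :=
  t + ψ t

theorem image_hermanMap_graph_eq_iff (φ ψ : G → G) :
    hermanMap φ '' range (fun t ↦ (t, ψ t)) = range (fun t ↦ (t, ψ t)) ↔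
      Function.Surjective (baseMap ψ) ∧
        ∀ t, ψ (baseMap ψ t) = ψ t + φ (baseMap ψ t) := by
  rw [← range_comp]
  exact range_prodMk_eq_range_graph_iff

theorem apply_baseMap_eq_iff (φ ψ : G → G) (t : G) :
    ψ (baseMap ψ t) = ψ t + φ (baseMap ψ t) ↔
      φ (baseMap ψ t) + 2 • baseMap ψ t - baseMap ψ (baseMap ψ t) = t := by
  have hdiff : φ (baseMap ψ t) + 2 • baseMap ψ t - baseMap ψ (baseMap ψ t) - t =
      ψ t + φ (baseMap ψ t) - ψ (baseMap ψ t) := by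
    simp only [baseMap]
    abel
  rw [← sub_eq_zero (b := t), hdiff, sub_eq_zero, eq_comm]

theorem image_hermanMap_graph_eq_iff_bijective (φ ψ : G → G) :
    hermanMap φ '' range (fun t ↦ (t, ψ t)) = range (fun t ↦ (t, ψ t)) ↔
      Function.Bijective (baseMap ψ) ∧
        ∀ t, φ t = baseMap ψ t + Function.invFun (baseMap ψ) t - 2 • t := by
  simp only [image_hermanMap_graph_eq_iff, apply_baseMap_eq_iff]
  refine (surjective_and_leftInverse_iff_bijective_and_eq_invFun
    (u := fun t ↦ φ t + 2 • t - baseMap ψ t)).trans (and_congr_right' (forall_congr' fun t ↦ ?_))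
  rw [sub_eq_iff_eq_add', eq_sub_iff_add_eq]

end AddCommGroup

theorem strictMono_baseMap_of_injective {ψ : ℝ → ℝ} {c : ℝ} (hcont : Continuous ψ)
    (hper : Function.Periodic ψ c) (hc : c ≠ 0) (hinj : Function.Injective (baseMap ψ)) :
    StrictMono (baseMap ψ) := by
  have hcont_base : Continuous (baseMap ψ) := continuous_id.add hcont
  refine (hcont_base.strictMono_of_inj hinj).resolve_right fun hanti ↦ ?_
  have hshift : baseMap ψ c = baseMap ψ 0 + c := by
    simp only [baseMap, hper.eq]
    ring
  rcases hc.lt_or_gt with hneg | hpos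
  · linarith [hanti hneg]
  · linarith [hanti hpos]

theorem graph_invariant_iff_general (φ ψ : ℝ → ℝ) {c : ℝ} (hc : c ≠ 0)
    (hcont : Continuous ψ) (hper : Function.Periodic ψ c) :
    hermanMap φ '' range (fun θ ↦ (θ, ψ θ)) = range (fun θ ↦ (θ, ψ θ)) ↔
      StrictMono (baseMap ψ) ∧ Function.Bijective (baseMap ψ) ∧
        ∀ t, φ t = baseMap ψ t + Function.invFun (baseMap ψ) t - 2 * t := by
  have hmono (hbij : Function.Bijective (baseMap ψ)) : StrictMono (baseMap ψ) :=
    strictMono_baseMap_of_injective hcont hper hc hbij.injective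
  rw [image_hermanMap_graph_eq_iff_bijective]
  simp only [nsmul_eq_mul, Nat.cast_ofNat]
  exact ⟨fun h ↦ ⟨hmono h.1, h⟩, And.right⟩

/-- For continuous 1-periodic `φ, ψ : ℝ → ℝ`, the graph `Γ` of `ψ` is invariant under
`F(θ, r) = (θ + r, r + φ(θ + r))` if and only if `g = id + ψ` is a strictly increasing
homeomorphism of `ℝ` (the lift of an orientation-preserving circle homeomorphism) and
`φ = g + g⁻¹ − 2·id`. -/
theorem graph_invariant_iff (φ ψ : ℝ → ℝ)
    (hφc : Continuous φ) (hψc : Continuous ψ)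
    (hφp : Function.Periodic φ 1) (hψp : Function.Periodic ψ 1) :
    (fun p : ℝ × ℝ => (p.1 + p.2, p.2 + φ (p.1 + p.2))) ''
        (Set.range fun θ : ℝ => (θ, ψ θ)) = (Set.range fun θ : ℝ => (θ, ψ θ)) ↔
      (StrictMono (fun t : ℝ => t + ψ t) ∧
        Function.Bijective (fun t : ℝ => t + ψ t) ∧
        ∀ t : ℝ, φ t = (t + ψ t) + Function.invFun (fun s : ℝ => s + ψ s) t - 2 * t) :=
  graph_invariant_iff_general φ ψ one_ne_zero hψc hψp
end

section
/- Let (α_n)_{n≥0} be a sequence of positive real numbers with lim_{n→∞} α_n = 1, and for n ≥ 1 set m_n = α_n + 1/α_{n−1}. Let (β_n)_{n≥0} be a real sequence with β_0 > α_0 satisfying β_n = m_n − 1/β_{n−1} for all n ≥ 1. Then β_n > α_n > 0 for every n ≥ 0, and lim_{n→∞} β_n = 1. -/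
open Filter Topology

/-!
Write `d n = β n - α n`. The two recursions give `d (n + 1) = 1 / α n - 1 / β n`, which has the same
sign as `d n`; and it linearises on passing to reciprocals: `u n = (d n)⁻¹` satisfies
`u (n + 1) = α n ^ 2 * u n + α n`. Once `α n ^ 2 ≥ q` and `α n ≥ c`, the sequence `u` is driven
above every number below the fixed point `c / (1 - q)` of `t ↦ q * t + c`. Letting `q → 1` gives
`u → ∞`, that is `d → 0`.
-/

lemma pow_mul_le_of_mul_le_succ {R : Type*} [Semiring R] [PartialOrder R] [IsOrderedRing R]
    {v : ℕ → R} {q : R} (hq : 0 ≤ q) (hv : ∀ n, q * v n ≤ v (n + 1)) (n : ℕ) :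
    q ^ n * v 0 ≤ v n :=
  (monotone_mul_left_of_nonneg hq).seq_le_seq (x := fun k ↦ q ^ k * v 0) n (by simp)
    (fun k _ ↦ by rw [pow_succ', mul_assoc]) fun k _ ↦ hv k

section AffineRecursion

variable {K : Type*} [Field K] [LinearOrder K] [IsStrictOrderedRing K] [Archimedean K]
  [TopologicalSpace K] [OrderTopology K]

lemma eventually_lt_of_mul_add_le_succ {u : ℕ → K} {q c M : K} (hq₀ : 0 ≤ q) (hq₁ : q < 1)
    (hu : ∀ᶠ n in atTop, q * u n + c ≤ u (n + 1)) (hM : M < c / (1 - q)) :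
    ∀ᶠ n in atTop, M < u n := by
  set L := c / (1 - q) with hL
  have fixed : q * L + c = L := by
    have : 1 - q ≠ 0 := (sub_pos.2 hq₁).ne'
    rw [hL]
    field_simp
    ring
  obtain ⟨N, hN⟩ := eventually_atTop.1 hu
  have contraction (k : ℕ) : q * (u (k + N) - L) ≤ u (k + 1 + N) - L := by
    have := hN (k + N) (Nat.le_add_left N k)
    rw [add_right_comm]
    linarith
  have lower (k : ℕ) : q ^ k * (u N - L) + L ≤ u (k + N) := by
    simpa only [zero_add, le_sub_iff_add_le] using pow_mul_le_of_mul_le_succ hq₀ contraction k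
  have lower_lim : Tendsto (fun k ↦ q ^ k * (u N - L) + L) atTop (𝓝 L) := by
    simpa using
      ((tendsto_pow_atTop_nhds_zero_of_lt_one hq₀ hq₁).mul_const (u N - L)).add_const L
  have shifted : ∀ᶠ k in atTop, M < u (k + N) :=
    (lower_lim.eventually_const_lt hM).mono fun k hk ↦ hk.trans_le (lower k)
  rwa [← map_add_atTop_eq_nat N, eventually_map]

lemma tendsto_atTop_of_mul_add_le_succ {u a b : ℕ → K} {c : K} (hu₀ : ∀ᶠ n in atTop, 0 ≤ u n)
    (ha : ∀ q < 1, ∀ᶠ n in atTop, q < a n) (hc : 0 < c) (hb : ∀ᶠ n in atTop, c ≤ b n)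
    (hu : ∀ᶠ n in atTop, a n * u n + b n ≤ u (n + 1)) : Tendsto u atTop atTop := by
  refine (atTop_basis_Ioi' 0).tendsto_right_iff.2 fun M (hM : 0 < M) ↦ ?_
  let q := M / (M + c)
  have hq₁ : q < 1 := (div_lt_one (by positivity)).2 (by linarith)
  have fixed_point : c / (1 - q) = M + c := by
    rw [one_sub_div (by positivity), add_sub_cancel_left, div_div_cancel₀ hc.ne']
  refine eventually_lt_of_mul_add_le_succ (c := c) (by positivity) hq₁ ?_ (by linarith)
  filter_upwards [hu₀, ha q hq₁, hb, hu] with n hun han hbn hstep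
  calc q * u n + c ≤ a n * u n + b n := by gcongr
    _ ≤ u (n + 1) := hstep

end AffineRecursion

lemma inv_one_div_sub_one_div {K : Type*} [Field K] {x y : K} (hx : x ≠ 0) (hy : y ≠ 0)
    (hxy : y - x ≠ 0) : (1 / x - 1 / y)⁻¹ = x ^ 2 * (y - x)⁻¹ + x := by
  rw [one_div, one_div, inv_sub_inv hx hy, inv_div]
  field_simp
  ring

section Gap

variable {K : Type*} [Field K] [LinearOrder K] [IsStrictOrderedRing K] {α β : ℕ → K}

lemma lt_of_sub_succ_eq_one_div_sub_one_div (hα : ∀ n, 0 < α n) (h₀ : α 0 < β 0)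
    (hsub : ∀ n, β (n + 1) - α (n + 1) = 1 / α n - 1 / β n) (n : ℕ) : α n < β n := by
  induction n with
  | zero => exact h₀
  | succ n ih =>
    rw [← sub_pos, hsub, sub_pos]
    exact one_div_lt_one_div_of_lt (hα n) ih

lemma tendsto_sub_zero_of_sub_succ_eq_one_div_sub_one_div [Archimedean K] [TopologicalSpace K]
    [OrderTopology K] (hα : ∀ n, 0 < α n) (hαliminf : ∀ q < 1, ∀ᶠ n in atTop, q < α n)
    (hlt : ∀ n, α n < β n) (hsub : ∀ n, β (n + 1) - α (n + 1) = 1 / α n - 1 / β n) :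
    Tendsto (fun n ↦ β n - α n) atTop (𝓝 0) := by
  have gap_pos (n : ℕ) : 0 < β n - α n := sub_pos.2 (hlt n)
  have inv_gap_succ (n : ℕ) :
      (β (n + 1) - α (n + 1))⁻¹ = α n ^ 2 * (β n - α n)⁻¹ + α n := by
    rw [hsub, inv_one_div_sub_one_div (hα n).ne' ((hα n).trans (hlt n)).ne' (gap_pos n).ne']
  have sq_lim : ∀ q < 1, ∀ᶠ n in atTop, q < α n ^ 2 := fun q hq ↦ by
    filter_upwards [hαliminf ((q + 1) / 2) (by linarith)] with n hn
    linarith [two_mul_le_add_sq (α n) 1]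
  have inv_gap_lim : Tendsto (fun n ↦ (β n - α n)⁻¹) atTop atTop :=
    tendsto_atTop_of_mul_add_le_succ (.of_forall fun n ↦ (inv_pos.2 (gap_pos n)).le) sq_lim
      one_half_pos ((hαliminf _ one_half_lt_one).mono fun _ ↦ le_of_lt)
      (.of_forall fun n ↦ (inv_gap_succ n).ge)
  simpa only [Function.comp_def, inv_inv] using tendsto_inv_atTop_zero.comp inv_gap_lim

end Gap

theorem forward_orbit_derivatives_tendsto_one_general {K : Type*} [Field K] [LinearOrder K]
    [IsStrictOrderedRing K] [Archimedean K] [TopologicalSpace K] [OrderTopology K]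
    (α β m : ℕ → K) (hαpos : ∀ n, 0 < α n)
    (hαliminf : ∀ q < 1, ∀ᶠ n in atTop, q < α n)
    (hm : ∀ n, 1 ≤ n → m n = α n + 1 / α (n - 1))
    (hβ0 : α 0 < β 0)
    (hβ : ∀ n, 1 ≤ n → β n = m n - 1 / β (n - 1)) :
    (∀ n, α n < β n) ∧ Tendsto (fun n ↦ β n - α n) atTop (𝓝 0) := by
  have hsub (n : ℕ) : β (n + 1) - α (n + 1) = 1 / α n - 1 / β n := by
    rw [hβ (n + 1) n.succ_pos, hm (n + 1) n.succ_pos, Nat.add_sub_cancel]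
    ring
  have hlt := lt_of_sub_succ_eq_one_div_sub_one_div hαpos hβ0 hsub
  exact ⟨hlt, tendsto_sub_zero_of_sub_succ_eq_one_div_sub_one_div hαpos hαliminf hlt hsub⟩

/-- Lemma 1 of the paper. If `α n > 0`, `α n → 1`, `m n = α n + 1/α (n-1)` for `n ≥ 1`,
`β 0 > α 0` and `β n = m n − 1/β (n-1)` for `n ≥ 1`, then `β n > α n > 0` for all `n` and
`β n → 1`. -/
theorem forward_orbit_derivatives_tendsto_one (α β m : ℕ → ℝ)
    (hαpos : ∀ n, 0 < α n)
    (hαlim : Tendsto α atTop (𝓝 1))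
    (hm : ∀ n, 1 ≤ n → m n = α n + 1 / α (n - 1))
    (hβ0 : α 0 < β 0)
    (hβ : ∀ n, 1 ≤ n → β n = m n - 1 / β (n - 1)) :
    (∀ n, α n < β n) ∧ Tendsto β atTop (𝓝 1) :=
  (forward_orbit_derivatives_tendsto_one_general α β m hαpos
    (fun _ ↦ hαlim.eventually_const_lt) hm hβ0 hβ).imp_right
    fun hgap ↦ by simpa using hgap.add hαlim
end

section
/- Let (α_n)_{n≥0} be a sequence of positive real numbers with lim_{n→∞} α_n = 1, and for n ≥ 0 set μ_n = α_n + 1/α_{n+1}. Let (β_n)_{n≥0} be a real sequence with 0 < β_0 < α_0 satisfying β_{n+1} = 1/(μ_n − β_n) for all n ≥ 0. Then 0 < β_n < α_n for every n ≥ 0 (in particular μ_n − β_n > 0, so the recursion is well defined), and lim_{n→∞} β_n = 1. -/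
open Filter Topology

/-!
Both `α` and `β` are orbits of the recursion with coefficients `μ`. Möbius maps act affinely on the
reciprocal of the distance to a reference orbit: `u n = (α n - β n)⁻¹` satisfies
`u (n + 1) = c ^ 2 * u n + c` with `c = (α (n + 1))⁻¹`. As `c` is asymptotically at least `1`, each
step raises `u` by a fixed amount as long as `u` stays below a given bound, so `u → ∞`.
-/

theorem eventually_le_of_min_add_le {G : Type*} [AddCommGroup G] [LinearOrder G]
    [IsOrderedAddMonoid G] [Archimedean G] {u : ℕ → G} {K δ : G} (hδ : 0 < δ)
    (hu : ∀ᶠ n in atTop, min (u n) K + δ ≤ u (n + 1)) : ∀ᶠ n in atTop, K ≤ u n := by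
  obtain ⟨N, hN⟩ := eventually_atTop.1 hu
  have linear_growth (k : ℕ) : min (u N + k • δ) K ≤ u (N + k) := by
    induction k with
    | zero => simp
    | succ k ih =>
      calc min (u N + (k + 1) • δ) K
          ≤ min (u N + k • δ + δ) (K + δ) := by
            rw [succ_nsmul, ← add_assoc]
            exact min_le_min_left _ (le_add_of_nonneg_right hδ.le)
        _ = min (u N + k • δ) K + δ := min_add_add_right _ _ _
        _ ≤ min (u (N + k)) K + δ := add_le_add_left (le_min ih (min_le_right _ _)) δ
        _ ≤ u (N + (k + 1)) := hN (N + k) (Nat.le_add_right N k)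
  obtain ⟨M, hM⟩ := Archimedean.arch (K - u N) hδ
  filter_upwards [eventually_ge_atTop (N + M)] with n hn
  obtain ⟨k, rfl⟩ := Nat.exists_eq_add_of_le (le_of_add_le_left hn)
  have hMk : M • δ ≤ k • δ := nsmul_le_nsmul_left hδ.le (Nat.add_le_add_iff_left.1 hn)
  have hK : K ≤ u N + k • δ := sub_le_iff_le_add'.1 (hM.trans hMk)
  exact (le_min hK le_rfl).trans (linear_growth k)

theorem tendsto_atTop_of_mul_add_le {𝕜 : Type*} [Field 𝕜] [LinearOrder 𝕜] [IsStrictOrderedRing 𝕜]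
    [Archimedean 𝕜] {u a b : ℕ → 𝕜} {δ : 𝕜} (hδ : 0 < δ)
    (hu : ∀ᶠ n in atTop, 0 ≤ u n) (ha : ∀ r < 1, ∀ᶠ n in atTop, r < a n)
    (hb : ∀ᶠ n in atTop, δ ≤ b n) (hrec : ∀ᶠ n in atTop, a n * u n + b n ≤ u (n + 1)) :
    Tendsto u atTop atTop := by
  refine (atTop_basis' δ).tendsto_right_iff.2 fun K (hδK : δ ≤ K) => ?_
  have hK : 0 < K := hδ.trans_le hδK
  obtain ⟨r, hr_nonneg, hr_lt, loss_at_K⟩ : ∃ r, 0 ≤ r ∧ r < 1 ∧ (1 - r) * K = δ / 2 := by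
    refine ⟨1 - δ / (2 * K), ?_, sub_lt_self _ (by positivity), by field_simp; ring⟩
    rw [sub_nonneg, div_le_one (by positivity)]
    linarith
  refine eventually_le_of_min_add_le (half_pos hδ) ?_
  filter_upwards [hu, ha r hr_lt, hb, hrec] with n hun han hbn hrecn
  have loss_le : (1 - r) * min (u n) K ≤ δ / 2 :=
    (mul_le_mul_of_nonneg_left (min_le_right _ _) (sub_nonneg.2 hr_lt.le)).trans_eq loss_at_K
  calc min (u n) K + δ / 2 ≤ r * min (u n) K + δ := by linarith
    _ ≤ r * u n + δ := by gcongr; exact min_le_left _ _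
    _ ≤ a n * u n + b n := by gcongr
    _ ≤ u (n + 1) := hrecn

theorem eventually_lt_inv_of_eventually_lt {ι 𝕜 : Type*} [Field 𝕜] [LinearOrder 𝕜]
    [IsStrictOrderedRing 𝕜] {l : Filter ι} {f : ι → 𝕜} (hf₀ : ∀ᶠ i in l, 0 < f i)
    (hf : ∀ a > 1, ∀ᶠ i in l, f i < a) {r : 𝕜} (hr : r < 1) : ∀ᶠ i in l, r < (f i)⁻¹ := by
  rcases le_or_gt r 0 with hr₀ | hr₀
  · exact hf₀.mono fun i hi => hr₀.trans_lt (inv_pos.2 hi)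
  · filter_upwards [hf₀, hf _ ((one_lt_inv₀ hr₀).2 hr)] with i hi hlt
    exact (lt_inv_comm₀ hr₀ hi).2 hlt

theorem inv_sub_inv_add_inv {𝕜 : Type*} [Field 𝕜] {a d : 𝕜} (ha : a ≠ 0) (hd : d ≠ 0)
    (had : d + a⁻¹ ≠ 0) : (a - (d + a⁻¹)⁻¹)⁻¹ = a⁻¹ ^ 2 * d⁻¹ + a⁻¹ := by
  have gap : a - (d + a⁻¹)⁻¹ = a * d * (d + a⁻¹)⁻¹ := by
    rw [eq_mul_inv_iff_mul_eq₀ had, sub_mul, inv_mul_cancel₀ had, mul_add, mul_inv_cancel₀ ha,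
      add_sub_cancel_right]
  rw [gap, mul_inv, inv_inv]
  field_simp
  ring

/-- The sequence `β` solves `β (n + 1) = Φ⁻¹ (β n)`, where `Φ t = μ n - 1 / t` is the Möbius map
with coefficient `μ n`; the index `n` counts steps taken backwards. With `0⁻¹ = 0`, this has the
intended meaning only where `μ n ≠ β n`. -/
def IsBackwardOrbit {𝕜 : Type*} [Field 𝕜] (μ β : ℕ → 𝕜) : Prop :=
  ∀ n, β (n + 1) = (μ n - β n)⁻¹

namespace IsBackwardOrbit

variable {𝕜 : Type*} [Field 𝕜] {α β μ : ℕ → 𝕜}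

theorem coeff_sub_eq (hα : IsBackwardOrbit μ α) (β : ℕ → 𝕜) (n : ℕ) :
    μ n - β n = α n - β n + (α (n + 1))⁻¹ := by
  rw [hα n, inv_inv]
  ring

theorem inv_sub_succ (hα : IsBackwardOrbit μ α) (hβ : IsBackwardOrbit μ β) {n : ℕ}
    (hα₀ : α (n + 1) ≠ 0) (hne : α n - β n ≠ 0) (hden : μ n - β n ≠ 0) :
    (α (n + 1) - β (n + 1))⁻¹ = (α (n + 1))⁻¹ ^ 2 * (α n - β n)⁻¹ + (α (n + 1))⁻¹ := by
  rw [hα.coeff_sub_eq β] at hden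
  rw [hβ n, hα.coeff_sub_eq β]
  exact inv_sub_inv_add_inv hα₀ hne hden

variable [LinearOrder 𝕜] [IsStrictOrderedRing 𝕜]

theorem lt (hα : IsBackwardOrbit μ α) (hβ : IsBackwardOrbit μ β) (hα₀ : ∀ n, 0 < α n)
    (h₀ : β 0 < α 0) (n : ℕ) : β n < α n := by
  induction n with
  | zero => exact h₀
  | succ n ih =>
    rw [hβ n, hα.coeff_sub_eq β]
    exact inv_lt_of_inv_lt₀ (hα₀ _) (lt_add_of_pos_left _ (sub_pos.2 ih))

theorem coeff_sub_pos (hα : IsBackwardOrbit μ α) (hβ : IsBackwardOrbit μ β) (hα₀ : ∀ n, 0 < α n)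
    (h₀ : β 0 < α 0) (n : ℕ) : 0 < μ n - β n := by
  rw [hα.coeff_sub_eq β]
  exact add_pos (sub_pos.2 (hα.lt hβ hα₀ h₀ n)) (inv_pos.2 (hα₀ _))

theorem tendsto_inv_sub_atTop [Archimedean 𝕜] (hα : IsBackwardOrbit μ α)
    (hβ : IsBackwardOrbit μ β) (hα₀ : ∀ n, 0 < α n) (hα₁ : ∀ a > 1, ∀ᶠ n in atTop, α n < a)
    (h₀ : β 0 < α 0) : Tendsto (fun n => (α n - β n)⁻¹) atTop atTop := by
  have lt_inv (r : 𝕜) (hr : r < 1) : ∀ᶠ n in atTop, r < (α (n + 1))⁻¹ :=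
    (tendsto_add_atTop_nat 1).eventually
      (eventually_lt_inv_of_eventually_lt (Eventually.of_forall hα₀) hα₁ hr)
  have lt_inv_sq (r : 𝕜) (hr : r < 1) : ∀ᶠ n in atTop, r < (α (n + 1))⁻¹ ^ 2 := by
    filter_upwards [lt_inv ((1 + r) / 2) (by linarith)] with n hn
    calc r < 2 * (α (n + 1))⁻¹ - 1 := by linarith
      _ ≤ (α (n + 1))⁻¹ ^ 2 := by linarith [sq_nonneg ((α (n + 1))⁻¹ - 1)]
  have hgap (n : ℕ) : 0 < α n - β n := sub_pos.2 (hα.lt hβ hα₀ h₀ n)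
  have hrec (n : ℕ) := hα.inv_sub_succ hβ (hα₀ (n + 1)).ne' (hgap n).ne'
    (hα.coeff_sub_pos hβ hα₀ h₀ n).ne'
  exact tendsto_atTop_of_mul_add_le one_half_pos
    (Eventually.of_forall fun n => (inv_pos.2 (hgap n)).le) lt_inv_sq
    ((lt_inv _ one_half_lt_one).mono fun _ => le_of_lt)
    (Eventually.of_forall fun n => (hrec n).ge)

end IsBackwardOrbit

theorem backward_orbit_derivatives_tendsto_one_general {𝕜 : Type*} [Field 𝕜] [LinearOrder 𝕜]
    [IsStrictOrderedRing 𝕜] [Archimedean 𝕜] [TopologicalSpace 𝕜] [OrderTopology 𝕜]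
    (α β μ : ℕ → 𝕜)
    (hαpos : ∀ n, 0 < α n)
    (hαlim : ∀ a > 1, ∀ᶠ n in atTop, α n < a)
    (hμ : ∀ n, μ n = α n + 1 / α (n + 1))
    (hβ0 : 0 < β 0 ∧ β 0 < α 0)
    (hβ : ∀ n, β (n + 1) = 1 / (μ n - β n)) :
    (∀ n, 0 < β n ∧ β n < α n) ∧ (∀ n, 0 < μ n - β n) ∧
      Tendsto (fun n => α n - β n) atTop (𝓝 0) := by
  have hα_orbit : IsBackwardOrbit μ α := fun n => by
    rw [hμ, add_sub_cancel_left, one_div, inv_inv]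
  have hβ_orbit : IsBackwardOrbit μ β := fun n => (hβ n).trans (one_div _)
  have hden := hα_orbit.coeff_sub_pos hβ_orbit hαpos hβ0.2
  have hβ_pos : ∀ n, 0 < β n
    | 0 => hβ0.1
    | n + 1 => hβ n ▸ one_div_pos.2 (hden n)
  refine ⟨fun n => ⟨hβ_pos n, hα_orbit.lt hβ_orbit hαpos hβ0.2 n⟩, hden, ?_⟩
  have hdiv := hα_orbit.tendsto_inv_sub_atTop hβ_orbit hαpos hαlim hβ0.2
  simpa only [Pi.inv_def, inv_inv] using hdiv.inv_tendsto_atTop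

/-- Lemma 2 of the paper (backward-orbit analogue of Lemma 1). If `α n > 0`, `α n → 1`,
`μ n = α n + 1/α (n+1)`, `0 < β 0 < α 0` and `β (n+1) = 1/(μ n − β n)`, then
`0 < β n < α n` for all `n` (in particular `μ n − β n > 0`) and `β n → 1`. -/
theorem backward_orbit_derivatives_tendsto_one (α β μ : ℕ → ℝ)
    (hαpos : ∀ n, 0 < α n)
    (hαlim : Tendsto α atTop (𝓝 1))
    (hμ : ∀ n, μ n = α n + 1 / α (n + 1))
    (hβ0 : 0 < β 0 ∧ β 0 < α 0)
    (hβ : ∀ n, β (n + 1) = 1 / (μ n - β n)) :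
    (∀ n, 0 < β n ∧ β n < α n) ∧ (∀ n, 0 < μ n - β n) ∧ Tendsto β atTop (𝓝 1) := by
  obtain ⟨hbounds, hden, hgap⟩ := backward_orbit_derivatives_tendsto_one_general α β μ hαpos
    (fun _ ha => hαlim.eventually_lt_const ha) hμ hβ0 hβ
  exact ⟨hbounds, hden, by simpa only [sub_sub_cancel, sub_zero] using hαlim.sub hgap⟩
end

section
/- Let g be an orientation-preserving C¹ diffeomorphism of the circle 𝕋 = ℝ/ℤ with irrational rotation number whose unique minimal set is a Cantor set K, with g'(θ) = 1 for every θ ∈ K, and such that for every ε > 0 all but finitely many connected components I of 𝕋 ∖ K satisfy sup_{t ∈ I} |g'(t) − 1| < ε. Let x₀ ∈ 𝕋 ∖ K, set x_k = g^k(x₀) for k ∈ ℤ, and let I_k = (a_k, b_k) be the connected component of 𝕋 ∖ K containing x_k. Let (β_k^L)_{k∈ℤ} and (β_k^R)_{k∈ℤ} be positive real numbers with β_k^L → 1 and β_k^R → 1 as |k| → ∞. Then there exists an orientation-preserving homeomorphism h of 𝕋 such that: (i) h = g on K and h(x_k) = g(x_k) = x_{k+1} for all k ∈ ℤ; (ii)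 the restrictions of h to each half-interval (a_k, x_k] and [x_k, b_k) are C¹; (iii) h has left derivative β_k^L and right derivative β_k^R at each x_k; (iv) h is differentiable at every point of K with derivative 1, and h and h⁻¹ are C¹ at every point of 𝕋 except the points of the orbit (x_k)_{k∈ℤ}. -/
open Filter Topology Set

open scoped NNReal

/-!
On each half `(a_k, x_k]`, `[x_k, b_k)` of a gap add to `g` a `C¹` function which vanishes to
first order at the endpoint of the gap, vanishes at `x_k`, and gives the sum a positive
derivative with the prescribed value at `x_k`. If `C` bounds the distances to `1` of `g'` on the
gap and of the prescribed derivatives, this function can be chosen with Lipschitz constant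
`O(C)`, so the Lipschitz constants tend to `0` along the gaps. Since the gaps are disjoint, the
sum of all these functions is, near any point off the gaps, a finite sum of functions with
strict derivative `0` plus a function with small Lipschitz constant; hence it has strict
derivative `0` there, and the modified map `h` has strict derivative `g'`. Finally `h` has a
positive right derivative everywhere, so it is strictly increasing, and its inverse is strictly
differentiable off the images of the `x_k`.
-/

section Profile

/-- A polynomial density on `[0, 1]` going from `α` at `0` to `β` at `1` and staying close to `c`
on most of the interval when `m` is large. -/
def edgeProfile (c α β : ℝ) (m : ℕ) (s : ℝ) : ℝ :=
  c * (1 - (1 - s) ^ (m + 2) - s ^ (m + 2)) + α * (1 - s) ^ (m + 2) + β * s ^ (m + 2)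

variable {c α β : ℝ} {m : ℕ}

lemma edgeProfile_zero : edgeProfile c α β m 0 = α := by simp [edgeProfile]

lemma edgeProfile_one : edgeProfile c α β m 1 = β := by simp [edgeProfile]

lemma continuous_edgeProfile : Continuous (edgeProfile c α β m) := by
  unfold edgeProfile
  fun_prop

lemma edgeProfile_mem_of_convex {S : Set ℝ} (hS : Convex ℝ S) (hc : c ∈ S) (hα : α ∈ S)
    (hβ : β ∈ S) {s : ℝ} (hs : s ∈ Icc 0 1) : edgeProfile c α β m s ∈ S := by
  have left_nonneg : 0 ≤ (1 - s) ^ (m + 2) := pow_nonneg (sub_nonneg.2 hs.2) _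
  have right_nonneg : 0 ≤ s ^ (m + 2) := pow_nonneg hs.1 _
  have left_le : (1 - s) ^ (m + 2) ≤ 1 - s :=
    pow_le_of_le_one (sub_nonneg.2 hs.2) (sub_le_self 1 hs.1) (by omega)
  have right_le : s ^ (m + 2) ≤ s := pow_le_of_le_one hs.1 hs.2 (by omega)
  have hmem := hS.sum_mem (t := Finset.univ)
    (w := ![1 - (1 - s) ^ (m + 2) - s ^ (m + 2), (1 - s) ^ (m + 2), s ^ (m + 2)])
    (z := ![c, α, β])
    (by simp only [Finset.mem_univ, forall_const, Fin.forall_fin_succ]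
        simpa [left_nonneg, right_nonneg] using by linarith)
    (by simp [Fin.sum_univ_succ])
    (by simp [Fin.forall_fin_succ, hc, hα, hβ])
  convert hmem using 1
  simp only [edgeProfile, Fin.sum_univ_three, Matrix.cons_val, smul_eq_mul]
  ring

lemma integral_edgeProfile :
    ∫ s in (0 : ℝ)..1, edgeProfile c α β m s = (c * (m + 1) + α + β) / (m + 3) := by
  have hright : ∫ s in (0 : ℝ)..1, s ^ (m + 2) = 1 / (m + 3) := by
    rw [integral_pow]
    norm_num [add_assoc]
  have hleft : ∫ s in (0 : ℝ)..1, (1 - s) ^ (m + 2) = 1 / (m + 3) := by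
    rw [intervalIntegral.integral_comp_sub_left (fun s : ℝ => s ^ (m + 2)), sub_self, sub_zero,
      hright]
  have hsplit : edgeProfile c α β m =
      fun s => c + ((α - c) * (1 - s) ^ (m + 2) + (β - c) * s ^ (m + 2)) := by
    funext s
    simp only [edgeProfile]
    ring
  have hm : (m : ℝ) + 3 ≠ 0 := by positivity
  rw [hsplit, intervalIntegral.integral_add, intervalIntegral.integral_add,
    intervalIntegral.integral_const_mul, intervalIntegral.integral_const_mul, hleft, hright,
    intervalIntegral.integral_const]
  · simp only [sub_zero, smul_eq_mul]
    field_simp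
    ring
  all_goals exact Continuous.intervalIntegrable (by fun_prop) _ _

lemma exists_density_unitInterval {r : ℝ} (hα : 0 < α) (hβ : 0 < β) (hr : 0 < r) :
    ∃ p : ℝ → ℝ, Continuous p ∧ p 0 = α ∧ p 1 = β ∧ ∫ s in (0 : ℝ)..1, p s = r ∧
      ∀ s ∈ Icc (0 : ℝ) 1, 0 < p s ∧ |p s - r| ≤ |α - r| + |β - r| := by
  obtain ⟨m, hm⟩ := exists_nat_gt ((α + β) / r)
  rw [div_lt_iff₀ hr] at hm
  -- `c` is the height of the plateau for which the mean of the profile is `r`.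
  let c := ((m + 3) * r - α - β) / (m + 1)
  have hc_pos : 0 < c := div_pos (by linarith) (by positivity)
  have hc_mul : c * (m + 1) = (m + 3) * r - α - β := div_mul_cancel₀ _ (by positivity)
  have hc_dist : |c - r| ≤ |α - r| + |β - r| :=
    calc |c - r| ≤ |c - r| * (m + 1) := le_mul_of_one_le_right (abs_nonneg _) (by simp)
      _ = |(c - r) * (m + 1)| := by rw [abs_mul, abs_of_pos (show (0 : ℝ) < m + 1 by positivity)]
      _ = |(r - α) + (r - β)| := by congr 1; linear_combination hc_mul
      _ ≤ |α - r| + |β - r| := by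
        rw [abs_sub_comm α, abs_sub_comm β]
        exact abs_add_le _ _
  refine ⟨edgeProfile c α β m, continuous_edgeProfile, edgeProfile_zero, edgeProfile_one, ?_,
    fun s hs => ⟨edgeProfile_mem_of_convex (convex_Ioi 0) hc_pos hα hβ hs, ?_⟩⟩
  · rw [integral_edgeProfile, hc_mul]
    field_simp
    ring
  · have hball : ∀ y, |y - r| ≤ |α - r| + |β - r| →
        y ∈ Metric.closedBall r (|α - r| + |β - r|) := fun y hy => hy
    exact edgeProfile_mem_of_convex (convex_closedBall r _) (hball c hc_dist)
      (hball α (le_add_of_nonneg_right (abs_nonneg _)))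
      (hball β (le_add_of_nonneg_left (abs_nonneg _))) hs

end Profile

section Interpolation

lemma exists_density {u v α β r : ℝ} (huv : u < v) (hα : 0 < α) (hβ : 0 < β) (hr : 0 < r) :
    ∃ p : ℝ → ℝ, Continuous p ∧ p u = α ∧ p v = β ∧ ∫ t in u..v, p t = (v - u) * r ∧
      ∀ t ∈ Icc u v, 0 < p t ∧ |p t - r| ≤ |α - r| + |β - r| := by
  obtain ⟨p, hp, hp0, hp1, hp_int, hp_bound⟩ := exists_density_unitInterval hα hβ hr
  have hlen : 0 < v - u := sub_pos.2 huv
  refine ⟨fun t => p ((t - u) / (v - u)), by fun_prop, ?_, ?_, ?_, fun t ht => hp_bound _ ⟨?_, ?_⟩⟩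
  · simpa only [sub_self, zero_div] using hp0
  · simpa only [div_self hlen.ne'] using hp1
  · simp only [sub_div]
    rw [intervalIntegral.integral_comp_div_sub p hlen.ne', sub_self, ← sub_div, div_self hlen.ne',
      hp_int, smul_eq_mul]
  · exact div_nonneg (sub_nonneg.2 ht.1) hlen.le
  · exact (div_le_one hlen).2 (sub_le_sub_right ht.2 u)

lemma exists_density_perturbation {w : ℝ → ℝ} (hw : Continuous w) (hw_pos : ∀ t, 0 < w t)
    {u v α β : ℝ} (huv : u < v) (hα : 0 < α) (hβ : 0 < β) :
    ∃ q : ℝ → ℝ, Continuous q ∧ (∀ t ≤ u, q t = α - w u) ∧ (∀ t, v ≤ t → q t = β - w v) ∧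
      ∫ t in u..v, q t = 0 ∧ (∀ t ∈ Icc u v, 0 < w t + q t) ∧
      ∀ l C : ℝ, (∀ t ∈ Icc u v, |w t - l| ≤ C) → |α - l| ≤ C → |β - l| ≤ C →
        ∀ t, |q t| ≤ 6 * C := by
  obtain ⟨z, hz, hz_mean⟩ := exists_eq_interval_average huv.ne hw.continuousOn
  rw [uIoo_of_lt huv] at hz
  have hw_int : ∫ t in u..v, w t = (v - u) * w z := by
    rw [hz_mean, interval_average_eq, smul_eq_mul, mul_inv_cancel_left₀ (sub_pos.2 huv).ne']
  obtain ⟨p, hp, hpu, hpv, hp_int, hp_bound⟩ := exists_density huv hα hβ (hw_pos z)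
  let q : ℝ → ℝ := IccExtend huv.le fun s : Icc u v => p s - w s
  have hq : ∀ t ∈ Icc u v, q t = p t - w t := fun t ht => IccExtend_of_mem huv.le _ ht
  refine ⟨q, Continuous.Icc_extend' (by fun_prop), fun t ht => ?_, fun t ht => ?_, ?_,
    fun t ht => ?_, fun l C hwl hαl hβl t => ?_⟩
  · rw [← hpu]
    exact IccExtend_of_le_left huv.le _ ht
  · rw [← hpv]
    exact IccExtend_of_right_le huv.le _ ht
  · rw [intervalIntegral.integral_congr (g := fun t => p t - w t)
      (by rwa [uIcc_of_le huv.le]), intervalIntegral.integral_sub (hp.intervalIntegrable _ _)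
      (hw.intervalIntegrable _ _), hp_int, hw_int, sub_self]
  · rw [hq t ht, add_sub_cancel]
    exact (hp_bound t ht).1
  · obtain ⟨s, hs, hts⟩ : ∃ s ∈ Icc u v, q t = p s - w s :=
      ⟨projIcc u v huv.le t, (projIcc u v huv.le t).2, rfl⟩
    have hzl : |w z - l| ≤ C := hwl z (Ioo_subset_Icc_self hz)
    rw [hts]
    calc |p s - w s| ≤ |p s - w z| + |w z - w s| := abs_sub_le _ _ _
      _ ≤ |α - w z| + |β - w z| + |w z - w s| := by gcongr; exact (hp_bound s hs).2
      _ ≤ (|α - l| + |l - w z|) + (|β - l| + |l - w z|) + (|w z - l| + |l - w s|) := by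
        gcongr <;> exact abs_sub_le _ _ _
      _ ≤ (C + C) + (C + C) + (C + C) := by
        rw [abs_sub_comm l, abs_sub_comm l]
        have hsl := hwl s hs
        gcongr
      _ = 6 * C := by ring

lemma exists_contDiff_perturbation {g : ℝ → ℝ} (hg : ContDiff ℝ 1 g) (hg_pos : ∀ t, 0 < deriv g t)
    {u v α β : ℝ} (huv : u < v) (hα : 0 < α) (hβ : 0 < β) :
    ∃ Q : ℝ → ℝ, ContDiff ℝ 1 Q ∧ Q u = 0 ∧ Q v = 0 ∧
      (∀ t ≤ u, deriv Q t = α - deriv g u) ∧ (∀ t, v ≤ t → deriv Q t = β - deriv g v) ∧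
      (∀ t ∈ Icc u v, 0 < deriv g t + deriv Q t) ∧
      ∀ (l : ℝ) (C : ℝ≥0), (∀ t ∈ Icc u v, |deriv g t - l| ≤ C) → |α - l| ≤ C → |β - l| ≤ C →
        LipschitzWith (6 * C) Q := by
  obtain ⟨q, hq, hqu, hqv, hq_int, hq_pos, hq_bound⟩ :=
    exists_density_perturbation (hg.continuous_deriv le_rfl) hg_pos huv hα hβ
  let Q : ℝ → ℝ := fun t => ∫ s in u..t, q s
  have hQ_deriv : ∀ t, HasDerivAt Q (q t) t := fun t =>
    (hq.integral_hasStrictDerivAt u t).hasDerivAt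
  have hQ_diff : Differentiable ℝ Q := fun t => (hQ_deriv t).differentiableAt
  have hQ : deriv Q = q := funext fun t => (hQ_deriv t).deriv
  refine ⟨Q, contDiff_one_iff_deriv.2 ⟨hQ_diff, hQ ▸ hq⟩, intervalIntegral.integral_same, hq_int,
    hQ ▸ hqu, hQ ▸ hqv, hQ ▸ hq_pos, fun l C hgl hαl hβl => ?_⟩
  refine lipschitzWith_of_nnnorm_deriv_le hQ_diff fun t => ?_
  rw [hQ, ← NNReal.coe_le_coe, coe_nnnorm, Real.norm_eq_abs]
  exact_mod_cast hq_bound l C hgl hαl hβl t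

end Interpolation

section Correction

/-- `L` is a `C¹` correction to `g` along one side `inner` of the gap point `x`: it vanishes to
first order on `outer` and at `x` itself, and `g + L` has positive derivative on `inner`, with
derivative `β` at `x`. -/
structure IsCorrection (g : ℝ → ℝ) (outer inner : Set ℝ) (x β : ℝ) (L : ℝ → ℝ) : Prop where
  contDiff : ContDiff ℝ 1 L
  eq_zero : ∀ t ∈ outer, L t = 0
  deriv_eq_zero : ∀ t ∈ outer, deriv L t = 0
  apply_eq_zero : L x = 0
  deriv_add_deriv : deriv g x + deriv L x = β
  deriv_pos : ∀ t ∈ inner, 0 < deriv g t + deriv L t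

/-- The function equal to `L` left of `x` and to `R` right of `x`, for `L` and `R` vanishing
at `x`. Written as a sum, it inherits Lipschitz bounds from `L` and `R`. -/
def glue (x : ℝ) (L R : ℝ → ℝ) (t : ℝ) : ℝ := L (min t x) + R (max t x)

variable {g L R : ℝ → ℝ} {a b x βL βR β t : ℝ}

lemma eqOn_zero_of_deriv_eq_zero {s : Set ℝ} (hs : Convex ℝ s) (hL : ContDiff ℝ 1 L)
    (hL' : ∀ t ∈ s, deriv L t = 0) (ha : a ∈ s) (hLa : L a = 0) : ∀ t ∈ s, L t = 0 := by
  intro t ht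
  have hbound := hs.norm_image_sub_le_of_norm_deriv_le
    (fun t _ => hL.differentiable one_ne_zero t) (fun t ht => (norm_eq_zero.2 (hL' t ht)).le) ha ht
  rwa [zero_mul, norm_le_zero_iff, hLa, sub_zero] at hbound

lemma exists_isCorrection_left (hg : ContDiff ℝ 1 g) (hg_pos : ∀ t, 0 < deriv g t) (hax : a < x)
    (hβ : 0 < β) :
    ∃ L, IsCorrection g (Iic a) (Icc a x) x β L ∧
      ∀ (l : ℝ) (C : ℝ≥0), (∀ t ∈ Icc a x, |deriv g t - l| ≤ C) → |β - l| ≤ C →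
        LipschitzWith (6 * C) L := by
  obtain ⟨L, hL, hLa, hLx, hLa', hLx', hL_pos, hL_lip⟩ :=
    exists_contDiff_perturbation hg hg_pos hax (hg_pos a) hβ
  have hL' : ∀ t ∈ Iic a, deriv L t = 0 := fun t ht => (hLa' t ht).trans (sub_self _)
  exact ⟨L, ⟨hL, eqOn_zero_of_deriv_eq_zero (convex_Iic a) hL hL' self_mem_Iic hLa, hL', hLx,
    by rw [hLx' x le_rfl, add_sub_cancel], hL_pos⟩,
    fun l C hgl hβl => hL_lip l C hgl (hgl a (left_mem_Icc.2 hax.le)) hβl⟩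

lemma exists_isCorrection_right (hg : ContDiff ℝ 1 g) (hg_pos : ∀ t, 0 < deriv g t) (hxb : x < b)
    (hβ : 0 < β) :
    ∃ R, IsCorrection g (Ici b) (Icc x b) x β R ∧
      ∀ (l : ℝ) (C : ℝ≥0), (∀ t ∈ Icc x b, |deriv g t - l| ≤ C) → |β - l| ≤ C →
        LipschitzWith (6 * C) R := by
  obtain ⟨R, hR, hRx, hRb, hRx', hRb', hR_pos, hR_lip⟩ :=
    exists_contDiff_perturbation hg hg_pos hxb hβ (hg_pos b)
  have hR' : ∀ t ∈ Ici b, deriv R t = 0 := fun t ht => (hRb' t ht).trans (sub_self _)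
  exact ⟨R, ⟨hR, eqOn_zero_of_deriv_eq_zero (convex_Ici b) hR hR' self_mem_Ici hRb, hR', hRx,
    by rw [hRx' x le_rfl, add_sub_cancel], hR_pos⟩,
    fun l C hgl hβl => hR_lip l C hgl hβl (hgl b (right_mem_Icc.2 hxb.le))⟩

lemma lipschitzWith_glue {C D : ℝ≥0} (hL : LipschitzWith C L) (hR : LipschitzWith D R) :
    LipschitzWith (C + D) (glue x L R) := by
  have hsum := (hL.comp (LipschitzWith.id.min_const x)).add
    (hR.comp (LipschitzWith.id.max_const x))
  rwa [mul_one, mul_one] at hsum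

lemma glue_sub_const (c : ℝ) :
    glue (x + c) (fun t => L (t - c)) (fun t => R (t - c)) t = glue x L R (t - c) := by
  simp only [glue, ← min_sub_sub_right, ← max_sub_sub_right, add_sub_cancel_right]

lemma glue_of_le (hR : R x = 0) (ht : t ≤ x) : glue x L R t = L t := by
  rw [glue, min_eq_left ht, max_eq_right ht, hR, add_zero]

lemma glue_of_ge (hL : L x = 0) (ht : x ≤ t) : glue x L R t = R t := by
  rw [glue, min_eq_right ht, max_eq_left ht, hL, zero_add]

variable (hL : IsCorrection g (Iic a) (Icc a x) x βL L)
  (hR : IsCorrection g (Ici b) (Icc x b) x βR R)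

include hL hR

lemma glue_eq_zero (hx : x ∈ Ioo a b) (ht : t ∉ Ioo a b) : glue x L R t = 0 := by
  rcases le_or_gt t a with hta | hat
  · rw [glue_of_le hR.apply_eq_zero (hta.trans hx.1.le), hL.eq_zero t hta]
  · have hbt : b ≤ t := not_lt.1 fun htb => ht ⟨hat, htb⟩
    rw [glue_of_ge hL.apply_eq_zero (hx.2.le.trans hbt), hR.eq_zero t hbt]

lemma hasStrictDerivAt_glue_zero (hx : x ∈ Ioo a b) (ht : t ∉ Ioo a b) :
    HasStrictDerivAt (glue x L R) 0 t := by
  rcases le_or_gt t a with hta | hat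
  · rw [← hL.deriv_eq_zero t hta]
    refine (hL.contDiff.contDiffAt.hasStrictDerivAt one_ne_zero).congr_of_eventuallyEq ?_
    filter_upwards [Iio_mem_nhds (hta.trans_lt hx.1)] with s hs
    exact (glue_of_le hR.apply_eq_zero (le_of_lt hs)).symm
  · have hbt : b ≤ t := not_lt.1 fun htb => ht ⟨hat, htb⟩
    rw [← hR.deriv_eq_zero t hbt]
    refine (hR.contDiff.contDiffAt.hasStrictDerivAt one_ne_zero).congr_of_eventuallyEq ?_
    filter_upwards [Ioi_mem_nhds (hx.2.trans_le hbt)] with s hs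
    exact (glue_of_ge hL.apply_eq_zero (le_of_lt hs)).symm

end Correction

section DisjointSum

lemma finsum_eq_of_unique_ne_zero {ι M : Type*} [AddCommMonoid M] {f : ι → M}
    (hf : ∀ i j, f i ≠ 0 → f j ≠ 0 → i = j) {i : ι} (hi : f i ≠ 0) : ∑ᶠ j, f j = f i :=
  finsum_eq_single f i fun j hj => by_contra fun hfj => hj (hf j i hfj hi)

lemma support_finite_of_unique_ne_zero {ι M : Type*} [Zero M] {f : ι → M}
    (hf : ∀ i j, f i ≠ 0 → f j ≠ 0 → i = j) : (Function.support f).Finite :=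
  Set.Subsingleton.finite fun i hi j hj => hf i j hi hj

lemma finsum_eq_sum_add_finsum_notMem {ι M : Type*} [AddCommMonoid M] {f : ι → M}
    (hf : (Function.support f).Finite) (S : Finset ι) :
    ∑ᶠ i, f i = ∑ i ∈ S, f i + ∑ᶠ i : {i // i ∉ S}, f i := by
  rw [finsum_subtype_eq_finsum_cond, ← finsum_mem_coe_finset, ← finsum_mem_univ,
    ← union_compl_self (S : Set ι),
    finsum_mem_union' disjoint_compl_right (hf.inter_of_right _) (hf.inter_of_right _)]
  simp only [mem_compl_iff, SetLike.mem_coe]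

lemma lipschitzOnWith_finsum_of_disjoint {ι E F : Type*} [PseudoMetricSpace E]
    [SeminormedAddCommGroup F] {B : ι → E → F} {U : Set E} {C : ℝ≥0}
    (hB : ∀ i j t, B i t ≠ 0 → B j t ≠ 0 → i = j) (hlip : ∀ i, LipschitzOnWith C (B i) U) :
    LipschitzOnWith (2 * C) (fun t => ∑ᶠ i, B i t) U := by
  -- A point where `B i` vanishes bounds `B i` nearby; a point where it does not determines the sum.
  have norm_le : ∀ s ∈ U, ∀ t ∈ U, (∀ i, B i t ≠ 0 → B i s = 0) →
      ‖∑ᶠ i, B i t‖ ≤ C * dist s t := by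
    intro s hs t ht hst
    by_cases hzero : ∀ i, B i t = 0
    · simp only [hzero, finsum_zero, norm_zero]
      positivity
    · obtain ⟨i, hi⟩ := not_forall.1 hzero
      rw [finsum_eq_of_unique_ne_zero (hB · · t) hi]
      simpa [hst i hi, dist_zero_left] using (hlip i).dist_le_mul s hs t ht
  refine LipschitzOnWith.of_dist_le_mul fun s hs t ht => ?_
  push_cast
  by_cases hcommon : ∃ i, B i s ≠ 0 ∧ B i t ≠ 0
  · obtain ⟨i, his, hit⟩ := hcommon
    rw [finsum_eq_of_unique_ne_zero (hB · · s) his, finsum_eq_of_unique_ne_zero (hB · · t) hit]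
    linarith [(hlip i).dist_le_mul s hs t ht, dist_nonneg (x := B i s) (y := B i t)]
  · simp only [not_exists, not_and, not_not] at hcommon
    have hs_le := norm_le t ht s hs hcommon
    have ht_le := norm_le s hs t ht fun i hit => by_contra fun his => hit (hcommon i his)
    rw [dist_comm] at hs_le
    linarith [dist_le_norm_add_norm (∑ᶠ i, B i s) (∑ᶠ i, B i t)]

variable {ι 𝕜 E F : Type*} [NontriviallyNormedField 𝕜] [NormedAddCommGroup E] [NormedSpace 𝕜 E]
  [NormedAddCommGroup F] [NormedSpace 𝕜 F]

lemma hasStrictFDerivAt_zero_of_lipschitz {f : E → F} {τ : E}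
    (hf : ∀ ε : ℝ≥0, 0 < ε → ∃ f₁ f₂ : E → F, f = f₁ + f₂ ∧
      HasStrictFDerivAt f₁ (0 : E →L[𝕜] F) τ ∧ ∃ U ∈ 𝓝 τ, LipschitzOnWith ε f₂ U) :
    HasStrictFDerivAt f (0 : E →L[𝕜] F) τ := by
  rw [hasStrictFDerivAt_iff_isLittleO, Asymptotics.isLittleO_iff]
  intro c hc
  lift c to ℝ≥0 using hc.le
  obtain ⟨f₁, f₂, rfl, hf₁, U, hU, hf₂⟩ := hf (c / 2) (half_pos (NNReal.coe_pos.1 hc))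
  rw [hasStrictFDerivAt_iff_isLittleO, Asymptotics.isLittleO_iff] at hf₁
  filter_upwards [hf₁ (half_pos hc), prod_mem_nhds hU hU] with p hp₁ hpU
  have hp₂ := hf₂.dist_le_mul p.1 hpU.1 p.2 hpU.2
  simp only [_root_.zero_apply, sub_zero, Pi.add_apply, dist_eq_norm] at hp₁ hp₂ ⊢
  push_cast at hp₂
  calc ‖f₁ p.1 + f₂ p.1 - (f₁ p.2 + f₂ p.2)‖
      ≤ ‖f₁ p.1 - f₁ p.2‖ + ‖f₂ p.1 - f₂ p.2‖ := by
        rw [add_sub_add_comm]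
        exact norm_add_le _ _
    _ ≤ c / 2 * ‖p.1 - p.2‖ + c / 2 * ‖p.1 - p.2‖ := add_le_add hp₁ hp₂
    _ = c * ‖p.1 - p.2‖ := by ring

lemma hasStrictFDerivAt_finsum_zero {B : ι → E → F} {τ : E}
    (hB : ∀ i j t, B i t ≠ 0 → B j t ≠ 0 → i = j)
    (hderiv : ∀ i, HasStrictFDerivAt (B i) (0 : E →L[𝕜] F) τ)
    (hlip : ∀ ε : ℝ≥0, 0 < ε → ∃ U ∈ 𝓝 τ, ∀ᶠ i in cofinite, LipschitzOnWith ε (B i) U) :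
    HasStrictFDerivAt (fun t => ∑ᶠ i, B i t) (0 : E →L[𝕜] F) τ := by
  refine hasStrictFDerivAt_zero_of_lipschitz fun ε hε => ?_
  obtain ⟨U, hU, hfin⟩ := hlip (ε / 2) (half_pos hε)
  let S := (eventually_cofinite.1 hfin).toFinset
  refine ⟨fun t => ∑ i ∈ S, B i t, fun t => ∑ᶠ i : {i // i ∉ S}, B i t, ?_, ?_, U, hU, ?_⟩
  · funext t
    exact finsum_eq_sum_add_finsum_notMem (support_finite_of_unique_ne_zero (hB · · t)) S
  · simpa only [Finset.sum_const_zero] using HasStrictFDerivAt.fun_sum fun i _ => hderiv i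
  · rw [← mul_div_cancel₀ (G₀ := ℝ≥0) ε two_ne_zero]
    refine lipschitzOnWith_finsum_of_disjoint (fun i j t hi hj => Subtype.ext (hB i j t hi hj))
      fun i => ?_
    have hi := i.2
    rwa [Finite.mem_toFinset, mem_ofPred_eq, not_not] at hi

end DisjointSum

section RealFunctions

variable {h : ℝ → ℝ}

lemma strictMono_of_hasDerivWithinAt_Ici_pos (hc : Continuous h)
    (hd : ∀ t, ∃ d, 0 < d ∧ HasDerivWithinAt h d (Ici t) t) : StrictMono h := by
  choose d hd_pos hd using hd
  have hmono : Monotone h := by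
    intro s t hst
    have hle := image_le_of_deriv_right_lt_deriv_boundary (f := fun t => -h t) (a := s) (b := t)
      (B := fun _ => -h s) hc.neg.continuousOn (fun w _ => (hd w).fun_neg) le_rfl
      (fun w => hasDerivAt_const _ _) (fun w _ _ => neg_neg_of_pos (hd_pos w))
      (right_mem_Icc.2 hst)
    exact neg_le_neg_iff.1 hle
  intro s t hst
  refine (hmono hst.le).lt_of_ne fun heq => (hd_pos s).ne ?_
  have hconst : HasDerivWithinAt h 0 (Icc s t) s :=
    (hasDerivWithinAt_const s (Icc s t) (h s)).congr
      (fun w hw => ((hmono hw.2).trans heq.ge).antisymm (hmono hw.1)) rfl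
  exact (uniqueDiffOn_Icc hst s (left_mem_Icc.2 hst.le)).eq_deriv _ hconst
    ((hd s).mono Icc_subset_Ici_self)

lemma hasStrictDerivAt_invFun (hmono : StrictMono h) (hsurj : Function.Surjective h) {s d : ℝ}
    (hd : HasStrictDerivAt h d (Function.invFun h s)) (hd0 : d ≠ 0) :
    HasStrictDerivAt (Function.invFun h) d⁻¹ s := by
  have hright : Function.RightInverse (Function.invFun h) h :=
    Function.rightInverse_invFun hsurj
  have hinv_mono : Monotone (Function.invFun h) := fun s t hst =>
    hmono.le_iff_le.1 (by rwa [hright s, hright t])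
  have hinv_cont : Continuous (Function.invFun h) :=
    hinv_mono.continuous_of_surjective (Function.invFun_surjective hmono.injective)
  exact hd.of_local_left_inverse hinv_cont.continuousAt hd0 (Eventually.of_forall hright)

end RealFunctions

section GapSystem

/-- Disjoint gaps `(a i, b i)` around points `x i`, together with corrections `L i` and `R i` to
`g` on the two halves of each gap whose sum converges in the Lipschitz sense near every point. -/
structure IsGapSystem {ι : Type*} (g : ℝ → ℝ) (a x b βL βR : ι → ℝ) (L R : ι → ℝ → ℝ) : Prop where
  mem_gap : ∀ i, x i ∈ Ioo (a i) (b i)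
  disjoint : Pairwise (Function.onFun Disjoint fun i => Ioo (a i) (b i))
  left : ∀ i, IsCorrection g (Iic (a i)) (Icc (a i) (x i)) (x i) (βL i) (L i)
  right : ∀ i, IsCorrection g (Ici (b i)) (Icc (x i) (b i)) (x i) (βR i) (R i)
  eventually_lipschitz : ∀ t, ∀ ε : ℝ≥0, 0 < ε →
    ∃ U ∈ 𝓝 t, ∀ᶠ i in cofinite, LipschitzOnWith ε (glue (x i) (L i) (R i)) U

/-- The map `g` modified by all the corrections `L i` left of `x i` and `R i` right of `x i`. -/
noncomputable def modification {ι : Type*} (g : ℝ → ℝ) (x : ι → ℝ) (L R : ι → ℝ → ℝ) (t : ℝ) : ℝ :=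
  g t + ∑ᶠ i, glue (x i) (L i) (R i) t

namespace IsGapSystem

variable {ι : Type*} {g : ℝ → ℝ} {a x b βL βR : ι → ℝ} {L R : ι → ℝ → ℝ} {i : ι} {t : ℝ}
  (hS : IsGapSystem g a x b βL βR L R)

include hS

lemma eq_of_mem_gap {j : ι} (hi : t ∈ Ioo (a i) (b i)) (hj : t ∈ Ioo (a j) (b j)) : i = j :=
  hS.disjoint.eq (not_disjoint_iff.2 ⟨t, hi, hj⟩)

lemma glue_eq_zero (ht : t ∉ Ioo (a i) (b i)) : glue (x i) (L i) (R i) t = 0 :=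
  _root_.glue_eq_zero (hS.left i) (hS.right i) (hS.mem_gap i) ht

lemma mem_gap_of_glue_ne_zero (ht : glue (x i) (L i) (R i) t ≠ 0) : t ∈ Ioo (a i) (b i) :=
  by_contra fun hti => ht (hS.glue_eq_zero hti)

lemma modification_of_notMem (ht : ∀ i, t ∉ Ioo (a i) (b i)) : modification g x L R t = g t := by
  rw [modification, finsum_eq_zero_of_forall_eq_zero fun i => hS.glue_eq_zero (ht i), add_zero]

lemma modification_of_mem (ht : t ∈ Ioo (a i) (b i)) :
    modification g x L R t = g t + glue (x i) (L i) (R i) t := by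
  rw [modification, finsum_eq_single _ i fun j hji =>
    hS.glue_eq_zero fun htj => hji (hS.eq_of_mem_gap htj ht)]

lemma modification_of_mem_Ioc (ht : t ∈ Ioc (a i) (x i)) :
    modification g x L R t = g t + L i t := by
  rw [hS.modification_of_mem ⟨ht.1, ht.2.trans_lt (hS.mem_gap i).2⟩,
    glue_of_le (hS.right i).apply_eq_zero ht.2]

lemma modification_of_mem_Ico (ht : t ∈ Ico (x i) (b i)) :
    modification g x L R t = g t + R i t := by
  rw [hS.modification_of_mem ⟨(hS.mem_gap i).1.trans_le ht.1, ht.2⟩,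
    glue_of_ge (hS.left i).apply_eq_zero ht.1]

lemma modification_apply (i : ι) : modification g x L R (x i) = g (x i) := by
  rw [hS.modification_of_mem_Ioc ⟨(hS.mem_gap i).1, le_rfl⟩, (hS.left i).apply_eq_zero, add_zero]

variable (hg : ContDiff ℝ 1 g)

include hg

lemma hasStrictDerivAt_of_notMem (ht : ∀ i, t ∉ Ioo (a i) (b i)) :
    HasStrictDerivAt (modification g x L R) (deriv g t) t := by
  have hglue : HasStrictDerivAt (fun t => ∑ᶠ i, glue (x i) (L i) (R i) t) 0 t := by
    rw [hasStrictDerivAt_iff_hasStrictFDerivAt, ContinuousLinearMap.toSpanSingleton_zero]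
    refine hasStrictFDerivAt_finsum_zero (fun i j s hi hj => ?_) (fun i => ?_)
      (hS.eventually_lipschitz t)
    · exact hS.eq_of_mem_gap (hS.mem_gap_of_glue_ne_zero hi) (hS.mem_gap_of_glue_ne_zero hj)
    · rw [← ContinuousLinearMap.toSpanSingleton_zero, ← hasStrictDerivAt_iff_hasStrictFDerivAt]
      exact hasStrictDerivAt_glue_zero (hS.left i) (hS.right i) (hS.mem_gap i) (ht i)
  have hadd := (hg.contDiffAt.hasStrictDerivAt one_ne_zero).add hglue
  rwa [add_zero] at hadd

lemma hasStrictDerivAt_of_mem_Ioo_left (ht : t ∈ Ioo (a i) (x i)) :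
    HasStrictDerivAt (modification g x L R) (deriv g t + deriv (L i) t) t := by
  refine ((hg.contDiffAt.hasStrictDerivAt one_ne_zero).add
    ((hS.left i).contDiff.contDiffAt.hasStrictDerivAt one_ne_zero)).congr_of_eventuallyEq ?_
  filter_upwards [Ioo_mem_nhds ht.1 ht.2] with s hs
  exact (hS.modification_of_mem_Ioc ⟨hs.1, hs.2.le⟩).symm

lemma hasStrictDerivAt_of_mem_Ioo_right (ht : t ∈ Ioo (x i) (b i)) :
    HasStrictDerivAt (modification g x L R) (deriv g t + deriv (R i) t) t := by
  refine ((hg.contDiffAt.hasStrictDerivAt one_ne_zero).add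
    ((hS.right i).contDiff.contDiffAt.hasStrictDerivAt one_ne_zero)).congr_of_eventuallyEq ?_
  filter_upwards [Ioo_mem_nhds ht.1 ht.2] with s hs
  exact (hS.modification_of_mem_Ico ⟨hs.1.le, hs.2⟩).symm

lemma hasDerivWithinAt_Iic (ht : t ∈ Ioc (a i) (x i)) :
    HasDerivWithinAt (modification g x L R) (deriv g t + deriv (L i) t) (Iic (x i)) t := by
  refine (((hg.differentiable one_ne_zero t).hasDerivAt.add
    ((hS.left i).contDiff.differentiable one_ne_zero t).hasDerivAt).hasDerivWithinAt
      ).congr_of_eventuallyEq ?_ (hS.modification_of_mem_Ioc ht)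
  filter_upwards [inter_mem_nhdsWithin _ (Ioi_mem_nhds ht.1)] with s hs
  exact hS.modification_of_mem_Ioc ⟨hs.2, hs.1⟩

lemma hasDerivWithinAt_Ici (ht : t ∈ Ico (x i) (b i)) :
    HasDerivWithinAt (modification g x L R) (deriv g t + deriv (R i) t) (Ici (x i)) t := by
  refine (((hg.differentiable one_ne_zero t).hasDerivAt.add
    ((hS.right i).contDiff.differentiable one_ne_zero t).hasDerivAt).hasDerivWithinAt
      ).congr_of_eventuallyEq ?_ (hS.modification_of_mem_Ico ht)
  filter_upwards [inter_mem_nhdsWithin _ (Iio_mem_nhds ht.2)] with s hs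
  exact hS.modification_of_mem_Ico ⟨hs.1, hs.2⟩

lemma hasDerivWithinAt_Iic_self (i : ι) :
    HasDerivWithinAt (modification g x L R) (βL i) (Iic (x i)) (x i) :=
  (hS.left i).deriv_add_deriv ▸ hS.hasDerivWithinAt_Iic hg ⟨(hS.mem_gap i).1, le_rfl⟩

lemma hasDerivWithinAt_Ici_self (i : ι) :
    HasDerivWithinAt (modification g x L R) (βR i) (Ici (x i)) (x i) :=
  (hS.right i).deriv_add_deriv ▸ hS.hasDerivWithinAt_Ici hg ⟨le_rfl, (hS.mem_gap i).2⟩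

lemma exists_continuousOn_deriv_Ioc (i : ι) :
    ∃ d : ℝ → ℝ, ContinuousOn d (Ioc (a i) (x i)) ∧ ∀ t ∈ Ioc (a i) (x i),
      HasDerivWithinAt (modification g x L R) (d t) (Ioc (a i) (x i)) t :=
  ⟨fun t => deriv g t + deriv (L i) t, ((hg.continuous_deriv le_rfl).add
    ((hS.left i).contDiff.continuous_deriv le_rfl)).continuousOn,
    fun _ ht => (hS.hasDerivWithinAt_Iic hg ht).mono Ioc_subset_Iic_self⟩

lemma exists_continuousOn_deriv_Ico (i : ι) :
    ∃ d : ℝ → ℝ, ContinuousOn d (Ico (x i) (b i)) ∧ ∀ t ∈ Ico (x i) (b i),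
      HasDerivWithinAt (modification g x L R) (d t) (Ico (x i) (b i)) t :=
  ⟨fun t => deriv g t + deriv (R i) t, ((hg.continuous_deriv le_rfl).add
    ((hS.right i).contDiff.continuous_deriv le_rfl)).continuousOn,
    fun _ ht => (hS.hasDerivWithinAt_Ici hg ht).mono Ico_subset_Ici_self⟩

variable (hg_pos : ∀ t, 0 < deriv g t)

include hg_pos

lemma exists_pos_hasStrictDerivAt (ht : ∀ i, t ≠ x i) :
    ∃ d, 0 < d ∧ HasStrictDerivAt (modification g x L R) d t := by
  by_cases hgap : ∃ i, t ∈ Ioo (a i) (b i)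
  · obtain ⟨i, hti⟩ := hgap
    rcases (ht i).lt_or_gt with hlt | hgt
    · exact ⟨_, (hS.left i).deriv_pos t ⟨hti.1.le, hlt.le⟩,
        hS.hasStrictDerivAt_of_mem_Ioo_left hg ⟨hti.1, hlt⟩⟩
    · exact ⟨_, (hS.right i).deriv_pos t ⟨hgt.le, hti.2.le⟩,
        hS.hasStrictDerivAt_of_mem_Ioo_right hg ⟨hgt, hti.2⟩⟩
  · exact ⟨_, hg_pos t, hS.hasStrictDerivAt_of_notMem hg (not_exists.1 hgap)⟩

lemma continuous_modification : Continuous (modification g x L R) := by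
  refine continuous_iff_continuousAt.2 fun t => ?_
  by_cases ht : ∃ i, t = x i
  · obtain ⟨i, rfl⟩ := ht
    exact continuousAt_iff_continuous_left_right.2
      ⟨(hS.hasDerivWithinAt_Iic_self hg i).continuousWithinAt,
        (hS.hasDerivWithinAt_Ici_self hg i).continuousWithinAt⟩
  · obtain ⟨d, -, hd⟩ := hS.exists_pos_hasStrictDerivAt hg hg_pos (not_exists.1 ht)
    exact hd.hasDerivAt.continuousAt

lemma strictMono_modification : StrictMono (modification g x L R) := by
  refine strictMono_of_hasDerivWithinAt_Ici_pos (hS.continuous_modification hg hg_pos) fun t => ?_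
  by_cases ht : ∃ i, t = x i
  · obtain ⟨i, rfl⟩ := ht
    exact ⟨_, (hS.right i).deriv_pos _ (left_mem_Icc.2 (hS.mem_gap i).2.le),
      hS.hasDerivWithinAt_Ici hg ⟨le_rfl, (hS.mem_gap i).2⟩⟩
  · obtain ⟨d, hd_pos, hd⟩ := hS.exists_pos_hasStrictDerivAt hg hg_pos (not_exists.1 ht)
    exact ⟨d, hd_pos, hd.hasDerivAt.hasDerivWithinAt⟩

lemma exists_hasStrictDerivAt_invFun (hsurj : Function.Surjective (modification g x L R)) {s : ℝ}
    (hs : ∀ i, s ≠ g (x i)) :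
    ∃ d, HasStrictDerivAt (Function.invFun (modification g x L R)) d s := by
  have hne : ∀ i, Function.invFun (modification g x L R) s ≠ x i := fun i hi =>
    hs i (by rw [← hS.modification_apply i, ← hi, Function.rightInverse_invFun hsurj s])
  obtain ⟨d, hd_pos, hd⟩ := hS.exists_pos_hasStrictDerivAt hg hg_pos hne
  exact ⟨d⁻¹, hasStrictDerivAt_invFun (hS.strictMono_modification hg hg_pos) hsurj hd hd_pos.ne'⟩

end IsGapSystem

end GapSystem

section Translates

lemma IsCorrection.comp_sub_const {g L : ℝ → ℝ} {outer inner : Set ℝ} {x β c : ℝ}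
    (hg : ∀ t, deriv g (t - c) = deriv g t) (hL : IsCorrection g outer inner x β L) :
    IsCorrection g ((· - c) ⁻¹' outer) ((· - c) ⁻¹' inner) (x + c) β (fun t => L (t - c)) where
  contDiff := hL.contDiff.comp (contDiff_id.sub contDiff_const)
  eq_zero t ht := hL.eq_zero _ ht
  deriv_eq_zero t ht := (deriv_comp_sub_const L c t).trans (hL.deriv_eq_zero _ ht)
  apply_eq_zero := by rw [add_sub_cancel_right, hL.apply_eq_zero]
  deriv_add_deriv := by
    rw [deriv_comp_sub_const, ← hg, add_sub_cancel_right, hL.deriv_add_deriv]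
  deriv_pos t ht := by
    rw [deriv_comp_sub_const, ← hg]
    exact hL.deriv_pos _ ht

lemma deriv_circleDeg1Lift_sub_int (f : CircleDeg1Lift) (n : ℤ) (t : ℝ) :
    deriv f (t - n) = deriv f t := by
  rw [← deriv_comp_sub_const]
  simp only [f.map_sub_int, deriv_sub_const]

lemma eventually_lipschitzOnWith_translates {κ F : Type*} [SeminormedAddCommGroup F]
    {B : κ → ℝ → F} {a b : κ → ℝ} {ε : ℝ≥0} (hB : ∀ k, ∀ t ∉ Ioo (a k) (b k), B k t = 0)
    (hlip : ∀ᶠ k in cofinite, LipschitzWith ε (B k)) (u v : ℝ) :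
    ∀ᶠ i : κ × ℤ in cofinite, LipschitzOnWith ε (fun t => B i.1 (t - i.2)) (Icc u v) := by
  rw [eventually_cofinite] at hlip ⊢
  refine (hlip.biUnion fun k _ =>
    (finite_Icc ⌈u - b k⌉ ⌊v - a k⌋).image (Prod.mk k)).subset ?_
  rintro ⟨k, n⟩ hkn
  have hk : ¬LipschitzWith ε (B k) := fun hk => hkn <| LipschitzOnWith.of_dist_le_mul
    fun s _ t _ => by simpa only [dist_sub_right] using hk.dist_le_mul (s - n) (t - n)
  obtain ⟨t, ht, hne⟩ : ∃ t ∈ Icc u v, B k (t - n) ≠ 0 := by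
    by_contra! hzero
    refine hkn (LipschitzOnWith.of_dist_le_mul fun s hs t ht => ?_)
    rw [hzero s hs, hzero t ht, dist_self]
    positivity
  have htn : t - n ∈ Ioo (a k) (b k) := by_contra fun htn => hne (hB k _ htn)
  exact mem_biUnion hk ⟨n, ⟨Int.ceil_le.2 (by linarith [htn.2, ht.1]),
    Int.le_floor.2 (by linarith [htn.1, ht.2])⟩, rfl⟩

theorem exists_isGapSystem_translates {f : CircleDeg1Lift} (hf : ContDiff ℝ 1 f)
    (hf_pos : ∀ t, 0 < deriv f t) {κ : Type*} {a x b βL βR : κ → ℝ} {l : ℝ}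
    (hx : ∀ k, x k ∈ Ioo (a k) (b k))
    (hdisj : Pairwise (Function.onFun Disjoint fun i : κ × ℤ => Ioo (a i.1 + i.2) (b i.1 + i.2)))
    (hsmall : ∀ ε > 0, ∀ᶠ k in cofinite, ∀ t ∈ Icc (a k) (b k), |deriv f t - l| ≤ ε)
    (hβL_pos : ∀ k, 0 < βL k) (hβR_pos : ∀ k, 0 < βR k)
    (hβL : Tendsto βL cofinite (𝓝 l)) (hβR : Tendsto βR cofinite (𝓝 l)) :
    ∃ L R : κ → ℝ → ℝ, IsGapSystem f (fun i : κ × ℤ => a i.1 + i.2) (fun i => x i.1 + i.2)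
      (fun i => b i.1 + i.2) (fun i => βL i.1) (fun i => βR i.1)
      (fun i t => L i.1 (t - i.2)) (fun i t => R i.1 (t - i.2)) := by
  choose L hL hL_lip using fun k => exists_isCorrection_left hf hf_pos (hx k).1 (hβL_pos k)
  choose R hR hR_lip using fun k => exists_isCorrection_right hf hf_pos (hx k).2 (hβR_pos k)
  have hlip : ∀ ε : ℝ≥0, 0 < ε → ∀ᶠ k in cofinite, LipschitzWith ε (glue (x k) (L k) (R k)) := by
    intro ε hε
    have hε' : (0 : ℝ) < ((ε / 12 : ℝ≥0) : ℝ) := NNReal.coe_pos.2 (by positivity)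
    filter_upwards [hsmall _ hε', Metric.tendsto_nhds.1 hβL _ hε', Metric.tendsto_nhds.1 hβR _ hε']
      with k hk hkL hkR
    convert lipschitzWith_glue
      (hL_lip k l (ε / 12) (fun t ht => hk t ⟨ht.1, ht.2.trans (hx k).2.le⟩) hkL.le)
      (hR_lip k l (ε / 12) (fun t ht => hk t ⟨(hx k).1.le.trans ht.1, ht.2⟩) hkR.le) using 1
    field_simp
    norm_num
  refine ⟨L, R, fun i => by simpa using hx i.1, hdisj, fun i => ?_, fun i => ?_,
    fun t ε hε => ⟨Icc (t - 1) (t + 1), Icc_mem_nhds (by linarith) (by linarith), ?_⟩⟩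
  · simpa only [preimage_sub_const_Iic, preimage_sub_const_Icc] using
      (hL i.1).comp_sub_const (deriv_circleDeg1Lift_sub_int f i.2)
  · simpa only [preimage_sub_const_Ici, preimage_sub_const_Icc] using
      (hR i.1).comp_sub_const (deriv_circleDeg1Lift_sub_int f i.2)
  · filter_upwards [eventually_lipschitzOnWith_translates
      (fun k t ht => glue_eq_zero (hL k) (hR k) (hx k) ht) (hlip ε hε) (t - 1) (t + 1)] with i hi
    simpa only [LipschitzOnWith, glue_sub_const] using hi

lemma modification_translates_add_one (f : CircleDeg1Lift) {κ : Type*} (x : κ → ℝ)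
    (L R : κ → ℝ → ℝ) (t : ℝ) :
    modification f (fun i : κ × ℤ => x i.1 + i.2) (fun i t => L i.1 (t - i.2))
        (fun i t => R i.1 (t - i.2)) (t + 1) =
      modification f (fun i : κ × ℤ => x i.1 + i.2) (fun i t => L i.1 (t - i.2))
        (fun i t => R i.1 (t - i.2)) t + 1 := by
  simp only [modification, glue_sub_const, f.map_add_one]
  rw [← finsum_comp_equiv ((Equiv.refl κ).prodCongr (Equiv.addRight (1 : ℤ)))]
  simp [add_sub_add_right_eq_sub, add_right_comm]

lemma surjective_of_monotone_of_add_one {h : ℝ → ℝ} (hmono : Monotone h) (hcont : Continuous h)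
    (hadd : ∀ t, h (t + 1) = h t + 1) : Function.Surjective h :=
  (CircleDeg1Lift.continuous_iff_surjective ⟨⟨h, hmono⟩, hadd⟩).1 hcont

end Translates

section Gaps

/-- The interval `(a, b)` is a bounded connected component of the complement of `K`. -/
structure IsGap {α : Type*} [Preorder α] (K : Set α) (a b : α) : Prop where
  left_mem : a ∈ K
  right_mem : b ∈ K
  disjoint : Disjoint (Ioo a b) K

namespace IsGap

lemma left_le {α : Type*} [LinearOrder α] {K : Set α} {a b a' b' t : α} (h : IsGap K a b)
    (h' : IsGap K a' b') (ht : t ∈ Ioo a b) (ht' : t ∈ Ioo a' b') : a' ≤ a :=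
  not_lt.1 fun hlt => disjoint_left.1 h.disjoint ⟨hlt, ht'.1.trans ht.2⟩ h'.left_mem

lemma left_eq {α : Type*} [LinearOrder α] {K : Set α} {a b a' b' t : α} (h : IsGap K a b)
    (h' : IsGap K a' b') (ht : t ∈ Ioo a b) (ht' : t ∈ Ioo a' b') : a = a' :=
  (h'.left_le h ht' ht).antisymm (h.left_le h' ht ht')

lemma image {α β : Type*} [LinearOrder α] [Preorder β] {f : α → β} (hf : StrictMono f)
    {K : Set α} {a b : α} (h : IsGap K a b) : IsGap (f '' K) (f a) (f b) := by
  refine ⟨mem_image_of_mem f h.left_mem, mem_image_of_mem f h.right_mem, ?_⟩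
  rw [disjoint_right]
  rintro _ ⟨y, hy, rfl⟩ ⟨hay, hyb⟩
  exact disjoint_right.1 h.disjoint hy ⟨hf.lt_iff_lt.1 hay, hf.lt_iff_lt.1 hyb⟩

lemma add_int {K : Set ℝ} (hK : Function.Periodic (· ∈ K) 1) {a b : ℝ} (h : IsGap K a b)
    (n : ℤ) : IsGap K (a + n) (b + n) := by
  have hKn : ∀ t : ℝ, t + n ∈ K ↔ t ∈ K := fun t => by
    simpa only [mul_one, eq_iff_iff] using hK.int_mul n t
  refine ⟨(hKn a).2 h.left_mem, (hKn b).2 h.right_mem, disjoint_left.2 fun t ht htK => ?_⟩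
  have hmem : t - n ∈ Ioo a b := ⟨lt_sub_iff_add_lt.2 ht.1, sub_lt_iff_lt_add.2 ht.2⟩
  exact disjoint_left.1 h.disjoint hmem ((hKn _).1 (by rwa [sub_add_cancel]))

end IsGap

lemma translationNumber_eq_of_tendsto_iterate {f : CircleDeg1Lift} {ρ t : ℝ}
    (hρ : Tendsto (fun n : ℕ => (f^[n] t - t) / n) atTop (𝓝 ρ)) : f.translationNumber = ρ := by
  refine tendsto_nhds_unique ?_ hρ
  simpa only [CircleDeg1Lift.coe_pow] using f.tendsto_translationNumber t

lemma iterate_ne_add_int {f : CircleDeg1Lift} (hf : Irrational f.translationNumber) {p : ℕ}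
    (hp : 0 < p) (q : ℤ) (t : ℝ) : f^[p] t ≠ t + q := by
  rw [← CircleDeg1Lift.coe_pow]
  exact fun heq => hf ⟨q / p, by simp [f.translationNumber_of_map_pow_eq_add_int heq hp]⟩

lemma eq_iterate_of_add_one {α : Type*} {f : α → α} {a : ℤ → α} (ha : ∀ k, a (k + 1) = f (a k))
    (k : ℤ) (p : ℕ) : a (k + p) = f^[p] (a k) := by
  induction p with
  | zero => simp
  | succ p ih => rw [Function.iterate_succ_apply', ← ih, ← ha, Nat.cast_succ, add_assoc]

lemma injective_orbit_add_int {f : CircleDeg1Lift} (hf : Irrational f.translationNumber)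
    {a : ℤ → ℝ} (ha : ∀ k, a (k + 1) = f (a k)) :
    Function.Injective fun i : ℤ × ℤ => a i.1 + i.2 := by
  rintro ⟨j, m⟩ ⟨k, n⟩ heq
  dsimp only at heq
  wlog hjk : j ≤ k generalizing j k m n
  · exact (this k n j m heq.symm (le_of_not_ge hjk)).symm
  obtain ⟨p, rfl⟩ := Int.le.dest hjk
  rcases p.eq_zero_or_pos with rfl | hp
  · simpa using heq
  · rw [eq_iterate_of_add_one ha] at heq
    refine absurd ?_ (iterate_ne_add_int hf hp (m - n) (a j))
    push_cast
    linarith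

lemma pairwise_disjoint_gap_translates {f : CircleDeg1Lift} (hf_mono : StrictMono f)
    (hf : Irrational f.translationNumber) {K : Set ℝ} (hK : Function.Periodic (· ∈ K) 1)
    (hfK : f '' K = K) {a x b : ℤ → ℝ} (hgap : ∀ k, IsGap K (a k) (b k))
    (hx : ∀ k, x k ∈ Ioo (a k) (b k)) (hfx : ∀ k, x (k + 1) = f (x k)) :
    Pairwise (Function.onFun Disjoint fun i : ℤ × ℤ => Ioo (a i.1 + i.2) (b i.1 + i.2)) := by
  have ha : ∀ k, a (k + 1) = f (a k) := fun k => by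
    have himage := (hgap k).image hf_mono
    rw [hfK] at himage
    exact (hgap (k + 1)).left_eq himage (hx (k + 1))
      (by rw [hfx]; exact ⟨hf_mono (hx k).1, hf_mono (hx k).2⟩)
  intro i j hij
  refine not_not.1 fun hmeet => hij (injective_orbit_add_int hf ha ?_)
  obtain ⟨t, hti, htj⟩ := not_disjoint_iff.1 hmeet
  exact ((hgap i.1).add_int hK i.2).left_eq ((hgap j.1).add_int hK j.2) hti htj

end Gaps

section Integers

lemma eventually_cofinite_int_of_le_abs {P : ℤ → Prop} {N : ℕ} (hP : ∀ k : ℤ, N ≤ |k| → P k) :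
    ∀ᶠ k in cofinite, P k :=
  eventually_cofinite.2 <| (finite_Ioo (-N : ℤ) N).subset fun k hk =>
    abs_lt.1 (not_le.1 fun hNk => hk (hP k hNk))

lemma eventually_forall_mem_Icc_abs_sub_le {w : ℝ → ℝ} {a b : ℤ → ℝ} {l : ℝ}
    (ha : ∀ k, w (a k) = l) (hb : ∀ k, w (b k) = l)
    (hsmall : ∀ ε : ℝ, 0 < ε → ∃ N : ℕ, ∀ k : ℤ, N ≤ |k| → ∀ t ∈ Ioo (a k) (b k), |w t - l| < ε)
    {ε : ℝ} (hε : 0 < ε) : ∀ᶠ k in cofinite, ∀ t ∈ Icc (a k) (b k), |w t - l| ≤ ε := by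
  obtain ⟨N, hN⟩ := hsmall ε hε
  filter_upwards [eventually_cofinite_int_of_le_abs hN] with k hk t ht
  rcases eq_endpoints_or_mem_Ioo_of_mem_Icc ht with rfl | rfl | ht
  · simpa [ha k] using hε.le
  · simpa [hb k] using hε.le
  · exact (hk t ht).le

end Integers

theorem modified_denjoy_exists_general
    (g : ℝ → ℝ)
    (hg_lift : ∀ t : ℝ, g (t + 1) = g t + 1)
    (hg_C1 : ContDiff ℝ 1 g) (hg_deriv_pos : ∀ t : ℝ, 0 < deriv g t)
    (ρ : ℝ) (hρ_irr : Irrational ρ)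
    (hρ : ∀ t : ℝ, Tendsto (fun n : ℕ => (g^[n] t - t) / n) atTop (𝓝 ρ))
    (K : Set ℝ)
    (hK_per : ∀ t ∈ K, t + 1 ∈ K ∧ t - 1 ∈ K)
    (hK_inv : g '' K = K)
    (hg'K : ∀ t ∈ K, deriv g t = 1)
    (x : ℤ → ℝ) (hx : ∀ k : ℤ, x (k + 1) = g (x k))
    (a b : ℤ → ℝ)
    (hxI : ∀ k : ℤ, x k ∈ Ioo (a k) (b k))
    (ha : ∀ k : ℤ, a k ∈ K) (hb : ∀ k : ℤ, b k ∈ K)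
    (hIK : ∀ k : ℤ, Ioo (a k) (b k) ∩ K = ∅)
    (hsmall : ∀ ε : ℝ, 0 < ε → ∃ N : ℕ, ∀ k : ℤ, (N : ℤ) ≤ |k| →
        ∀ t ∈ Ioo (a k) (b k), |deriv g t - 1| < ε)
    (βL βR : ℤ → ℝ) (hβL_pos : ∀ k, 0 < βL k) (hβR_pos : ∀ k, 0 < βR k)
    (hβL_lim : Tendsto βL atTop (𝓝 1) ∧ Tendsto βL atBot (𝓝 1))
    (hβR_lim : Tendsto βR atTop (𝓝 1) ∧ Tendsto βR atBot (𝓝 1)) :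
    ∃ h : ℝ → ℝ,
      StrictMono h ∧ Continuous h ∧ Function.Bijective h ∧
      (∀ t : ℝ, h (t + 1) = h t + 1) ∧
      (∀ t ∈ K, h t = g t) ∧ (∀ k : ℤ, h (x k) = g (x k)) ∧
      (∀ k : ℤ, ∃ d : ℝ → ℝ, ContinuousOn d (Ioc (a k) (x k)) ∧
          ∀ t ∈ Ioc (a k) (x k), HasDerivWithinAt h (d t) (Ioc (a k) (x k)) t) ∧
      (∀ k : ℤ, ∃ d : ℝ → ℝ, ContinuousOn d (Ico (x k) (b k)) ∧
          ∀ t ∈ Ico (x k) (b k), HasDerivWithinAt h (d t) (Ico (x k) (b k)) t) ∧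
      (∀ k : ℤ, HasDerivWithinAt h (βL k) (Iio (x k)) (x k)) ∧
      (∀ k : ℤ, HasDerivWithinAt h (βR k) (Ioi (x k)) (x k)) ∧
      (∀ t ∈ K, HasDerivAt h 1 t) ∧
      (∀ t : ℝ, (∀ k n : ℤ, t ≠ x k + n) → ∃ d : ℝ, HasStrictDerivAt h d t) ∧
      (∀ s : ℝ, (∀ k n : ℤ, s ≠ g (x k) + n) →
          ∃ d : ℝ, HasStrictDerivAt (Function.invFun h) d s) := by
  have hg_mono := strictMono_of_deriv_pos hg_deriv_pos
  obtain ⟨f, rfl⟩ : ∃ f : CircleDeg1Lift, ⇑f = g := ⟨⟨⟨g, hg_mono.monotone⟩, hg_lift⟩, rfl⟩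
  have hf_irr : Irrational f.translationNumber :=
    (translationNumber_eq_of_tendsto_iterate (hρ 0)).symm ▸ hρ_irr
  have hper : Function.Periodic (· ∈ K) 1 := fun t =>
    propext ⟨fun ht => by simpa using (hK_per _ ht).2, fun ht => (hK_per t ht).1⟩
  have hgap : ∀ k, IsGap K (a k) (b k) := fun k =>
    ⟨ha k, hb k, disjoint_iff_inter_eq_empty.2 (hIK k)⟩
  have hβL : Tendsto βL cofinite (𝓝 1) := Int.cofinite_eq ▸ hβL_lim.2.sup hβL_lim.1
  have hβR : Tendsto βR cofinite (𝓝 1) := Int.cofinite_eq ▸ hβR_lim.2.sup hβR_lim.1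
  obtain ⟨L, R, hS⟩ := exists_isGapSystem_translates hg_C1 hg_deriv_pos hxI
    (pairwise_disjoint_gap_translates hg_mono hf_irr hper hK_inv hgap hxI hx)
    (fun ε => eventually_forall_mem_Icc_abs_sub_le (fun k => hg'K _ (ha k))
      (fun k => hg'K _ (hb k)) hsmall) hβL_pos hβR_pos hβL hβR
  set h := modification f (fun i : ℤ × ℤ => x i.1 + i.2) (fun i t => L i.1 (t - i.2))
    (fun i t => R i.1 (t - i.2))
  have hmono : StrictMono h := hS.strictMono_modification hg_C1 hg_deriv_pos
  have hcont : Continuous h := hS.continuous_modification hg_C1 hg_deriv_pos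
  have hadd : ∀ t, h (t + 1) = h t + 1 := modification_translates_add_one f x L R
  have hsurj := surjective_of_monotone_of_add_one hmono.monotone hcont hadd
  have hK_off : ∀ t ∈ K, ∀ i : ℤ × ℤ, t ∉ Ioo (a i.1 + i.2) (b i.1 + i.2) := fun t ht i =>
    disjoint_right.1 ((hgap i.1).add_int hper i.2).disjoint ht
  refine ⟨h, hmono, hcont, ⟨hmono.injective, hsurj⟩, hadd,
    fun t ht => hS.modification_of_notMem (hK_off t ht),
    fun k => by simpa using hS.modification_apply (k, 0),
    fun k => by simpa using hS.exists_continuousOn_deriv_Ioc hg_C1 (k, 0),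
    fun k => by simpa using hS.exists_continuousOn_deriv_Ico hg_C1 (k, 0),
    fun k => ?_, fun k => ?_, fun t ht => ?_, fun t ht => ?_, fun s hs => ?_⟩
  · simpa using (hS.hasDerivWithinAt_Iic_self hg_C1 (k, 0)).mono Iio_subset_Iic_self
  · simpa using (hS.hasDerivWithinAt_Ici_self hg_C1 (k, 0)).mono Ioi_subset_Ici_self
  · exact hg'K t ht ▸ (hS.hasStrictDerivAt_of_notMem hg_C1 (hK_off t ht)).hasDerivAt
  · obtain ⟨d, -, hd⟩ := hS.exists_pos_hasStrictDerivAt hg_C1 hg_deriv_pos fun i => ht i.1 i.2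
    exact ⟨d, hd⟩
  · refine hS.exists_hasStrictDerivAt_invFun hg_C1 hg_deriv_pos hsurj fun i => ?_
    rw [f.map_add_int]
    exact hs i.1 i.2

/-- Proposition 1 of the paper, stated for lifts to `ℝ` of circle maps (the circle is
`ℝ/ℤ`, so circle maps are encoded by strictly increasing bijections of `ℝ` commuting with
`t ↦ t + 1`, and subsets of the circle by `ℤ`-translation-invariant subsets of `ℝ`).

Let `g` be an orientation-preserving `C¹` diffeomorphism of the circle with irrational
rotation number `ρ`, whose unique minimal set is a Cantor set `K`, with `g' = 1` on `K`,
and such that for every `ε > 0` all but finitely many connected components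
`I k = (a k, b k)` of the complement of `K` satisfy `sup_{I k} |g' − 1| < ε`.
Let `x 0 ∉ K`, `x (k+1) = g (x k)`, with `x k` in the component `(a k, b k)`, and let
`βL, βR : ℤ → ℝ` be positive with `βL k → 1` and `βR k → 1` as `|k| → ∞`.
Then there is an orientation-preserving circle homeomorphism `h` with: `h = g` on `K` and
on the orbit `(x k)`; `h` is `C¹` on each half-interval `(a k, x k]` and `[x k, b k)`;
`h` has left derivative `βL k` and right derivative `βR k` at `x k`; `h` is differentiable
on `K` with derivative `1`; and `h` and `h⁻¹` are `C¹` (strictly differentiable) at every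
point not on the (projected) orbit of `x 0`. -/
theorem modified_denjoy_exists
    (g : ℝ → ℝ) (hg_mono : StrictMono g) (hg_bij : Function.Bijective g)
    (hg_lift : ∀ t : ℝ, g (t + 1) = g t + 1)
    (hg_C1 : ContDiff ℝ 1 g) (hg_deriv_pos : ∀ t : ℝ, 0 < deriv g t)
    (ρ : ℝ) (hρ_irr : Irrational ρ)
    (hρ : ∀ t : ℝ, Tendsto (fun n : ℕ => (g^[n] t - t) / n) atTop (𝓝 ρ))
    (K : Set ℝ) (hK_closed : IsClosed K) (hK_ne : K.Nonempty)
    (hK_per : ∀ t ∈ K, t + 1 ∈ K ∧ t - 1 ∈ K)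
    (hK_inv : g '' K = K)
    (hK_int : interior K = ∅)
    (hK_perfect : ∀ t ∈ K, t ∈ closure (K \ {t}))
    (hK_min : ∀ S : Set ℝ, S.Nonempty → IsClosed S →
        (∀ t ∈ S, g t ∈ S ∧ t + 1 ∈ S ∧ t - 1 ∈ S) → K ⊆ S)
    (hg'K : ∀ t ∈ K, deriv g t = 1)
    (x : ℤ → ℝ) (hx0 : x 0 ∉ K) (hx : ∀ k : ℤ, x (k + 1) = g (x k))
    (a b : ℤ → ℝ)
    (hxI : ∀ k : ℤ, x k ∈ Set.Ioo (a k) (b k))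
    (ha : ∀ k : ℤ, a k ∈ K) (hb : ∀ k : ℤ, b k ∈ K)
    (hIK : ∀ k : ℤ, Set.Ioo (a k) (b k) ∩ K = ∅)
    (hsmall : ∀ ε : ℝ, 0 < ε → ∃ N : ℕ, ∀ k : ℤ, (N : ℤ) ≤ |k| →
        ∀ t ∈ Set.Ioo (a k) (b k), |deriv g t - 1| < ε)
    (βL βR : ℤ → ℝ) (hβL_pos : ∀ k, 0 < βL k) (hβR_pos : ∀ k, 0 < βR k)
    (hβL_lim : Tendsto βL atTop (𝓝 1) ∧ Tendsto βL atBot (𝓝 1))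
    (hβR_lim : Tendsto βR atTop (𝓝 1) ∧ Tendsto βR atBot (𝓝 1)) :
    ∃ h : ℝ → ℝ,
      StrictMono h ∧ Continuous h ∧ Function.Bijective h ∧
      (∀ t : ℝ, h (t + 1) = h t + 1) ∧
      (∀ t ∈ K, h t = g t) ∧ (∀ k : ℤ, h (x k) = g (x k)) ∧
      (∀ k : ℤ, ∃ d : ℝ → ℝ, ContinuousOn d (Set.Ioc (a k) (x k)) ∧
          ∀ t ∈ Set.Ioc (a k) (x k), HasDerivWithinAt h (d t) (Set.Ioc (a k) (x k)) t) ∧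
      (∀ k : ℤ, ∃ d : ℝ → ℝ, ContinuousOn d (Set.Ico (x k) (b k)) ∧
          ∀ t ∈ Set.Ico (x k) (b k), HasDerivWithinAt h (d t) (Set.Ico (x k) (b k)) t) ∧
      (∀ k : ℤ, HasDerivWithinAt h (βL k) (Set.Iio (x k)) (x k)) ∧
      (∀ k : ℤ, HasDerivWithinAt h (βR k) (Set.Ioi (x k)) (x k)) ∧
      (∀ t ∈ K, HasDerivAt h 1 t) ∧
      (∀ t : ℝ, (∀ k n : ℤ, t ≠ x k + n) → ∃ d : ℝ, HasStrictDerivAt h d t) ∧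
      (∀ s : ℝ, (∀ k n : ℤ, s ≠ g (x k) + n) →
          ∃ d : ℝ, HasStrictDerivAt (Function.invFun h) d s) :=
  modified_denjoy_exists_general g hg_lift hg_C1 hg_deriv_pos ρ hρ_irr hρ K hK_per hK_inv hg'K x hx
    a b hxI ha hb hIK hsmall βL βR hβL_pos hβR_pos hβL_lim hβR_lim
end

section
/- Let m < 2. Then m − 1/t < t for every t > 0; in particular Φ_m has no fixed point in (0, ∞). Moreover, there is no sequence (t_n)_{n∈ℕ} of positive real numbers satisfying t_{n+1} = m − 1/t_n for all n ∈ ℕ (every forward orbit of Φ_m eventually leaves (0, ∞)). -/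
/-! By AM-GM, `2 ≤ t + 1 / t` for `t > 0`, so each step of `t ↦ m - 1 / t` from a positive point
decreases it by at least the fixed amount `2 - m > 0`. A sequence decreasing at such a rate cannot
stay positive, by the Archimedean property. -/

section ConstantDecrement

variable {G : Type*} [AddCommGroup G] [PartialOrder G] [IsOrderedAddMonoid G] {u : ℕ → G} {δ : G}

theorem le_sub_nsmul_of_succ_le_sub (hu : ∀ n, u (n + 1) ≤ u n - δ) (n : ℕ) :
    u n ≤ u 0 - n • δ := by
  induction n with
  | zero => simp
  | succ n ih =>
    calc
      u (n + 1) ≤ u n - δ := hu n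
      _ ≤ u 0 - n • δ - δ := sub_le_sub_right ih δ
      _ = u 0 - (n + 1) • δ := by rw [succ_nsmul, sub_sub]

theorem exists_le_of_succ_le_sub [Archimedean G] (hδ : 0 < δ) (hu : ∀ n, u (n + 1) ≤ u n - δ)
    (a : G) : ∃ n, u n ≤ a := by
  obtain ⟨n, hn⟩ := Archimedean.arch (u 0 - a) hδ
  exact ⟨n, (le_sub_nsmul_of_succ_le_sub hu n).trans (sub_le_comm.mp hn)⟩

end ConstantDecrement

section OrderedField

variable {K : Type*} [Field K] [LinearOrder K] [IsStrictOrderedRing K] {t : K}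

theorem two_le_add_one_div (ht : 0 < t) : 2 ≤ t + 1 / t := by
  have geom_mean : (1 : K) ^ 2 = t * (1 / t) := by rw [one_pow, mul_one_div_cancel ht.ne']
  simpa only [mul_one] using
    two_mul_le_add_of_sq_le_mul ht.le (one_div_pos.mpr ht).le geom_mean.le

theorem sub_one_div_le_sub_two_sub (m : K) (ht : 0 < t) : m - 1 / t ≤ t - (2 - m) := by
  linarith [two_le_add_one_div ht]

theorem Phi_lt_two_no_positive_orbit_general [Archimedean K] (m : K) (hm : m < 2) :
    (∀ t : K, 0 < t → m - 1 / t < t) ∧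
    ¬ ∃ t : ℕ → K, (∀ n, 0 < t n) ∧ ∀ n, t (n + 1) ≤ m - 1 / t n := by
  have hδ : 0 < 2 - m := sub_pos.mpr hm
  refine ⟨fun t ht => (sub_one_div_le_sub_two_sub m ht).trans_lt (sub_lt_self t hδ), ?_⟩
  rintro ⟨t, hpos, hstep⟩
  have hdecr (n : ℕ) : t (n + 1) ≤ t n - (2 - m) :=
    (hstep n).trans (sub_one_div_le_sub_two_sub m (hpos n))
  obtain ⟨n, hn⟩ := exists_le_of_succ_le_sub hδ hdecr 0
  exact hn.not_gt (hpos n)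

end OrderedField

/-- For `m < 2`: `m − 1/t < t` for all `t > 0` (so `Φ_m` has no fixed point in `(0, ∞)`),
and there is no sequence of positive reals with `t (n+1) = m − 1/(t n)` for all `n`
(every forward orbit of `Φ_m` eventually leaves `(0, ∞)`). -/
theorem Phi_lt_two_no_positive_orbit (m : ℝ) (hm : m < 2) :
    (∀ t : ℝ, 0 < t → m - 1 / t < t) ∧
    ¬ ∃ t : ℕ → ℝ, (∀ n, 0 < t n) ∧ ∀ n, t (n + 1) = m - 1 / t n := by
  obtain ⟨hlt, hno⟩ := Phi_lt_two_no_positive_orbit_general m hm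
  exact ⟨hlt, fun ⟨t, hpos, hrec⟩ => hno ⟨t, hpos, fun n => (hrec n).le⟩⟩
end

section
/- Let f : ℝ → ℝ be a strictly increasing continuous bijection, let x ∈ ℝ and set y = f(x). Suppose f has left and right derivatives βᴸ > 0 and βᴿ > 0 at x, and left and right derivatives γᴸ > 0 and γᴿ > 0 at y. Then the function χ = f + f⁻¹ has right derivative γᴿ + 1/βᴿ and left derivative γᴸ + 1/βᴸ at the point y. In particular, if γᴿ + 1/βᴿ = γᴸ + 1/βᴸ, then χ is differentiable at y. -/
open Set

open Filter Function Topology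

/-! A strictly increasing map preserves sides, so near `f x` its inverse carries each side of `f x`
to the same side of `x`. The one-sided inverse function rule therefore pairs the right derivative
of `f⁻¹` at `f x` with the right derivative of `f` at `x`, and likewise on the left; equal
one-sided derivatives of the sum then glue to a two-sided one. -/

section LeftInverse

variable {α β : Type*} [LinearOrder α] {f : α → β} {g : β → α}

theorem strictMonoOn_range_of_leftInverse [Preorder β] (hf : StrictMono f)
    (hg : LeftInverse g f) : StrictMonoOn g (range f) := by
  rintro _ ⟨a, rfl⟩ _ ⟨b, rfl⟩ hab
  rw [hg a, hg b]
  exact hf.lt_iff_lt.1 hab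

variable [TopologicalSpace α] [OrderTopology α] [LinearOrder β] [TopologicalSpace β]
  [OrderTopology β] {a : α}

theorem tendsto_leftInverse_nhdsGE (hf : StrictMono f) (hg : LeftInverse g f)
    (ha : range f ∈ 𝓝[≥] f a) : Tendsto g (𝓝[≥] f a) (𝓝[≥] a) := by
  have hcont : ContinuousWithinAt g (Ici (f a)) (f a) :=
    (strictMonoOn_range_of_leftInverse hf hg).continuousWithinAt_right_of_surjOn ha
      fun b _ => ⟨f b, mem_range_self b, hg b⟩
  refine tendsto_nhdsWithin_iff.2 ⟨by simpa only [ContinuousWithinAt, hg a] using hcont, ?_⟩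
  filter_upwards [ha, self_mem_nhdsWithin]
  rintro _ ⟨b, rfl⟩ hab
  simpa only [hg b, mem_Ici] using hf.le_iff_le.1 hab

theorem tendsto_leftInverse_nhdsLE (hf : StrictMono f) (hg : LeftInverse g f)
    (ha : range f ∈ 𝓝[≤] f a) : Tendsto g (𝓝[≤] f a) (𝓝[≤] a) :=
  tendsto_leftInverse_nhdsGE (α := αᵒᵈ) (β := βᵒᵈ) hf.dual hg ha

end LeftInverse

section Deriv

variable {𝕜 : Type*} [NontriviallyNormedField 𝕜] {f g : 𝕜 → 𝕜} {f' a : 𝕜}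

theorem hasDerivWithinAt_of_local_left_inverse {s t : Set 𝕜}
    (hg : Tendsto g (𝓝[s] a) (𝓝[t] g a)) (hf : HasDerivWithinAt f f' t (g a)) (hf' : f' ≠ 0)
    (ha : a ∈ s) (hfg : ∀ᶠ y in 𝓝[s] a, f (g y) = y) : HasDerivWithinAt g f'⁻¹ s a :=
  HasFDerivWithinAt.of_local_left_inverse
    (f' := ContinuousLinearEquiv.unitsEquivAut 𝕜 (Units.mk0 f' hf')) hg hf ha hfg

variable [LinearOrder 𝕜]

theorem hasDerivAt_of_hasDerivWithinAt_Iio_Ioi {F : Type*} [NormedAddCommGroup F]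
    [NormedSpace 𝕜 F] {h : 𝕜 → F} {h' : F} (hleft : HasDerivWithinAt h h' (Iio a) a)
    (hright : HasDerivWithinAt h h' (Ioi a) a) : HasDerivAt h h' a := by
  simpa only [Iic_union_Ici, hasDerivWithinAt_univ] using
    hleft.Iic_of_Iio.union hright.Ici_of_Ioi

variable [OrderTopology 𝕜]

theorem hasDerivWithinAt_leftInverse_Ioi (hf : StrictMono f) (hg : LeftInverse g f)
    (ha : range f ∈ 𝓝[≥] f a) (hf' : f' ≠ 0) (hderiv : HasDerivWithinAt f f' (Ioi a) a) :
    HasDerivWithinAt g f'⁻¹ (Ioi (f a)) (f a) := by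
  refine (hasDerivWithinAt_of_local_left_inverse (t := Ici a) ?_ ?_ hf' self_mem_Ici
    (mem_of_superset ha hg.rightInvOn_range)).Ioi_of_Ici
  · simpa only [hg a] using tendsto_leftInverse_nhdsGE hf hg ha
  · simpa only [hg a] using hderiv.Ici_of_Ioi

theorem hasDerivWithinAt_leftInverse_Iio (hf : StrictMono f) (hg : LeftInverse g f)
    (ha : range f ∈ 𝓝[≤] f a) (hf' : f' ≠ 0) (hderiv : HasDerivWithinAt f f' (Iio a) a) :
    HasDerivWithinAt g f'⁻¹ (Iio (f a)) (f a) := by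
  refine (hasDerivWithinAt_of_local_left_inverse (t := Iic a) ?_ ?_ hf' self_mem_Iic
    (mem_of_superset ha hg.rightInvOn_range)).Iio_of_Iic
  · simpa only [hg a] using tendsto_leftInverse_nhdsLE hf hg ha
  · simpa only [hg a] using hderiv.Iic_of_Iio

theorem sum_with_inverse_one_sided_derivatives_general (hf : StrictMono f)
    (hg : LeftInverse g f) {x βL βR γL γR : 𝕜} (hx : range f ∈ 𝓝 (f x))
    (hβL : βL ≠ 0) (hβR : βR ≠ 0)
    (hfL : HasDerivWithinAt f βL (Iio x) x) (hfR : HasDerivWithinAt f βR (Ioi x) x)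
    (hfyL : HasDerivWithinAt f γL (Iio (f x)) (f x))
    (hfyR : HasDerivWithinAt f γR (Ioi (f x)) (f x)) :
    HasDerivWithinAt (fun t => f t + g t) (γR + 1 / βR) (Ioi (f x)) (f x) ∧
    HasDerivWithinAt (fun t => f t + g t) (γL + 1 / βL) (Iio (f x)) (f x) ∧
    (γR + 1 / βR = γL + 1 / βL →
      HasDerivAt (fun t => f t + g t) (γR + 1 / βR) (f x)) := by
  simp only [one_div]
  have hright : HasDerivWithinAt (fun t => f t + g t) (γR + βR⁻¹) (Ioi (f x)) (f x) :=
    hfyR.add (hasDerivWithinAt_leftInverse_Ioi hf hg (mem_nhdsWithin_of_mem_nhds hx) hβR hfR)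
  have hleft : HasDerivWithinAt (fun t => f t + g t) (γL + βL⁻¹) (Iio (f x)) (f x) :=
    hfyL.add (hasDerivWithinAt_leftInverse_Iio hf hg (mem_nhdsWithin_of_mem_nhds hx) hβL hfL)
  exact ⟨hright, hleft, fun hbalance =>
    hasDerivAt_of_hasDerivWithinAt_Iio_Ioi (hbalance ▸ hleft) hright⟩

end Deriv

/-- The balancing identity. For a strictly increasing continuous bijection `f : ℝ → ℝ`
with positive one-sided derivatives `βᴸ, βᴿ` at `x` and `γᴸ, γᴿ` at `y = f x`, the map
`χ = f + f⁻¹` has right derivative `γᴿ + 1/βᴿ` and left derivative `γᴸ + 1/βᴸ` at `y`;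
in particular if these two numbers coincide, `χ` is differentiable at `y`. -/
theorem sum_with_inverse_one_sided_derivatives (f : ℝ → ℝ)
    (hc : Continuous f) (hm : StrictMono f) (hb : Function.Bijective f)
    (x βL βR γL γR : ℝ)
    (hβL : 0 < βL) (hβR : 0 < βR) (hγL : 0 < γL) (hγR : 0 < γR)
    (hfL : HasDerivWithinAt f βL (Set.Iio x) x)
    (hfR : HasDerivWithinAt f βR (Set.Ioi x) x)
    (hgL : HasDerivWithinAt f γL (Set.Iio (f x)) (f x))
    (hgR : HasDerivWithinAt f γR (Set.Ioi (f x)) (f x)) :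
    HasDerivWithinAt (fun t => f t + Function.invFun f t) (γR + 1 / βR)
        (Set.Ioi (f x)) (f x) ∧
    HasDerivWithinAt (fun t => f t + Function.invFun f t) (γL + 1 / βL)
        (Set.Iio (f x)) (f x) ∧
    (γR + 1 / βR = γL + 1 / βL →
      HasDerivAt (fun t => f t + Function.invFun f t) (γR + 1 / βR) (f x)) :=
  sum_with_inverse_one_sided_derivatives_general hm (leftInverse_invFun hb.1)
    (hb.2.range_eq ▸ univ_mem) hβL.ne' hβR.ne' hfL hfR hgL hgR
end
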